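/- arXiv:2404.07190 — 2 statements merged into one kernel-verified Lean document; each statement's English description precedes it below -/
import Mathlib

section
/- There is an absolute constant C such that the following holds. Let t be a fixed positive integer, let n be sufficiently large, and let G be a bipartite n-vertex 18-almost-regular (ε,s)-expander with average degree d = d(G) ≥ (log n)^C, where s ≥ d/(log n)^2 and 2^{-90} < ε < 1. Let m_1,…,m_t be positive integers, each greater than n/d^{1/10} and smaller than n/(t·log n). Then there exists a subgraph G' ⊆ G and pairwise disjoint subsets S_1,…,S_t ⊆ V(G') such that, for each i ∈ [t]: (i) S_i is balanced with respect to the bipartition of G; (ii) |S_i| = 2m_i; (iii) S_i is D_i-connecting in G for D_i = p_i^9·d/(log n)^{76}, where p_i = m_i/n; (iv) there exists d_i with d·m_i/(Cn) ≤ d_i ≤ C·d·m_i/n such that d_i − d_i^{2/3} ≤ d_{G'}(v, S_i) ≤ d_i + d_i^{2/3} for every v ∈ V(G'); and (v) d_G(v, S_i) ≤ C·d·m_i/n for every v ∈ V(G). -/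
/-- The external neighbourhood of a vertex set `U` in a graph `G`. -/
def extNbhd {α : Type*} (G : SimpleGraph α) (U : Set α) : Set α :=
  {v | v ∉ U ∧ ∃ u ∈ U, G.Adj u v}

/-- `G`, regarded as an `n`-vertex graph, is an `(ε, s)`-expander. -/
def IsExpander {α : Type*} (n : ℕ) (G : SimpleGraph α) (ε s : ℝ) : Prop :=
  ∀ (U : Set α) (F : Set (Sym2 α)), F ⊆ G.edgeSet →
    1 ≤ U.ncard → (U.ncard : ℝ) ≤ 2 / 3 * n → (F.ncard : ℝ) ≤ s * U.ncard →
    ε * U.ncard / Real.logb 2 n ^ 2 ≤ ((extNbhd (G.deleteEdges F) U).ncard : ℝ)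

/-- `A`, `B` form a bipartition of `G`. -/
def IsBipartition {α : Type*} (G : SimpleGraph α) (A B : Set α) : Prop :=
  Disjoint A B ∧ A ∪ B = Set.univ ∧
  ∀ u v, G.Adj u v → (u ∈ A ∧ v ∈ B) ∨ (u ∈ B ∧ v ∈ A)

/-- A set `V` of vertices of the `n`-vertex graph `G` is `D`-connecting. -/
def IsConnecting {α : Type*} (n : ℕ) (G : SimpleGraph α) (V : Set α) (D : ℝ) : Prop :=
  ∀ (r : ℕ) (x y : Fin r → α),
    (∀ i, x i ∉ V) → (∀ i, y i ∉ V) →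
    (∀ v ∈ V, ((Nat.card {i : Fin r // G.Adj v (x i)} +
        Nat.card {i : Fin r // G.Adj v (y i)} : ℕ) : ℝ) ≤ D) →
    ∃ P : (i : Fin r) → G.Walk (x i) (y i),
      (∀ i, (P i).IsPath) ∧
      (∀ i, ((P i).length : ℝ) ≤ Real.logb 2 n ^ 6) ∧
      (∀ i, ∀ v ∈ (P i).support, v ≠ x i → v ≠ y i → v ∈ V) ∧
      (∀ i j, i ≠ j → ∀ v, v ∈ (P i).support → v ∈ (P j).support →
        (v = x i ∨ v = y i) ∧ (v = x j ∨ v = y j))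

/-!
Keep each edge `uv` of `G` with probability proportional to `1 / (deg u * deg v)` and put each
vertex `v` into the `i`-th set with probability proportional to `mᵢ * deg v`. The two biases cancel,
so every vertex of the sparser graph has about the same number of neighbours in the `i`-th set.

For the connecting property, the `i`-th set is split at random into about `2 log₂ n` layers. Almost
every cut of `G` is crossed by many edges, and a random layer inherits this: the number of cuts is
far too large for a direct union bound, but every cut can be replaced by a sparse random sample of
one of its sides, and there are few such samples. Hence every layer expands in two steps. In an
expanding layer a maximal family of disjoint short paths joins at least half of the given pairs,
since otherwise its few vertices could not separate the remaining ones. Using the layers one after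
the other, half of the remaining pairs are joined each time, so all of them are joined in the end.
-/

namespace ConnectingSets

open Finset
open scoped Classical

/-! ### Independent random colourings -/

section Colouring

variable {V κ : Type*} [Fintype V] [Fintype κ] {w : V → κ → ℝ} {δ δ' : ℝ}
  {E F : (V → κ) → Prop}

/-- The probability of the colouring `ω` when each vertex `v` independently receives the colour `k`
with probability `w v k`. -/
noncomputable def productWeight (w : V → κ → ℝ) (ω : V → κ) : ℝ := ∏ v, w v (ω v)

/-- The event `E` fails with probability at most `δ` for the random colouring in which each vertex
`v` independently receives the colour `k` with probability `w v k`. -/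
def HoldsWithError (w : V → κ → ℝ) (δ : ℝ) (E : (V → κ) → Prop) : Prop :=
  ∑ ω with ¬ E ω, productWeight w ω ≤ δ

lemma productWeight_nonneg (hw : ∀ v, w v ∈ stdSimplex ℝ κ) (ω : V → κ) :
    0 ≤ productWeight w ω :=
  prod_nonneg fun v _ ↦ (hw v).1 _

lemma sum_prod_apply (g : V → κ → ℝ) : ∑ ω : V → κ, ∏ v, g v (ω v) = ∏ v, ∑ k, g v k := by
  rw [prod_univ_sum, Fintype.piFinset_univ]

namespace HoldsWithError

lemma of_expectation (hw : ∀ v, w v ∈ stdSimplex ℝ κ) {g : (V → κ) → ℝ} (hg : ∀ ω, 0 ≤ g ω)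
    (h : ∀ ω, ¬ E ω → 1 ≤ g ω) : HoldsWithError w (∑ ω, productWeight w ω * g ω) E :=
  (sum_le_sum fun ω hω ↦ le_mul_of_one_le_right (productWeight_nonneg hw ω)
    (h ω (mem_filter.1 hω).2)).trans <|
  sum_le_univ_sum_of_nonneg fun ω ↦ mul_nonneg (productWeight_nonneg hw ω) (hg ω)

lemma mono_error (h : HoldsWithError w δ E) (hδ : δ ≤ δ') : HoldsWithError w δ' E :=
  le_trans h hδ

lemma mono (hw : ∀ v, w v ∈ stdSimplex ℝ κ) (h : HoldsWithError w δ E) (hEF : ∀ ω, E ω → F ω) :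
    HoldsWithError w δ F :=
  (sum_le_sum_of_subset_of_nonneg (monotone_filter_right univ fun ω _ hω ↦ mt (hEF ω) hω)
    fun ω _ _ ↦ productWeight_nonneg hw ω).trans h

lemma and (hw : ∀ v, w v ∈ stdSimplex ℝ κ) (hE : HoldsWithError w δ E)
    (hF : HoldsWithError w δ' F) : HoldsWithError w (δ + δ') fun ω ↦ E ω ∧ F ω := by
  simp only [HoldsWithError, not_and_or, filter_or] at *
  have hinter : 0 ≤ ∑ ω ∈ univ.filter (¬ E ·) ∩ univ.filter (¬ F ·), productWeight w ω :=
    sum_nonneg fun ω _ ↦ productWeight_nonneg hw ω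
  linarith [sum_union_inter (s₁ := univ.filter (¬ E ·)) (s₂ := univ.filter (¬ F ·))
    (f := productWeight w)]

lemma of_forall (hδ : 0 ≤ δ) (h : ∀ ω, E ω) : HoldsWithError w δ E := by
  simpa [HoldsWithError, h] using hδ

lemma forall_mem_sum (hw : ∀ v, w v ∈ stdSimplex ℝ κ) {J : Type*} (s : Finset J) {δ : J → ℝ}
    {E : J → (V → κ) → Prop} (h : ∀ j ∈ s, HoldsWithError w (δ j) (E j)) :
    HoldsWithError w (∑ j ∈ s, δ j) fun ω ↦ ∀ j ∈ s, E j ω := by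
  induction s using Finset.induction_on with
  | empty => exact of_forall (by simp) (by simp)
  | insert a s ha ih =>
    simp only [sum_insert ha, forall_mem_insert] at h ⊢
    exact h.1.and hw (ih h.2)

lemma forall_mem (hw : ∀ v, w v ∈ stdSimplex ℝ κ) {J : Type*} (s : Finset J)
    {E : J → (V → κ) → Prop} (h : ∀ j ∈ s, HoldsWithError w δ (E j)) :
    HoldsWithError w (#s * δ) fun ω ↦ ∀ j ∈ s, E j ω := by
  simpa using forall_mem_sum hw s h

lemma exists_colouring (hw : ∀ v, w v ∈ stdSimplex ℝ κ) (h : HoldsWithError w δ E) (hδ : δ < 1) :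
    ∃ ω, E ω := by
  by_contra! hE
  have htotal : ∑ ω, productWeight w ω = 1 := by
    simp [productWeight, sum_prod_apply, (hw _).2]
  simp only [HoldsWithError, hE, not_false_eq_true, filter_true, htotal] at h
  linarith

end HoldsWithError

lemma exp_mul_le_one_add {s x : ℝ} (hs : |s| ≤ 1) (hx : x ∈ Set.Icc 0 1) :
    Real.exp (s * x) ≤ 1 + (s + s ^ 2) * x := by
  obtain ⟨hx0, hx1⟩ := hx
  have hsx : |s * x| ≤ 1 := by
    rw [abs_mul, abs_of_nonneg hx0]
    exact mul_le_one₀ hs hx0 hx1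
  have hquad : (s * x) ^ 2 ≤ s ^ 2 * x := by
    rw [mul_pow]
    exact mul_le_mul_of_nonneg_left (pow_le_of_le_one hx0 hx1 two_ne_zero) (sq_nonneg s)
  linarith [(abs_le.1 (Real.abs_exp_sub_one_sub_id_le hsx)).2]

lemma expectation_exp_le (hw : ∀ v, w v ∈ stdSimplex ℝ κ) {f : V → κ → ℝ}
    (hf : ∀ v k, f v k ∈ Set.Icc 0 1) {s : ℝ} (hs : |s| ≤ 1) :
    ∑ ω : V → κ, productWeight w ω * Real.exp (s * ∑ v, f v (ω v)) ≤
      Real.exp ((s + s ^ 2) * ∑ v, ∑ k, w v k * f v k) := by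
  have hfactor (ω : V → κ) : productWeight w ω * Real.exp (s * ∑ v, f v (ω v)) =
      ∏ v, w v (ω v) * Real.exp (s * f v (ω v)) := by
    rw [prod_mul_distrib, ← Real.exp_sum, mul_sum, productWeight]
  rw [sum_congr rfl fun ω _ ↦ hfactor ω, sum_prod_apply fun v k ↦ w v k * Real.exp (s * f v k),
    mul_sum, Real.exp_sum]
  refine prod_le_prod (fun v _ ↦ sum_nonneg fun k _ ↦
    mul_nonneg ((hw v).1 k) (Real.exp_pos _).le) fun v _ ↦ ?_
  calc ∑ k, w v k * Real.exp (s * f v k)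
      ≤ ∑ k, w v k * (1 + (s + s ^ 2) * f v k) := sum_le_sum fun k _ ↦
        mul_le_mul_of_nonneg_left (exp_mul_le_one_add hs (hf v k)) ((hw v).1 k)
    _ = (s + s ^ 2) * ∑ k, w v k * f v k + 1 := by
        simp only [mul_add, mul_one, sum_add_distrib, (hw v).2, mul_left_comm (w v _), mul_sum]
        ring
    _ ≤ _ := Real.add_one_le_exp _

theorem chernoff (hw : ∀ v, w v ∈ stdSimplex ℝ κ) {f : V → κ → ℝ}
    (hf : ∀ v k, f v k ∈ Set.Icc 0 1) {lam : ℝ} (h0 : 0 ≤ lam) (h1 : lam ≤ 1) (a : ℝ) :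
    HoldsWithError w (2 * Real.exp (-lam * a + lam ^ 2 * ∑ v, ∑ k, w v k * f v k))
      fun ω ↦ |∑ v, f v (ω v) - ∑ v, ∑ k, w v k * f v k| ≤ a := by
  set μ := ∑ v, ∑ k, w v k * f v k
  have tail (s : ℝ) (hs : |s| = lam) : HoldsWithError w (Real.exp (-lam * a + lam ^ 2 * μ))
      fun ω ↦ s * (∑ v, f v (ω v) - μ) < lam * a := by
    refine (HoldsWithError.of_expectation hw
      (g := fun ω ↦ Real.exp (-lam * a - s * μ) * Real.exp (s * ∑ v, f v (ω v)))
      (fun ω ↦ by positivity) fun ω hω ↦ ?_).mono_error ?_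
    · rw [← Real.exp_add]
      exact Real.one_le_exp (by linarith)
    · calc ∑ ω, productWeight w ω *
            (Real.exp (-lam * a - s * μ) * Real.exp (s * ∑ v, f v (ω v)))
          = Real.exp (-lam * a - s * μ) *
            ∑ ω, productWeight w ω * Real.exp (s * ∑ v, f v (ω v)) := by
            simp only [mul_left_comm (productWeight w _), ← mul_sum]
        _ ≤ Real.exp (-lam * a - s * μ) * Real.exp ((s + s ^ 2) * μ) := by
            gcongr
            exact expectation_exp_le hw hf (hs.trans_le h1)
        _ = Real.exp (-lam * a + lam ^ 2 * μ) := by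
            rw [← Real.exp_add, ← hs, sq_abs]
            ring_nf
  refine (((tail lam (abs_of_nonneg h0)).and hw
    (tail (-lam) (by rw [abs_neg, abs_of_nonneg h0]))).mono hw fun ω ⟨hup, hlow⟩ ↦ ?_).mono_error
    (two_mul _).ge
  rw [neg_mul, ← mul_neg] at hlow
  exact abs_le'.2 ⟨(lt_of_mul_lt_mul_left hup h0).le, (lt_of_mul_lt_mul_left hlow h0).le⟩

theorem chernoff_weighted (hw : ∀ v, w v ∈ stdSimplex ℝ κ) (X : Finset V) (T : κ → Prop)
    [DecidablePred T]
    {φ : V → ℝ} (hφ : ∀ x ∈ X, φ x ∈ Set.Icc 0 1) {lam : ℝ} (h0 : 0 ≤ lam) (h1 : lam ≤ 1) {a μ : ℝ}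
    (hμ : ∑ x ∈ X, (∑ k with T k, w x k) * φ x = μ) :
    HoldsWithError w (2 * Real.exp (-lam * a + lam ^ 2 * μ))
      fun ω ↦ |∑ x ∈ X with T (ω x), φ x - μ| ≤ a := by
  let f : V → κ → ℝ := fun v k ↦ if v ∈ X ∧ T k then φ v else 0
  have hf (v : V) (k : κ) : f v k ∈ Set.Icc 0 1 := by
    by_cases h : v ∈ X ∧ T k
    · simpa only [f, if_pos h] using hφ v h.1
    · simp [f, h]
  have hmean : ∑ v, ∑ k, w v k * f v k = μ := by
    simp only [← hμ, f, sum_mul, sum_filter, ite_and, mul_ite, ite_mul, mul_zero, zero_mul]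
    simp [← sum_filter]
  have hsum (ω : V → κ) : ∑ v, f v (ω v) = ∑ x ∈ X with T (ω x), φ x := by
    simp [f, ite_and, ← sum_filter]
  simpa only [hmean, hsum] using chernoff hw hf h0 h1 a

theorem chernoff_card (hw : ∀ v, w v ∈ stdSimplex ℝ κ) (X : Finset V) (T : κ → Prop)
    [DecidablePred T]
    {lam : ℝ} (h0 : 0 ≤ lam) (h1 : lam ≤ 1) {a μ : ℝ} (hμ : ∑ x ∈ X, ∑ k with T k, w x k = μ) :
    HoldsWithError w (2 * Real.exp (-lam * a + lam ^ 2 * μ))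
      fun ω ↦ |(#{x ∈ X | T (ω x)} : ℝ) - μ| ≤ a := by
  simpa using chernoff_weighted hw X T (φ := fun _ ↦ 1) (fun _ _ ↦ by simp) h0 h1 (a := a)
    (by simpa using hμ)

theorem chernoff_card_relative (hw : ∀ v, w v ∈ stdSimplex ℝ κ) (X : Finset V) (T : κ → Prop)
    [DecidablePred T]
    {θ : ℝ} (h0 : 0 ≤ θ) (h1 : θ ≤ 1) {μ : ℝ} (hμ : ∑ x ∈ X, ∑ k with T k, w x k = μ) :
    HoldsWithError w (2 * Real.exp (-(θ ^ 2 * μ / 4)))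
      fun ω ↦ |(#{x ∈ X | T (ω x)} : ℝ) - μ| ≤ θ * μ := by
  convert chernoff_card hw X T (lam := θ / 2) (a := θ * μ) (by linarith) (by linarith) hμ using 3
  ring

end Colouring

/-! ### Sampling the colour class of a bipartite cut -/

section Sampling

variable {V κ : Type*} {G : SimpleGraph V} {S X Y U : Finset V} {q β Δ L ρ τ : ℝ}

/-- The number of neighbours of `x` in `U`, as a real number. -/
noncomputable def degInto (G : SimpleGraph V) (x : V) (U : Finset V) : ℝ := #{u ∈ U | G.Adj x u}

/-- The size of the smaller part into which the cut `(U, Y \ U)` splits the neighbours of `x` in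
`Y`. Its sum over `x` measures how well the cut is connected through paths of length two. -/
noncomputable def splitDeg (G : SimpleGraph V) (Y U : Finset V) (x : V) : ℝ :=
  min (degInto G x U) (degInto G x (Y \ U))

lemma degInto_nonneg (x : V) : 0 ≤ degInto G x U := Nat.cast_nonneg _

lemma degInto_mono (x : V) (h : U ⊆ Y) : degInto G x U ≤ degInto G x Y :=
  Nat.cast_le.2 (card_le_card (filter_subset_filter _ h))

lemma degInto_le_card (x : V) : degInto G x U ≤ #U := Nat.cast_le.2 (card_filter_le _ _)

lemma degInto_empty (x : V) : degInto G x ∅ = 0 := by simp [degInto]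

lemma degInto_sdiff (x : V) (h : U ⊆ Y) : degInto G x (Y \ U) = degInto G x Y - degInto G x U := by
  simp only [degInto, card_filter, Nat.cast_sum]
  rw [← sum_sdiff h, add_sub_cancel_right]

lemma sum_degInto_comm : ∑ x ∈ X, degInto G x Y = ∑ y ∈ Y, degInto G y X := by
  simp only [degInto, card_filter, Nat.cast_sum]
  rw [sum_comm]
  simp only [G.adj_comm]

lemma splitDeg_nonneg (x : V) : 0 ≤ splitDeg G Y U x :=
  le_min (degInto_nonneg x) (degInto_nonneg x)

/-- The approximation of `splitDeg G Y U x` obtained from a random subset `U'` of `U` of density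
`ρ`. -/
noncomputable def sampledSplitDeg (G : SimpleGraph V) (Y : Finset V) (ρ : ℝ) (U' : Finset V)
    (x : V) : ℝ :=
  min (degInto G x U' / ρ) (degInto G x Y - degInto G x U' / ρ)

lemma abs_sampledSplitDeg_sub_splitDeg_le {U' : Finset V} {x : V} (hUY : U ⊆ Y) (hρ : 0 < ρ)
    (h : |degInto G x U' - ρ * degInto G x U| ≤ ρ * τ / 4) :
    |sampledSplitDeg G Y ρ U' x - splitDeg G Y U x| ≤ τ / 4 := by
  have hscaled : |degInto G x U' / ρ - degInto G x U| ≤ τ / 4 := by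
    have heq : degInto G x U' / ρ - degInto G x U = (degInto G x U' - ρ * degInto G x U) / ρ := by
      field_simp
    rw [heq, abs_div, abs_of_pos hρ, div_le_iff₀ hρ]
    linarith
  rw [sampledSplitDeg, splitDeg, degInto_sdiff x hUY]
  refine (abs_min_sub_min_le_max _ _ _ _).trans (max_le hscaled ?_)
  rwa [sub_sub_sub_cancel_left, abs_sub_comm]

/-- `sampledSplitDeg`, cut off where it is too small to be accurate. -/
noncomputable def heavySampledSplitDeg (G : SimpleGraph V) (Y : Finset V) (ρ τ : ℝ)
    (U' : Finset V) (x : V) : ℝ :=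
  if 3 / 4 * τ ≤ sampledSplitDeg G Y ρ U' x then sampledSplitDeg G Y ρ U' x else 0

lemma heavySampledSplitDeg_mem_Icc {U' : Finset V} {x : V} (hτ : 0 < τ)
    (hx : degInto G x Y ≤ Δ) : heavySampledSplitDeg G Y ρ τ U' x ∈ Set.Icc 0 Δ := by
  have hmin : 2 * sampledSplitDeg G Y ρ U' x ≤ degInto G x Y := by
    rw [sampledSplitDeg]
    linarith [min_le_left (degInto G x U' / ρ) (degInto G x Y - degInto G x U' / ρ),
      min_le_right (degInto G x U' / ρ) (degInto G x Y - degInto G x U' / ρ)]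
  have := degInto_nonneg (G := G) (U := Y) x
  rw [heavySampledSplitDeg]
  split_ifs with h
  · exact ⟨by linarith, by linarith⟩
  · exact ⟨le_rfl, by linarith⟩

lemma heavySampledSplitDeg_empty (hτ : 0 < τ) (x : V) :
    heavySampledSplitDeg G Y ρ τ ∅ x = 0 := by
  refine if_neg (not_le.2 (lt_of_le_of_lt (min_le_left _ _) ?_))
  simpa [degInto_empty] using hτ

lemma exp_neg_le (hL : 1 ≤ L) : Real.exp (-L) ≤ 0.37 := by
  linarith [Real.exp_le_exp.2 (neg_le_neg hL), Real.exp_neg_one_lt_d9]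

lemma two_mul_exp_neg_add_lt_one {x : ℝ} (hL : 1 ≤ L) (hx : x ≤ Real.exp L) :
    2 * Real.exp (-(3 * L)) + x * (2 * Real.exp (-(3 * L))) < 1 := by
  have hexp : Real.exp L * Real.exp (-(3 * L)) = Real.exp (-(2 * L)) := by
    rw [← Real.exp_add]; ring_nf
  have h2 : Real.exp (-(2 * L)) = Real.exp (-L) ^ 2 := by
    rw [← Real.exp_nat_mul]; ring_nf
  have h32 : Real.exp (-(3 * L)) ≤ Real.exp (-(2 * L)) := Real.exp_le_exp.2 (by linarith)
  nlinarith [exp_neg_le hL, Real.exp_pos (-L), Real.exp_pos (-(3 * L))]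

lemma le_card_of_sum_splitDeg_pos
    (h : 0 < ∑ x ∈ X with τ ≤ splitDeg G Y U x, splitDeg G Y U x) : τ ≤ #U := by
  obtain ⟨x, hx, -⟩ := exists_ne_zero_of_sum_ne_zero h.ne'
  exact ((mem_filter.1 hx).2.trans (min_le_left _ _)).trans (degInto_le_card x)

variable [Fintype V]

theorem exists_sample (hX : ∀ x ∈ X, degInto G x U ≤ Δ) (hρ0 : 0 < ρ) (hρ1 : ρ ≤ 1)
    (hτ : 0 < τ) (hτΔ : τ ≤ Δ) (hτU : τ ≤ #U) (hL : 1 ≤ L)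
    (hV : (Fintype.card V : ℝ) ≤ Real.exp L) (hc : 192 * L * Δ ≤ ρ * τ ^ 2) :
    ∃ U' ⊆ U, (#U' : ℝ) ≤ 2 * ρ * #U ∧
      ∀ x ∈ X, |degInto G x U' - ρ * degInto G x U| ≤ ρ * τ / 4 := by
  have hΔ : 0 < Δ := hτ.trans_le hτΔ
  let w : V → Bool → ℝ := fun _ b ↦ if b then ρ else 1 - ρ
  have hw (v : V) : w v ∈ stdSimplex ℝ Bool :=
    ⟨fun b ↦ by cases b <;> simp [w, hρ0.le, hρ1], by simp [w]⟩
  have hmean (F : Finset V) : ∑ v ∈ F, ∑ b with b = true, w v b = ρ * #F := by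
    simp [w, sum_filter, mul_comm]
  have hsize : HoldsWithError w (2 * Real.exp (-(3 * L)))
      fun ω ↦ |(#{v ∈ U | ω v = true} : ℝ) - ρ * #U| ≤ 1 * (ρ * #U) := by
    refine (chernoff_card_relative hw U (· = true) zero_le_one le_rfl (hmean U)).mono_error ?_
    have hmul : 192 * L * τ ≤ ρ * #U * τ := by
      calc 192 * L * τ ≤ 192 * L * Δ := by gcongr
        _ ≤ ρ * τ ^ 2 := hc
        _ = ρ * τ * τ := by ring
        _ ≤ ρ * #U * τ := by gcongr
    have := le_of_mul_le_mul_right hmul hτ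
    gcongr
    linarith
  have hdeg (x) (hx : x ∈ X) : HoldsWithError w (2 * Real.exp (-(3 * L)))
      fun ω ↦ |(#{v ∈ {u ∈ U | G.Adj x u} | ω v = true} : ℝ) - ρ * degInto G x U| ≤
        ρ * τ / 4 := by
    refine (chernoff_card hw _ (· = true) (lam := τ / (8 * Δ)) (by positivity)
      (by rw [div_le_one (by positivity)]; linarith) (hmean _)).mono_error ?_
    gcongr
    calc -(τ / (8 * Δ)) * (ρ * τ / 4) + (τ / (8 * Δ)) ^ 2 * (ρ * degInto G x U)
        ≤ -(τ / (8 * Δ)) * (ρ * τ / 4) + (τ / (8 * Δ)) ^ 2 * (ρ * Δ) := by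
          gcongr
          exact hX x hx
      _ = -(ρ * τ ^ 2 / (64 * Δ)) := by field_simp; ring
      _ ≤ -(3 * L) := by
          rw [neg_le_neg_iff, le_div_iff₀ (by positivity)]
          linarith
  have herror := two_mul_exp_neg_add_lt_one hL ((Nat.cast_le.2 (card_le_univ X)).trans hV)
  obtain ⟨ω, hωU, hωX⟩ := (hsize.and hw (.forall_mem hw X hdeg)).exists_colouring hw herror
  refine ⟨{v ∈ U | ω v = true}, filter_subset _ _, by linarith [(abs_le.1 hωU).2], fun x hx ↦ ?_⟩
  simpa only [degInto, filter_comm] using hωX x hx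

variable [Fintype κ] {w : V → κ → ℝ} {k₀ : κ}

lemma sum_exp_card_le (hL : 1 ≤ L) (hV : (Fintype.card V : ℝ) ≤ Real.exp L) :
    ∑ U : Finset V with U.Nonempty, 2 * Real.exp (-(5 * L * #U)) ≤ 4 * Real.exp (-(4 * L)) := by
  set x := Real.exp (-(5 * L)) with hx
  have hpow (U : Finset V) : Real.exp (-(5 * L * #U)) = x ^ #U := by
    rw [hx, ← Real.exp_nat_mul]; ring_nf
  have hbinom : ∑ U : Finset V, x ^ #U = (x + 1) ^ Fintype.card V := by
    simpa using sum_pow_mul_eq_add_pow x 1 (univ : Finset V)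
  have hempty : ∑ U : Finset V with U.Nonempty, x ^ #U + 1 = ∑ U : Finset V, x ^ #U := by
    rw [← sum_filter_add_sum_filter_not univ (fun U : Finset V ↦ U.Nonempty)]
    simp [filter_eq']
  have hexp : (x + 1) ^ Fintype.card V ≤ Real.exp (Real.exp (-(4 * L))) := by
    calc (x + 1) ^ Fintype.card V ≤ Real.exp x ^ Fintype.card V := by
          gcongr
          exact Real.add_one_le_exp x
      _ = Real.exp (Fintype.card V * x) := (Real.exp_nat_mul _ _).symm
      _ ≤ Real.exp (Real.exp L * x) := by gcongr
      _ = Real.exp (Real.exp (-(4 * L))) := by rw [hx, ← Real.exp_add]; ring_nf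
  have hsmall : Real.exp (Real.exp (-(4 * L))) ≤ 1 + 2 * Real.exp (-(4 * L)) := by
    have hy0 := Real.exp_pos (-(4 * L))
    have hy1 : Real.exp (-(4 * L)) ≤ 0.37 := exp_neg_le (by linarith)
    have hquad := Real.abs_exp_sub_one_sub_id_le (x := Real.exp (-(4 * L)))
      (by rw [abs_of_pos hy0]; linarith)
    nlinarith [(abs_le.1 hquad).2]
  rw [← mul_sum]
  simp only [hpow]
  linarith

theorem forall_nonempty_sum_filter_ge (hw : ∀ v, w v ∈ stdSimplex ℝ κ)
    (hqw : ∀ x ∈ X, q ≤ w x k₀) (hL : 1 ≤ L) (hV : (Fintype.card V : ℝ) ≤ Real.exp L) {M : ℝ}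
    (hM : 0 < M) {f : Finset V → V → ℝ} (hf : ∀ U, ∀ x ∈ X, f U x ∈ Set.Icc 0 M) :
    HoldsWithError w (4 * Real.exp (-(4 * L))) fun ω ↦ ∀ U ∈ ({U | U.Nonempty} : Finset (Finset V)),
      80 * L * M * #U ≤ q * ∑ x ∈ X, f U x →
        q / 2 * ∑ x ∈ X, f U x ≤ ∑ x ∈ X with ω x = k₀, f U x := by
  refine (HoldsWithError.forall_mem_sum hw _ fun U _ ↦ ?_).mono_error (sum_exp_card_le hL hV)
  by_cases hU : 80 * L * M * #U ≤ q * ∑ x ∈ X, f U x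
  swap
  · exact .of_forall (by positivity) fun ω h ↦ absurd h hU
  set μ := ∑ x ∈ X, w x k₀ * (f U x / M) with hμ
  have hμq : q * ∑ x ∈ X, f U x ≤ μ * M := by
    rw [hμ, mul_sum, sum_mul]
    refine sum_le_sum fun x hx ↦ ?_
    rw [mul_assoc, div_mul_cancel₀ _ hM.ne']
    exact mul_le_mul_of_nonneg_right (hqw x hx) (hf U x hx).1
  have hμL : 80 * L * #U ≤ μ := le_of_mul_le_mul_right (by linarith) hM
  refine ((chernoff_weighted hw X (· = k₀) (φ := fun x ↦ f U x / M) (lam := 1 / 4) (a := μ / 2)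
    (μ := μ) (fun x hx ↦ ⟨div_nonneg (hf U x hx).1 hM.le, (div_le_one hM).2 (hf U x hx).2⟩)
    (by norm_num) (by norm_num) (by simp [hμ, sum_filter])).mono hw fun ω hω _ ↦ ?_).mono_error ?_
  · rw [← sum_div] at hω
    have hlow : μ / 2 * M ≤ ∑ x ∈ X with ω x = k₀, f U x := by
      rw [← le_div_iff₀ hM]
      linarith [(abs_le.1 hω).1]
    linarith
  · gcongr
    linarith

lemma sum_splitDeg_ge_of_heavy (hSX : S ⊆ X) (hUY : U ⊆ Y) (hU : U.Nonempty) (hq : 0 < q)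
    (hβ : 0 < β) (hΔ : ∀ x ∈ X, degInto G x Y ≤ Δ) (hρ0 : 0 < ρ) (hρ1 : ρ ≤ 1) (hτ : 0 < τ)
    (hτΔ : τ ≤ Δ) (hL : 1 ≤ L) (hV : (Fintype.card V : ℝ) ≤ Real.exp L)
    (hρβ : 500 * L * Δ * ρ ≤ q * β) (hρτ : 192 * L * Δ ≤ ρ * τ ^ 2)
    (hsample : ∀ U' : Finset V, U'.Nonempty →
      80 * L * Δ * #U' ≤ q * ∑ x ∈ X, heavySampledSplitDeg G Y ρ τ U' x →
      q / 2 * ∑ x ∈ X, heavySampledSplitDeg G Y ρ τ U' x ≤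
        ∑ x ∈ S, heavySampledSplitDeg G Y ρ τ U' x)
    (hheavy : β * #U / 2 ≤ ∑ x ∈ X with τ ≤ splitDeg G Y U x, splitDeg G Y U x) :
    q / 8 * (β * #U) ≤ ∑ x ∈ S, splitDeg G Y U x := by
  have hU0 : (0 : ℝ) < #U := Nat.cast_pos.2 hU.card_pos
  have hτU : τ ≤ #U := le_card_of_sum_splitDeg_pos (hheavy.trans_lt' (by positivity))
  obtain ⟨U', -, hU'card, hU'deg⟩ := exists_sample
    (fun x hx ↦ (degInto_mono x hUY).trans (hΔ x hx)) hρ0 hρ1 hτ hτΔ hτU hL hV hρτ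
  have hclose (x) (hx : x ∈ X) :=
    abs_le.1 (abs_sampledSplitDeg_sub_splitDeg_le hUY hρ0 (hU'deg x hx))
  have hlower : 3 / 4 * ∑ x ∈ X with τ ≤ splitDeg G Y U x, splitDeg G Y U x ≤
      ∑ x ∈ X, heavySampledSplitDeg G Y ρ τ U' x := by
    rw [sum_filter, mul_sum]
    refine sum_le_sum fun x hx ↦ ?_
    have := hclose x hx
    rw [heavySampledSplitDeg]
    split_ifs <;> linarith
  have hupper (x) (hx : x ∈ S) : 2 / 3 * heavySampledSplitDeg G Y ρ τ U' x ≤ splitDeg G Y U x := by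
    have := hclose x (hSX hx)
    have := splitDeg_nonneg (G := G) (Y := Y) (U := U) x
    rw [heavySampledSplitDeg]
    split_ifs <;> linarith
  have hU' : U'.Nonempty := by
    rw [nonempty_iff_ne_empty]
    rintro rfl
    simp only [heavySampledSplitDeg_empty hτ, sum_const_zero] at hlower
    nlinarith
  have hdense : 80 * L * Δ * #U' ≤ q * ∑ x ∈ X, heavySampledSplitDeg G Y ρ τ U' x := by
    have hΔ0 : 0 < Δ := hτ.trans_le hτΔ
    calc 80 * L * Δ * #U' ≤ 80 * L * Δ * (2 * ρ * #U) := by gcongr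
      _ = 160 / 500 * (500 * L * Δ * ρ) * #U := by ring
      _ ≤ 160 / 500 * (q * β) * #U := by gcongr
      _ ≤ q * (3 / 8 * (β * #U)) := by nlinarith [mul_pos (mul_pos hq hβ) hU0]
      _ ≤ _ := by gcongr; linarith
  have hS := hsample U' hU' hdense
  have hsum := sum_le_sum hupper
  rw [← mul_sum] at hsum
  nlinarith

/-- The union bound has to be over `#U` many random choices, while a vertex with
`splitDeg G Y U x` of order `Δ` contributes deviations of that order. So vertices of small
`splitDeg` are treated directly, and for the others `U` is replaced by a sparse sample `U'`, which
leaves fewer sets in the union bound. -/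
theorem splitDeg_sum_colourClass (hw : ∀ v, w v ∈ stdSimplex ℝ κ) (hq : 0 < q) (hβ : 0 < β)
    (hqw : ∀ x ∈ X, q ≤ w x k₀) (hL : 1 ≤ L) (hV : (Fintype.card V : ℝ) ≤ Real.exp L)
    (hΔ : ∀ x ∈ X, degInto G x Y ≤ Δ) (hqβ : q * β ≤ Δ)
    (hc : 10 ^ 10 * L ^ 4 * Δ ^ 2 ≤ q ^ 3 * β ^ 3) :
    HoldsWithError w (8 * Real.exp (-(4 * L))) fun ω ↦
      ∀ U ⊆ Y, β * #U ≤ ∑ x ∈ X, splitDeg G Y U x →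
        q / 8 * (β * #U) ≤ ∑ x ∈ X with ω x = k₀, splitDeg G Y U x := by
  have hqβ0 : 0 < q * β := mul_pos hq hβ
  have hΔ0 : 0 < Δ := hqβ0.trans_le hqβ
  have hL0 : 0 < L := by linarith
  set τ := q * β / (160 * L) with hτ
  set ρ := q * β / (500 * L * Δ) with hρ
  have hτ0 : 0 < τ := by positivity
  have hρ0 : 0 < ρ := by positivity
  have hτΔ : τ ≤ Δ := by rw [hτ, div_le_iff₀ (by positivity)]; nlinarith
  have hρ1 : ρ ≤ 1 := by rw [hρ, div_le_one (by positivity)]; nlinarith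
  have hρβ : 500 * L * Δ * ρ = q * β := mul_div_cancel₀ _ (by positivity)
  have hτβ : 160 * L * τ = q * β := mul_div_cancel₀ _ (by positivity)
  have hρτ : 192 * L * Δ ≤ ρ * τ ^ 2 := by
    have heq : ρ * τ ^ 2 = q ^ 3 * β ^ 3 / (500 * 160 ^ 2 * L ^ 3 * Δ) := by
      rw [hρ, hτ]; field_simp
    rw [heq, le_div_iff₀ (by positivity)]
    nlinarith [mul_pos (pow_pos hL0 4) (pow_pos hΔ0 2)]
  have hlight := forall_nonempty_sum_filter_ge hw hqw hL hV hτ0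
    (f := fun U x ↦ if τ ≤ splitDeg G Y U x then 0 else splitDeg G Y U x) fun U x _ ↦ by
      split_ifs with h
      exacts [⟨le_rfl, hτ0.le⟩, ⟨splitDeg_nonneg x, (not_le.1 h).le⟩]
  have hheavy := forall_nonempty_sum_filter_ge hw hqw hL hV hΔ0
    (f := heavySampledSplitDeg G Y ρ τ) fun U x hx ↦ heavySampledSplitDeg_mem_Icc hτ0 (hΔ x hx)
  refine ((hlight.and hw hheavy).mono hw fun ω ⟨hωlight, hωheavy⟩ U hUY hU ↦ ?_).mono_error
    (by linarith)
  rcases U.eq_empty_or_nonempty with rfl | hne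
  · simpa using sum_nonneg fun x _ ↦ splitDeg_nonneg x
  by_cases hlow : β * #U / 2 ≤ ∑ x ∈ X, if τ ≤ splitDeg G Y U x then 0 else splitDeg G Y U x
  · have hsum : ∑ x ∈ X with ω x = k₀, (if τ ≤ splitDeg G Y U x then 0 else splitDeg G Y U x) ≤
        ∑ x ∈ X with ω x = k₀, splitDeg G Y U x := sum_le_sum fun x _ ↦ by
      split_ifs
      exacts [splitDeg_nonneg x, le_rfl]
    nlinarith [hωlight U (by simpa using hne) (by nlinarith)]
  · refine sum_splitDeg_ge_of_heavy (filter_subset _ _) hUY hne hq hβ hΔ hρ0 hρ1 hτ0 hτΔ hL hV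
      hρβ.le hρτ (fun U' hU' ↦ hωheavy U' (by simpa using hU')) ?_
    have hsplit := sum_filter_add_sum_filter_not X (τ ≤ splitDeg G Y U ·) (splitDeg G Y U)
    rw [sum_filter (¬ τ ≤ splitDeg G Y U ·)] at hsplit
    simp only [ite_not] at hsplit
    linarith

end Sampling

/-! ### Two-step expansion -/

section TwoStep

variable {V ι : Type*} {G : SimpleGraph V} {A B Z U : Finset V} {Λ γ : ℝ}

/-- The closure of `U` under one round of two-step expansion: `U` together with the vertices of
`A \ Z` joined to `U` by a path of length two with middle vertex in `B \ Z`. Here `Z` is the set of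
vertices that are already in use. -/
noncomputable def twoStep (G : SimpleGraph V) (A B Z U : Finset V) : Finset V :=
  U ∪ {a ∈ A \ Z | ∃ b ∈ B \ Z, G.Adj b a ∧ ∃ u ∈ U, G.Adj b u}

/-- A bipartite expansion condition on `(A, B)` with maximum degree `Λ`: every set `U` of at most
half of `A` expands through paths of length two with middle vertex in `B`. -/
structure IsTwoStepExpander (G : SimpleGraph V) (A B : Finset V) (Λ γ : ℝ) : Prop where
  degInto_left_le : ∀ a ∈ A, degInto G a B ≤ Λ
  degInto_right_le : ∀ b ∈ B, degInto G b A ≤ Λ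
  le_sum_splitDeg : ∀ U ⊆ A, 2 * #U ≤ #A → γ * Λ * #U ≤ ∑ b ∈ B, splitDeg G A U b

lemma twoStep_subset (hU : U ⊆ A \ Z) : twoStep G A B Z U ⊆ A \ Z :=
  union_subset hU (filter_subset _ _)

lemma subset_twoStep : U ⊆ twoStep G A B Z U := subset_union_left

lemma iterate_twoStep_subset (hU : U ⊆ A \ Z) (k : ℕ) : (twoStep G A B Z)^[k] U ⊆ A \ Z := by
  induction k with
  | zero => exact hU
  | succ k ih =>
    rw [Function.iterate_succ_apply']
    exact twoStep_subset ih

lemma iterate_twoStep_mono {k l : ℕ} (h : k ≤ l) :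
    (twoStep G A B Z)^[k] U ⊆ (twoStep G A B Z)^[l] U :=
  Function.monotone_iterate_of_id_le (fun _ ↦ subset_twoStep) h U

lemma twoStep_biUnion (K : Finset ι) (f : ι → Finset V) :
    twoStep G A B Z (K.biUnion f) = K.biUnion fun i ↦ twoStep G A B Z (f i) := by
  ext a
  simp only [twoStep, mem_union, mem_filter, mem_biUnion]
  grind

lemma iterate_twoStep_biUnion (k : ℕ) (K : Finset ι) (f : ι → Finset V) :
    (twoStep G A B Z)^[k] (K.biUnion f) = K.biUnion fun i ↦ (twoStep G A B Z)^[k] (f i) := by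
  induction k with
  | zero => rfl
  | succ k ih => simp only [Function.iterate_succ_apply', ih, twoStep_biUnion]

lemma splitDeg_le_degInto_twoStep {b : V} (hb : b ∈ B \ Z) :
    splitDeg G A U b ≤ degInto G b ((twoStep G A B Z U \ U) ∪ (Z ∩ A)) := by
  by_cases hbU : ∃ u ∈ U, G.Adj b u
  · refine (min_le_right _ _).trans (Nat.cast_le.2 (card_le_card fun a ha ↦ ?_))
    simp only [twoStep, mem_union, mem_filter, mem_sdiff, mem_inter] at ha hb ⊢
    grind
  · have hzero : degInto G b U = 0 := by
      rw [degInto, Nat.cast_eq_zero, card_eq_zero, filter_eq_empty_iff]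
      exact fun u hu hbu ↦ hbU ⟨u, hu, hbu⟩
    exact (min_le_left _ _).trans (hzero.trans_le (degInto_nonneg b))

theorem IsTwoStepExpander.card_twoStep_ge (h : IsTwoStepExpander G A B Λ γ) (hΛ : 0 < Λ)
    (hU : U ⊆ A \ Z) (hUA : 2 * #U ≤ #A) :
    (1 + γ) * #U ≤ #(twoStep G A B Z U) + 2 * (#Z : ℝ) := by
  have hUA' : U ⊆ A := hU.trans sdiff_subset
  set T := (twoStep G A B Z U \ U) ∪ (Z ∩ A)
  have hTA : T ⊆ A := union_subset
    (sdiff_subset.trans ((twoStep_subset hU).trans sdiff_subset)) inter_subset_right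
  have hfree : ∑ b ∈ B \ Z, splitDeg G A U b ≤ Λ * #T := by
    calc ∑ b ∈ B \ Z, splitDeg G A U b
        ≤ ∑ b ∈ B \ Z, degInto G b T := sum_le_sum fun b hb ↦ splitDeg_le_degInto_twoStep hb
      _ = ∑ a ∈ T, degInto G a (B \ Z) := sum_degInto_comm
      _ ≤ #T • Λ := sum_le_card_nsmul _ _ _ fun a ha ↦
          (degInto_mono a sdiff_subset).trans (h.degInto_left_le a (hTA ha))
      _ = Λ * #T := by rw [nsmul_eq_mul, mul_comm]
  have hused : ∑ b ∈ B ∩ Z, splitDeg G A U b ≤ Λ * #Z := by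
    calc ∑ b ∈ B ∩ Z, splitDeg G A U b
        ≤ #(B ∩ Z) • Λ := sum_le_card_nsmul _ _ _ fun b hb ↦
          (min_le_left _ _).trans ((degInto_mono b hUA').trans
            (h.degInto_right_le b (mem_inter.1 hb).1))
      _ ≤ #Z • Λ := by gcongr; exact inter_subset_right
      _ = Λ * #Z := by rw [nsmul_eq_mul, mul_comm]
  have hT : (#T : ℝ) ≤ #(twoStep G A B Z U) - #U + #Z := by
    have hsdiff := card_sdiff_add_card_eq_card (subset_twoStep (G := G) (A := A) (B := B) (Z := Z)
      (U := U))
    have hunion := (card_union_le (twoStep G A B Z U \ U) (Z ∩ A)).trans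
      (Nat.add_le_add_left (card_le_card inter_subset_left) _)
    rify at hsdiff hunion
    linarith
  have hexp : Λ * (γ * #U) ≤ Λ * (#T + #Z) := by
    linarith [h.le_sum_splitDeg U hUA' hUA, sum_inter_add_sum_sdiff B Z (splitDeg G A U)]
  linarith [le_of_mul_le_mul_left hexp hΛ]

variable [Fintype V] {R : ℕ}

theorem IsTwoStepExpander.card_lt_two_mul_card_iterate (h : IsTwoStepExpander G A B Λ γ)
    (hΛ : 0 < Λ) (hγ : 0 < γ) (hR : (Fintype.card V : ℝ) < (1 + γ / 2) ^ R) (hU : U ⊆ A \ Z)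
    (hne : U.Nonempty) (hZ : 4 * (#Z : ℝ) ≤ γ * #U) :
    #A < 2 * #((twoStep G A B Z)^[R] U) := by
  by_contra! hsmall
  have hgrowth (k) (hk : k ≤ R) : (1 + γ / 2) ^ k ≤ (#((twoStep G A B Z)^[k] U) : ℝ) := by
    induction k with
    | zero => simpa using hne.card_pos
    | succ k ih =>
      set Uk := (twoStep G A B Z)^[k] U with hUk
      have hhalf : 2 * #Uk ≤ #A :=
        (Nat.mul_le_mul_left 2 (card_le_card (iterate_twoStep_mono (by omega)))).trans hsmall
      have hcard : (#U : ℝ) ≤ #Uk :=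
        Nat.cast_le.2 (card_le_card (iterate_twoStep_mono (Nat.zero_le k)))
      have hstep := h.card_twoStep_ge hΛ (iterate_twoStep_subset hU k) hhalf
      rw [Function.iterate_succ_apply', ← hUk, pow_succ]
      calc (1 + γ / 2) ^ k * (1 + γ / 2) ≤ #Uk * (1 + γ / 2) := by
            gcongr
            exact ih (by omega)
        _ ≤ _ := by nlinarith
  have huniv : (#((twoStep G A B Z)^[R] U) : ℝ) ≤ Fintype.card V := Nat.cast_le.2 (card_le_univ _)
  linarith [hgrowth R le_rfl]

/-- Repeatedly split the family into two halves and keep one whose union has expanded to at least a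
quarter of `A`; that union then expands again. -/
theorem IsTwoStepExpander.exists_card_lt_two_mul_card_iterate
    (h : IsTwoStepExpander G A B Λ γ) (hΛ : 0 < Λ) (hγ : 0 < γ)
    (hR : (Fintype.card V : ℝ) < (1 + γ / 2) ^ R) (hZA : 16 * (#Z : ℝ) ≤ γ * #A) (j : ℕ)
    (K : Finset ι) (f : ι → Finset V) (hK : #K ≤ 2 ^ j) (hf : ∀ i, f i ⊆ A \ Z)
    (hne : (K.biUnion f).Nonempty) (hZ : 4 * (#Z : ℝ) ≤ γ * #(K.biUnion f)) :
    ∃ i ∈ K, #A < 2 * #((twoStep G A B Z)^[R * (j + 1)] (f i)) := by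
  have hbig := h.card_lt_two_mul_card_iterate hΛ hγ hR (biUnion_subset.2 fun i _ ↦ hf i) hne hZ
  induction j generalizing K f with
  | zero =>
    obtain ⟨v, hv⟩ := hne
    obtain ⟨i, hi, -⟩ := mem_biUnion.1 hv
    obtain ⟨i, rfl⟩ := card_eq_one.1 (le_antisymm hK (card_pos.2 ⟨i, hi⟩))
    simpa using hbig
  | succ j ih =>
    obtain ⟨K₁, hK₁, hK₁card⟩ := exists_subset_card_eq (min_le_left #K (2 ^ j))
    let f' : ι → Finset V := fun i ↦ (twoStep G A B Z)^[R] (f i)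
    have hf' (i) : f' i ⊆ A \ Z := iterate_twoStep_subset (hf i) R
    have hpart (K') (hK' : K' ⊆ K) (hK'card : #K' ≤ 2 ^ j) (hquarter : #A < 4 * #(K'.biUnion f')) :
        ∃ i ∈ K, #A < 2 * #((twoStep G A B Z)^[R * (j + 1 + 1)] (f i)) := by
      have hne' : (K'.biUnion f').Nonempty := card_pos.1 (by omega)
      have hZ' : 4 * (#Z : ℝ) ≤ γ * #(K'.biUnion f') := by
        have : (#A : ℝ) ≤ 4 * #(K'.biUnion f') := mod_cast hquarter.le
        nlinarith
      obtain ⟨i, hi, hcard⟩ := ih K' f' hK'card hf' hne' hZ'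
        (h.card_lt_two_mul_card_iterate hΛ hγ hR (biUnion_subset.2 fun i _ ↦ hf' i) hne' hZ')
      rw [← Function.iterate_add_apply] at hcard
      exact ⟨i, hK' hi, hcard⟩
    have hK₂card : #(K \ K₁) ≤ 2 ^ j := by
      rw [card_sdiff_of_subset hK₁, hK₁card]
      rw [pow_succ] at hK
      omega
    rw [iterate_twoStep_biUnion, ← union_sdiff_of_subset hK₁, union_biUnion] at hbig
    have hunion := card_union_le (K₁.biUnion f') ((K \ K₁).biUnion f')
    by_cases hquarter : #A < 4 * #(K₁.biUnion f')
    · exact hpart K₁ hK₁ (hK₁card.trans_le (min_le_right _ _)) hquarter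
    · exact hpart (K \ K₁) sdiff_subset hK₂card (by dsimp only [f'] at *; omega)

end TwoStep

/-! ### Vertices reached by short walks -/

section Reach

variable {V ι : Type*} {G : SimpleGraph V} {A B Z S : Finset V} {x y a b : V} {k l : ℕ}

/-- There is a walk of length at most `k` from `x` to `a` that stays in `S` after leaving `x`. -/
def ReachableWithin (G : SimpleGraph V) (S : Finset V) (x a : V) (k : ℕ) : Prop :=
  ∃ p : G.Walk x a, p.length ≤ k ∧ ∀ v ∈ p.support, v ≠ x → v ∈ S

namespace ReachableWithin

lemma refl : ReachableWithin G S x x 0 := ⟨.nil, le_rfl, by simp⟩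

lemma mono (h : ReachableWithin G S x a k) (hkl : k ≤ l) : ReachableWithin G S x a l :=
  let ⟨p, hp, hS⟩ := h
  ⟨p, hp.trans hkl, hS⟩

lemma step (h : ReachableWithin G S x a k) (hab : G.Adj a b) (hb : b ∈ S) :
    ReachableWithin G S x b (k + 1) := by
  obtain ⟨p, hp, hS⟩ := h
  refine ⟨p.concat hab, by rw [SimpleGraph.Walk.length_concat]; omega, fun v hv hvx ↦ ?_⟩
  rw [SimpleGraph.Walk.support_concat, List.mem_append, List.mem_singleton] at hv
  rcases hv with hv | rfl
  exacts [hS v hv hvx, hb]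

lemma exists_isPath (hx : ReachableWithin G S x a k) (hy : ReachableWithin G S y a l) :
    ∃ p : G.Walk x y, p.IsPath ∧ p.length ≤ k + l ∧
      ∀ v ∈ p.support, v ≠ x → v ≠ y → v ∈ S := by
  obtain ⟨p, hp, hpS⟩ := hx
  obtain ⟨p', hp', hpS'⟩ := hy
  refine ⟨(p.append p'.reverse).bypass, SimpleGraph.Walk.bypass_isPath _,
    (SimpleGraph.Walk.length_bypass_le_length _).trans ?_, fun v hv hvx hvy ↦ ?_⟩
  · rw [SimpleGraph.Walk.length_append, SimpleGraph.Walk.length_reverse]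
    omega
  · have hv' := SimpleGraph.Walk.support_bypass_subset_support _ hv
    rw [SimpleGraph.Walk.mem_support_append_iff, SimpleGraph.Walk.support_reverse,
      List.mem_reverse] at hv'
    exact hv'.elim (hpS v · hvx) (hpS' v · hvy)

end ReachableWithin

/-- The vertices of `A \ Z` that are adjacent to `x`, or joined to `x` by a path of length two with
middle vertex in `B \ Z`. -/
noncomputable def startSet (G : SimpleGraph V) (A B Z : Finset V) (x : V) : Finset V :=
  {a ∈ A \ Z | G.Adj x a ∨ ∃ b ∈ B \ Z, G.Adj x b ∧ G.Adj b a}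

/-- The vertices of `A \ Z` reached from `x` by `startSet` and `k` further rounds of `twoStep`. -/
noncomputable def reachSet (G : SimpleGraph V) (A B Z : Finset V) (k : ℕ) (x : V) : Finset V :=
  (twoStep G A B Z)^[k] (startSet G A B Z x)

lemma startSet_subset : startSet G A B Z x ⊆ A \ Z := filter_subset _ _

lemma reachSet_subset : reachSet G A B Z k x ⊆ A \ Z := iterate_twoStep_subset startSet_subset k

lemma reachableWithin_of_mem_startSet (ha : a ∈ startSet G A B Z x) :
    ReachableWithin G ((A ∪ B) \ Z) x a 2 := by
  obtain ⟨haA, hxa | ⟨b, hb, hxb, hba⟩⟩ := mem_filter.1 ha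
  · exact (ReachableWithin.refl.step hxa
      (sdiff_subset_sdiff subset_union_left le_rfl haA)).mono one_le_two
  · exact (ReachableWithin.refl.step hxb (sdiff_subset_sdiff subset_union_right le_rfl hb)).step
      hba (sdiff_subset_sdiff subset_union_left le_rfl haA)

lemma reachableWithin_of_mem_reachSet (ha : a ∈ reachSet G A B Z k x) :
    ReachableWithin G ((A ∪ B) \ Z) x a (2 + 2 * k) := by
  induction k generalizing a with
  | zero => exact reachableWithin_of_mem_startSet ha
  | succ k ih =>
    rw [reachSet, Function.iterate_succ_apply', twoStep, mem_union, mem_filter] at ha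
    obtain ha | ⟨haA, b, hb, hba, u, hu, hbu⟩ := ha
    · exact (ih ha).mono (by omega)
    · exact ((ih hu).step hbu.symm (sdiff_subset_sdiff subset_union_right le_rfl hb)).step hba
        (sdiff_subset_sdiff subset_union_left le_rfl haA)

/-- A two-step expander `(A, B)` that can be entered from every vertex of the graph: `δ` bounds
from below the number of neighbours in `A` or in `B` of every vertex, and in `A` of every vertex of
`B`. -/
structure IsConnector (G : SimpleGraph V) (A B : Finset V) (Λ γ δ : ℝ) : Prop
    extends IsTwoStepExpander G A B Λ γ where
  le_degInto : ∀ v, δ ≤ degInto G v A ∨ δ ≤ degInto G v B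
  le_degInto_right : ∀ b ∈ B, δ ≤ degInto G b A

variable {K J : Finset ι} {x y : ι → V} {Λ γ δ D ζ : ℝ}

lemma mul_card_le_mul_card_neighbours {W : Finset V} (hlow : ∀ i ∈ K, δ ≤ degInto G (x i) W)
    (hup : ∀ v ∈ W, (#{i ∈ K | G.Adj v (x i)} : ℝ) ≤ D) :
    δ * #K ≤ D * #{v ∈ W | ∃ i ∈ K, G.Adj v (x i)} := by
  have hcount := card_nsmul_le_card_nsmul (s := K) (t := {v ∈ W | ∃ i ∈ K, G.Adj v (x i)})
    (fun i v ↦ G.Adj v (x i)) (m := δ) (n := D) (fun i hi ↦ (hlow i hi).trans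
      (Nat.cast_le.2 (card_le_card fun v hv ↦ ?_))) fun v hv ↦ hup v (mem_filter.1 hv).1
  · simpa only [nsmul_eq_mul, mul_comm] using hcount
  · obtain ⟨hvW, hv⟩ := mem_filter.1 hv
    exact mem_bipartiteAbove _ |>.2 ⟨mem_filter.2 ⟨hvW, i, hi, hv.symm⟩, hv.symm⟩

lemma card_le_card_add_card_of_sdiff_subset {N F : Finset V} (h : N \ Z ⊆ F) :
    (#N : ℝ) ≤ #F + #Z := by
  have := (card_le_card (sdiff_le_iff.1 h)).trans (card_union_le Z F)
  rify at this
  linarith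

lemma mul_card_le_of_le_degInto_left (hD : 0 ≤ D) (hlow : ∀ i ∈ K, δ ≤ degInto G (x i) A)
    (hup : ∀ v ∈ A, (#{i ∈ K | G.Adj v (x i)} : ℝ) ≤ D) :
    δ * #K ≤ D * (#(K.biUnion fun i ↦ startSet G A B Z (x i)) + #Z) := by
  refine (mul_card_le_mul_card_neighbours hlow hup).trans (mul_le_mul_of_nonneg_left
    (card_le_card_add_card_of_sdiff_subset fun a ha ↦ ?_) hD)
  simp only [startSet, mem_sdiff, mem_filter, mem_biUnion] at ha ⊢
  obtain ⟨⟨haA, i, hi, hai⟩, haZ⟩ := ha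
  exact ⟨i, hi, ⟨haA, haZ⟩, .inl hai.symm⟩

namespace IsConnector

variable (h : IsConnector G A B Λ γ δ)

include h in
lemma sq_mul_card_le_of_le_degInto_right (hδ : 0 < δ) (hδΛ : δ ≤ Λ) (hD : 0 ≤ D)
    (hlow : ∀ i ∈ K, δ ≤ degInto G (x i) B)
    (hup : ∀ v ∈ B, (#{i ∈ K | G.Adj v (x i)} : ℝ) ≤ D) :
    δ ^ 2 * #K ≤ Λ * D * (#(K.biUnion fun i ↦ startSet G A B Z (x i)) + 2 * #Z) := by
  set F := K.biUnion fun i ↦ startSet G A B Z (x i)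
  set N : Finset V := {v ∈ B | ∃ i ∈ K, G.Adj v (x i)}
  have hN : δ * #K ≤ D * #N := mul_card_le_mul_card_neighbours hlow hup
  have hNZ : (#N : ℝ) ≤ #(N \ Z) + #Z := card_le_card_add_card_of_sdiff_subset subset_rfl
  have hNF : δ * #(N \ Z) ≤ Λ * (#F + #Z) := by
    refine (mul_card_le_mul_card_neighbours (x := id)
      (fun b hb ↦ h.le_degInto_right b (mem_filter.1 (mem_sdiff.1 hb).1).1)
      fun a ha ↦ (degInto_mono a ?_).trans (h.degInto_left_le a ha)).trans
      (mul_le_mul_of_nonneg_left (card_le_card_add_card_of_sdiff_subset fun a ha ↦ ?_)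
        (hδ.trans_le hδΛ).le)
    · exact sdiff_subset.trans (filter_subset _ _)
    · simp only [F, startSet, id, mem_sdiff, mem_filter, mem_biUnion] at ha ⊢
      obtain ⟨⟨haA, b, ⟨⟨hbB, i, hi, hbi⟩, hbZ⟩, hab⟩, haZ⟩ := ha
      exact ⟨i, hi, ⟨haA, haZ⟩, .inr ⟨b, ⟨hbB, hbZ⟩, hbi.symm, hab.symm⟩⟩
  have hΛ : 0 < Λ := hδ.trans_le hδΛ
  calc δ ^ 2 * #K = δ * (δ * #K) := by ring
    _ ≤ δ * (D * #N) := mul_le_mul_of_nonneg_left hN hδ.le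
    _ ≤ δ * (D * (#(N \ Z) + #Z)) := by gcongr
    _ = D * (δ * #(N \ Z) + δ * #Z) := by ring
    _ ≤ D * (Λ * (#F + #Z) + Λ * #Z) := by gcongr
    _ = Λ * D * (#F + 2 * #Z) := by ring

include h in
theorem sq_mul_card_le (hδ : 0 < δ) (hδΛ : δ ≤ Λ) (hD : 0 ≤ D)
    (hup : ∀ v ∈ A ∪ B, (#{i ∈ K | G.Adj v (x i)} : ℝ) ≤ D) :
    δ ^ 2 * #K ≤ 2 * Λ * D * (#(K.biUnion fun i ↦ startSet G A B Z (x i)) + 2 * #Z) := by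
  set F : Finset ι → Finset V := fun K ↦ K.biUnion fun i ↦ startSet G A B Z (x i)
  set K₁ := {i ∈ K | δ ≤ degInto G (x i) A}
  set K₂ := {i ∈ K | ¬ δ ≤ degInto G (x i) A}
  have hup' {K' : Finset ι} (hK' : K' ⊆ K) (v) (hv : v ∈ A ∪ B) :
      (#{i ∈ K' | G.Adj v (x i)} : ℝ) ≤ D :=
    (Nat.cast_le.2 (card_le_card (filter_subset_filter _ hK'))).trans (hup v hv)
  have hF {K' : Finset ι} (hK' : K' ⊆ K) : (#(F K') : ℝ) ≤ #(F K) :=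
    Nat.cast_le.2 (card_le_card (biUnion_subset_biUnion_of_subset_left _ hK'))
  have hΛ : 0 < Λ := hδ.trans_le hδΛ
  have hleft : δ ^ 2 * #K₁ ≤ Λ * D * (#(F K) + 2 * #Z) := by
    have hK₁ : δ * #K₁ ≤ D * (#(F K₁) + #Z) :=
      mul_card_le_of_le_degInto_left hD (fun i hi ↦ (mem_filter.1 hi).2) fun v hv ↦
        hup' (filter_subset _ _) v (mem_union_left _ hv)
    have hZ : (#Z : ℝ) ≤ 2 * #Z := by linarith [(#Z).cast_nonneg (α := ℝ)]
    calc δ ^ 2 * #K₁ = δ * (δ * #K₁) := by ring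
      _ ≤ Λ * (D * (#(F K₁) + #Z)) := by gcongr
      _ ≤ Λ * (D * (#(F K) + 2 * #Z)) := by
        gcongr ?_ * (_ * (?_ + ?_))
        exact hF (filter_subset _ _)
      _ = Λ * D * (#(F K) + 2 * #Z) := by ring
  have hright : δ ^ 2 * #K₂ ≤ Λ * D * (#(F K) + 2 * #Z) := by
    refine (h.sq_mul_card_le_of_le_degInto_right (Z := Z) hδ hδΛ hD
      (fun i hi ↦ (h.le_degInto _).resolve_left (mem_filter.1 hi).2) fun v hv ↦
      hup' (filter_subset _ _) v (mem_union_right _ hv)).trans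
      (mul_le_mul_of_nonneg_left ?_ (mul_nonneg hΛ.le hD))
    linarith [hF (K' := K₂) (filter_subset _ _)]
  have hcard := card_filter_add_card_filter_not (s := K) fun i ↦ δ ≤ degInto G (x i) A
  rify at hcard
  rw [← hcard]
  linarith

include h in
lemma mul_card_used_le (hγ : 0 < γ) (hγ1 : γ ≤ 1) (hδ : 0 < δ) (hδΛ : δ ≤ Λ) (hD : 0 < D)
    (hZ : (#Z : ℝ) ≤ ζ * #J) (hζ : 80 * ζ * Λ * D ≤ γ * δ ^ 2) (hJK : #J ≤ 2 * #K)
    (hup : ∀ v ∈ A ∪ B, (#{i ∈ K | G.Adj v (x i)} : ℝ) ≤ D) :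
    16 * (#Z : ℝ) ≤ γ * #(K.biUnion fun i ↦ startSet G A B Z (x i)) := by
  have hstart := h.sq_mul_card_le (Z := Z) hδ hδΛ hD.le hup
  set F := K.biUnion fun i ↦ startSet G A B Z (x i)
  have hΛD : 0 < Λ * D := mul_pos (hδ.trans_le hδΛ) hD
  have hchain : Λ * D * (80 * #Z) ≤ Λ * D * (4 * (γ * #F) + 8 * (γ * #Z)) := by
    calc Λ * D * (80 * #Z) ≤ Λ * D * (80 * (ζ * #J)) := by gcongr
      _ = 80 * ζ * Λ * D * #J := by ring
      _ ≤ γ * δ ^ 2 * #J := by gcongr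
      _ ≤ γ * δ ^ 2 * (2 * #K) := by gcongr; exact_mod_cast hJK
      _ = 2 * γ * (δ ^ 2 * #K) := by ring
      _ ≤ 2 * γ * (2 * Λ * D * (#F + 2 * #Z)) := by gcongr
      _ = _ := by ring
  nlinarith [le_of_mul_le_mul_left hchain hΛD, (#Z).cast_nonneg (α := ℝ)]

variable [Fintype V] {R : ℕ}

include h in
theorem two_mul_card_stuck_lt (hγ : 0 < γ) (hγ1 : γ ≤ 1) (hδ : 0 < δ) (hδΛ : δ ≤ Λ) (hD : 0 < D)
    (hR : (Fintype.card V : ℝ) < (1 + γ / 2) ^ R) {j : ℕ} (hJ : J.Nonempty) (hJj : #J ≤ 2 ^ j)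
    (hZ : (#Z : ℝ) ≤ ζ * #J) (hζ : 80 * ζ * Λ * D ≤ γ * δ ^ 2)
    (hup : ∀ v ∈ A ∪ B, (#{i ∈ J | G.Adj v (x i)} : ℝ) ≤ D) :
    2 * #{i ∈ J | 2 * #(reachSet G A B Z (R * (j + 1)) (x i)) ≤ #A} < #J := by
  by_contra! hstuck
  set K := {i ∈ J | 2 * #(reachSet G A B Z (R * (j + 1)) (x i)) ≤ #A}
  have hKJ : K ⊆ J := filter_subset _ _
  have hupK (v) (hv : v ∈ A ∪ B) : (#{i ∈ K | G.Adj v (x i)} : ℝ) ≤ D :=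
    (Nat.cast_le.2 (card_le_card (filter_subset_filter _ hKJ))).trans (hup v hv)
  have hused := h.mul_card_used_le hγ hγ1 hδ hδΛ hD hZ hζ hstuck hupK
  have hstart := h.sq_mul_card_le (Z := Z) hδ hδΛ hD.le hupK
  set F := K.biUnion fun i ↦ startSet G A B Z (x i)
  have hFA : (#F : ℝ) ≤ #A := Nat.cast_le.2 (card_le_card
    (biUnion_subset.2 fun i _ ↦ startSet_subset.trans sdiff_subset))
  have hne : F.Nonempty := by
    rw [nonempty_iff_ne_empty]
    intro hF
    have hZ0 : (#Z : ℝ) = 0 := by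
      rw [hF, card_empty, Nat.cast_zero, mul_zero] at hused
      linarith [(#Z).cast_nonneg (α := ℝ)]
    have hK0 : (0 : ℝ) < #K := Nat.cast_pos.2 (by have := hJ.card_pos; omega)
    rw [hF, hZ0] at hstart
    have : 0 < δ ^ 2 * #K := by positivity
    simp only [card_empty, Nat.cast_zero] at hstart
    linarith
  obtain ⟨i, hi, hreach⟩ := h.exists_card_lt_two_mul_card_iterate (hδ.trans_le hδΛ) hγ hR
    (hused.trans (by gcongr)) j K _ ((card_le_card hKJ).trans hJj) (fun i ↦ startSet_subset) hne
    (by linarith [(#Z).cast_nonneg (α := ℝ)])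
  exact (mem_filter.1 hi).2.not_gt hreach

include h in
theorem exists_isPath (hγ : 0 < γ) (hγ1 : γ ≤ 1) (hδ : 0 < δ) (hδΛ : δ ≤ Λ) (hD : 0 < D)
    (hR : (Fintype.card V : ℝ) < (1 + γ / 2) ^ R) {j : ℕ} (hJ : J.Nonempty) (hJj : #J ≤ 2 ^ j)
    (hZ : (#Z : ℝ) ≤ ζ * #J) (hζ : 80 * ζ * Λ * D ≤ γ * δ ^ 2)
    (hupx : ∀ v ∈ A ∪ B, (#{i ∈ J | G.Adj v (x i)} : ℝ) ≤ D)
    (hupy : ∀ v ∈ A ∪ B, (#{i ∈ J | G.Adj v (y i)} : ℝ) ≤ D) :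
    ∃ i ∈ J, ∃ p : G.Walk (x i) (y i), p.IsPath ∧ p.length ≤ 4 + 4 * (R * (j + 1)) ∧
      ∀ v ∈ p.support, v ≠ x i → v ≠ y i → v ∈ (A ∪ B) \ Z := by
  set X : ι → Finset V := fun i ↦ reachSet G A B Z (R * (j + 1)) (x i)
  set Y : ι → Finset V := fun i ↦ reachSet G A B Z (R * (j + 1)) (y i)
  have hstuck : #({i ∈ J | 2 * #(X i) ≤ #A} ∪ {i ∈ J | 2 * #(Y i) ≤ #A}) < #J := by
    have hx := h.two_mul_card_stuck_lt hγ hγ1 hδ hδΛ hD hR hJ hJj hZ hζ hupx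
    have hy := h.two_mul_card_stuck_lt hγ hγ1 hδ hδΛ hD hR hJ hJj hZ hζ hupy
    refine (card_union_le _ _).trans_lt ?_
    dsimp only [X, Y]
    omega
  obtain ⟨i, hi, hfree⟩ := exists_mem_notMem_of_card_lt_card hstuck
  simp only [mem_union, mem_filter, hi, true_and, not_or, not_le] at hfree
  have hsub : X i ∪ Y i ⊆ A :=
    (union_subset reachSet_subset reachSet_subset).trans sdiff_subset
  have hmeet : (X i ∩ Y i).Nonempty := by
    rw [← card_pos]
    have := card_union_add_card_inter (X i) (Y i)
    have := card_le_card hsub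
    omega
  obtain ⟨a, ha⟩ := hmeet
  obtain ⟨hax, hay⟩ := mem_inter.1 ha
  obtain ⟨p, hp, hlength, hsupport⟩ := (reachableWithin_of_mem_reachSet hax).exists_isPath
    (reachableWithin_of_mem_reachSet hay)
  exact ⟨i, hi, p, hp, by omega, hsupport⟩

end IsConnector

end Reach

/-! ### Linkages -/

section Linkage

variable {V ι : Type*} {G : SimpleGraph V} {x y : ι → V} {l : ℕ} {W W₁ W₂ : Finset V}
  {I I₁ I₂ : Finset ι} {Q Q₁ Q₂ : ι → Finset V}

/-- Paths of length at most `l` from `x i` to `y i`, for `i ∈ I`, whose interiors are covered by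
pairwise disjoint small subsets `Q i` of `W`. -/
structure IsLinkage (G : SimpleGraph V) (x y : ι → V) (l : ℕ) (W : Finset V) (I : Finset ι)
    (Q : ι → Finset V) : Prop where
  subset : ∀ i ∈ I, Q i ⊆ W
  card_le : ∀ i ∈ I, #(Q i) ≤ l + 1
  exists_isPath : ∀ i ∈ I, ∃ p : G.Walk (x i) (y i), p.IsPath ∧ p.length ≤ l ∧
    ∀ v ∈ p.support, v ≠ x i → v ≠ y i → v ∈ Q i
  pairwiseDisjoint : (I : Set ι).PairwiseDisjoint Q

namespace IsLinkage

lemma empty : IsLinkage G x y l W ∅ Q := ⟨by simp, by simp, by simp, by simp⟩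

lemma mono (h : IsLinkage G x y l W₁ I Q) (hW : W₁ ⊆ W₂) : IsLinkage G x y l W₂ I Q where
  __ := h
  subset i hi := (h.subset i hi).trans hW

lemma restrict (h : IsLinkage G x y l W I Q) : IsLinkage G x y l (I.biUnion Q) I Q where
  __ := h
  subset _ hi := subset_biUnion_of_mem Q hi

lemma biUnion_subset (h : IsLinkage G x y l W I Q) : I.biUnion Q ⊆ W :=
  Finset.biUnion_subset.2 h.subset

lemma card_biUnion_le (h : IsLinkage G x y l W I Q) : #(I.biUnion Q) ≤ #I * (l + 1) :=
  card_biUnion_le_card_mul _ _ _ h.card_le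

lemma union (h₁ : IsLinkage G x y l W₁ I₁ Q₁) (h₂ : IsLinkage G x y l W₂ I₂ Q₂)
    (hW : Disjoint W₁ W₂) (hI : Disjoint I₁ I₂) :
    IsLinkage G x y l (W₁ ∪ W₂) (I₁ ∪ I₂) (I₁.piecewise Q₁ Q₂) := by
  have hQ₁ (i) (hi : i ∈ I₁) : I₁.piecewise Q₁ Q₂ i = Q₁ i := piecewise_eq_of_mem _ _ _ hi
  have hQ₂ (i) (hi : i ∈ I₂) : I₁.piecewise Q₁ Q₂ i = Q₂ i :=
    piecewise_eq_of_notMem _ _ _ (disjoint_right.1 hI hi)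
  refine ⟨?_, ?_, ?_, ?_⟩
  · rw [forall_mem_union]
    exact ⟨fun i hi ↦ hQ₁ i hi ▸ (h₁.subset i hi).trans subset_union_left,
      fun i hi ↦ hQ₂ i hi ▸ (h₂.subset i hi).trans subset_union_right⟩
  · rw [forall_mem_union]
    exact ⟨fun i hi ↦ hQ₁ i hi ▸ h₁.card_le i hi, fun i hi ↦ hQ₂ i hi ▸ h₂.card_le i hi⟩
  · rw [forall_mem_union]
    exact ⟨fun i hi ↦ hQ₁ i hi ▸ h₁.exists_isPath i hi,
      fun i hi ↦ hQ₂ i hi ▸ h₂.exists_isPath i hi⟩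
  · rw [coe_union, Set.pairwiseDisjoint_union]
    refine ⟨fun i hi j hj hij ↦ ?_, fun i hi j hj hij ↦ ?_, fun i hi j hj _ ↦ ?_⟩
    · simpa only [Function.onFun, hQ₁ i hi, hQ₁ j hj] using h₁.pairwiseDisjoint hi hj hij
    · simpa only [Function.onFun, hQ₂ i hi, hQ₂ j hj] using h₂.pairwiseDisjoint hi hj hij
    · simpa only [hQ₁ i hi, hQ₂ j hj] using
        hW.mono (h₁.subset i hi) (h₂.subset j hj)

lemma exists_singleton {i : ι} (p : G.Walk (x i) (y i)) (hp : p.IsPath) (hl : p.length ≤ l)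
    (hW : ∀ v ∈ p.support, v ≠ x i → v ≠ y i → v ∈ W) :
    ∃ Q, IsLinkage G x y l W {i} Q := by
  refine ⟨fun _ ↦ {v ∈ p.support.toFinset | v ≠ x i ∧ v ≠ y i}, ?_, ?_, ?_, by simp⟩
  · rintro _ - v hv
    obtain ⟨hv, hvx, hvy⟩ := mem_filter.1 hv
    exact hW v (List.mem_toFinset.1 hv) hvx hvy
  · rintro _ -
    refine (card_filter_le _ _).trans ((List.toFinset_card_le _).trans ?_)
    rw [SimpleGraph.Walk.length_support]
    omega
  · rintro _ hj
    rw [mem_singleton.1 hj]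
    exact ⟨p, hp, hl, fun v hv hvx hvy ↦ mem_filter.2 ⟨List.mem_toFinset.2 hv, hvx, hvy⟩⟩

/-- If the end vertices avoid `W`, then disjointness of the sets `Q i` makes the paths internally
vertex-disjoint. -/
theorem exists_paths [Fintype ι] (h : IsLinkage G x y l W univ Q) (hx : ∀ i, x i ∉ W)
    (hy : ∀ i, y i ∉ W) :
    ∃ P : ∀ i, G.Walk (x i) (y i), (∀ i, (P i).IsPath) ∧ (∀ i, (P i).length ≤ l) ∧
      (∀ i, ∀ v ∈ (P i).support, v ≠ x i → v ≠ y i → v ∈ W) ∧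
      ∀ i j, i ≠ j → ∀ v ∈ (P i).support, v ∈ (P j).support →
        (v = x i ∨ v = y i) ∧ (v = x j ∨ v = y j) := by
  choose P hpath hlength hinterior using fun i ↦ h.exists_isPath i (mem_univ i)
  have hsub (i) : Q i ⊆ W := h.subset i (mem_univ i)
  have hends (i j v) (hv : v = x i ∨ v = y i) : v ∉ Q j := by
    rcases hv with rfl | rfl
    exacts [fun hv ↦ hx i (hsub j hv), fun hv ↦ hy i (hsub j hv)]
  have hor (i v) (hv : v ∈ (P i).support) : (v = x i ∨ v = y i) ∨ v ∈ Q i := by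
    by_cases hv' : v = x i ∨ v = y i
    exacts [.inl hv', .inr (hinterior i v hv (fun h ↦ hv' (.inl h)) fun h ↦ hv' (.inr h))]
  refine ⟨P, hpath, hlength, fun i v hv hvx hvy ↦ hsub i (hinterior i v hv hvx hvy),
    fun i j hij v hvi hvj ↦ ?_⟩
  have hdisjoint : v ∈ Q i → v ∉ Q j := fun hv ↦
    disjoint_left.1 (h.pairwiseDisjoint (mem_coe.2 (mem_univ i)) (mem_coe.2 (mem_univ j)) hij) hv
  rcases hor i v hvi with hi | hi <;> rcases hor j v hvj with hj | hj
  exacts [⟨hi, hj⟩, (hends i j v hi hj).elim, (hends j i v hj hi).elim, (hdisjoint hi hj).elim]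

end IsLinkage

variable [Fintype V] {κ : Type*} {A B : Finset V} {Λ γ δ D : ℝ} {R M : ℕ}

/-- A maximal linkage serves at least half of the pairs: otherwise the vertices it uses are few
compared with the unserved pairs, one of which can then still be joined. -/
theorem IsConnector.exists_isLinkage_half (h : IsConnector G A B Λ γ δ) (hγ : 0 < γ) (hγ1 : γ ≤ 1)
    (hδ : 0 < δ) (hδΛ : δ ≤ Λ) (hD : 0 < D) (hR : (Fintype.card V : ℝ) < (1 + γ / 2) ^ R)
    (hl : 4 + 4 * (R * (M + 1)) ≤ l) (hlD : 80 * (2 * (l + 1)) * Λ * D ≤ γ * δ ^ 2)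
    (hI : #I ≤ 2 ^ M) (hupx : ∀ v ∈ A ∪ B, (#{i ∈ I | G.Adj v (x i)} : ℝ) ≤ D)
    (hupy : ∀ v ∈ A ∪ B, (#{i ∈ I | G.Adj v (y i)} : ℝ) ≤ D) :
    ∃ I₁ ⊆ I, (∃ Q, IsLinkage G x y l (A ∪ B) I₁ Q) ∧ 2 * #(I \ I₁) ≤ #I := by
  obtain ⟨I₁, hI₁, hmax⟩ := exists_max_image {I₁ ∈ I.powerset | ∃ Q, IsLinkage G x y l (A ∪ B) I₁ Q}
    card ⟨∅, mem_filter.2 ⟨empty_mem_powerset _, fun _ ↦ ∅, .empty⟩⟩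
  obtain ⟨hI₁I, Q, hQ⟩ := mem_filter.1 hI₁
  replace hI₁I := mem_powerset.1 hI₁I
  refine ⟨I₁, hI₁I, ⟨Q, hQ⟩, ?_⟩
  by_contra! hhalf
  have hunserved : #I = #(I \ I₁) + #I₁ := (card_sdiff_add_card_eq_card hI₁I).symm
  have hused : (#(I₁.biUnion Q) : ℝ) ≤ 2 * (l + 1) * #(I \ I₁) := by
    have : #(I₁.biUnion Q) ≤ 2 * #(I \ I₁) * (l + 1) :=
      hQ.card_biUnion_le.trans (Nat.mul_le_mul_right _ (by omega))
    rify at this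
    linarith
  have hup {z : ι → V} (hz : ∀ v ∈ A ∪ B, (#{i ∈ I | G.Adj v (z i)} : ℝ) ≤ D) (v)
      (hv : v ∈ A ∪ B) : (#{i ∈ I \ I₁ | G.Adj v (z i)} : ℝ) ≤ D :=
    (Nat.cast_le.2 (card_le_card (filter_subset_filter _ sdiff_subset))).trans (hz v hv)
  obtain ⟨i, hi, p, hp, hpl, hpW⟩ := h.exists_isPath hγ hγ1 hδ hδΛ hD hR (card_pos.1 (by omega))
    ((card_le_card sdiff_subset).trans hI) hused hlD (hup hupx) (hup hupy)
  obtain ⟨hiI, hiI₁⟩ := mem_sdiff.1 hi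
  obtain ⟨Q', hQ'⟩ := IsLinkage.exists_singleton p hp (hpl.trans hl) hpW
  have hlarger := (hQ'.union hQ.restrict sdiff_disjoint (disjoint_singleton_left.2 hiI₁)).mono
    (union_subset sdiff_subset hQ.biUnion_subset)
  have hcard := hmax ({i} ∪ I₁) (mem_filter.2 ⟨mem_powerset.2
    (union_subset (singleton_subset_iff.2 hiI) hI₁I), _, hlarger⟩)
  rw [card_union_of_disjoint (disjoint_singleton_left.2 hiI₁), card_singleton] at hcard
  omega

variable {A B : κ → Finset V} {K : Finset κ}

theorem exists_isLinkage_two_pow_mul_card_le (h : ∀ k, IsConnector G (A k) (B k) Λ γ δ)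
    (hdisj : Pairwise fun k k' ↦ Disjoint (A k ∪ B k) (A k' ∪ B k')) (hγ : 0 < γ) (hγ1 : γ ≤ 1)
    (hδ : 0 < δ) (hδΛ : δ ≤ Λ) (hD : 0 < D) (hR : (Fintype.card V : ℝ) < (1 + γ / 2) ^ R)
    (hl : 4 + 4 * (R * (M + 1)) ≤ l) (hlD : 80 * (2 * (l + 1)) * Λ * D ≤ γ * δ ^ 2)
    (hI : #I ≤ 2 ^ M) (hupx : ∀ k, ∀ v ∈ A k ∪ B k, (#{i ∈ I | G.Adj v (x i)} : ℝ) ≤ D)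
    (hupy : ∀ k, ∀ v ∈ A k ∪ B k, (#{i ∈ I | G.Adj v (y i)} : ℝ) ≤ D) :
    ∃ I₁ ⊆ I, (∃ Q, IsLinkage G x y l (K.biUnion fun k ↦ A k ∪ B k) I₁ Q) ∧
      2 ^ #K * #(I \ I₁) ≤ #I := by
  induction K using Finset.induction_on with
  | empty => exact ⟨∅, empty_subset I, ⟨fun _ ↦ ∅, .empty⟩, by simp⟩
  | insert k K hk ih =>
    obtain ⟨I₁, hI₁, ⟨Q₁, hQ₁⟩, hcard₁⟩ := ih
    have hup {z : ι → V} (hz : ∀ v ∈ A k ∪ B k, (#{i ∈ I | G.Adj v (z i)} : ℝ) ≤ D) (v)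
        (hv : v ∈ A k ∪ B k) : (#{i ∈ I \ I₁ | G.Adj v (z i)} : ℝ) ≤ D :=
      (Nat.cast_le.2 (card_le_card (filter_subset_filter _ sdiff_subset))).trans (hz v hv)
    obtain ⟨I₂, hI₂, ⟨Q₂, hQ₂⟩, hcard₂⟩ := (h k).exists_isLinkage_half hγ hγ1 hδ hδΛ hD hR hl hlD
      ((card_le_card sdiff_subset).trans hI) (hup (hupx k)) (hup (hupy k))
    have hW : Disjoint (A k ∪ B k) (K.biUnion fun k ↦ A k ∪ B k) :=
      (disjoint_biUnion_right _ _ _).2 fun k' hk' ↦ hdisj (ne_of_mem_of_not_mem hk' hk).symm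
    refine ⟨I₂ ∪ I₁, union_subset (hI₂.trans sdiff_subset) hI₁,
      ⟨I₂.piecewise Q₂ Q₁, ?_⟩, ?_⟩
    · rw [biUnion_insert]
      exact hQ₂.union hQ₁ hW (disjoint_sdiff_self_left.mono_left hI₂)
    rw [union_comm, ← sup_eq_union, ← sdiff_sdiff_left, card_insert_of_notMem hk, pow_succ,
      mul_assoc]
    exact (Nat.mul_le_mul_left _ hcard₂).trans hcard₁

variable [Fintype κ]

theorem exists_isLinkage (h : ∀ k, IsConnector G (A k) (B k) Λ γ δ)
    (hdisj : Pairwise fun k k' ↦ Disjoint (A k ∪ B k) (A k' ∪ B k')) (hγ : 0 < γ) (hγ1 : γ ≤ 1)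
    (hδ : 0 < δ) (hδΛ : δ ≤ Λ) (hD : 0 < D) (hR : (Fintype.card V : ℝ) < (1 + γ / 2) ^ R)
    (hl : 4 + 4 * (R * (Fintype.card κ + 1)) ≤ l)
    (hlD : 80 * (2 * (l + 1)) * Λ * D ≤ γ * δ ^ 2) (hI : #I < 2 ^ Fintype.card κ)
    (hupx : ∀ k, ∀ v ∈ A k ∪ B k, (#{i ∈ I | G.Adj v (x i)} : ℝ) ≤ D)
    (hupy : ∀ k, ∀ v ∈ A k ∪ B k, (#{i ∈ I | G.Adj v (y i)} : ℝ) ≤ D) :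
    ∃ Q, IsLinkage G x y l (univ.biUnion fun k ↦ A k ∪ B k) I Q := by
  obtain ⟨I₁, hI₁, hQ, hcard⟩ := exists_isLinkage_two_pow_mul_card_le (K := univ) h hdisj hγ hγ1 hδ
    hδΛ hD hR hl hlD hI.le hupx hupy
  have hall : I \ I₁ = ∅ := by
    rw [← card_eq_zero]
    by_contra hne
    have := Nat.le_mul_of_pos_right (2 ^ #(univ : Finset κ)) (Nat.pos_of_ne_zero hne)
    rw [card_univ] at *
    omega
  rwa [← hI₁.antisymm (sdiff_eq_empty_iff_subset.1 hall)]

/-- Each of the more than `log₂ n` connectors serves at least half of the remaining pairs. -/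
theorem isConnecting_of_isConnector [Nonempty κ] {n : ℕ} {S : Finset V}
    (h : ∀ k, IsConnector G (A k) (B k) Λ γ δ)
    (hdisj : Pairwise fun k k' ↦ Disjoint (A k ∪ B k) (A k' ∪ B k')) (hS : ∀ k, A k ∪ B k ⊆ S)
    (hγ : 0 < γ) (hγ1 : γ ≤ 1) (hδ : 0 < δ) (hδΛ : δ ≤ Λ) (hD : 0 < D) (hDδ : D ≤ δ)
    (hR : (Fintype.card V : ℝ) < (1 + γ / 2) ^ R)
    (hl : 4 + 4 * (R * (Fintype.card κ + 1)) ≤ l)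
    (hlD : 80 * (2 * (l + 1)) * Λ * D ≤ γ * δ ^ 2) (hV : Fintype.card V < 2 ^ Fintype.card κ)
    (hlog : (l : ℝ) ≤ Real.logb 2 n ^ 6) :
    IsConnecting n G (S : Set V) D := by
  intro r x y hx hy hdeg
  have hadd (v) (hv : v ∈ S) : (#{i | G.Adj v (x i)} : ℝ) + #{i | G.Adj v (y i)} ≤ D := by
    simpa only [Nat.card_eq_fintype_card, Fintype.card_subtype, Nat.cast_add] using hdeg v hv
  have hupx (v) (hv : v ∈ S) : (#{i | G.Adj v (x i)} : ℝ) ≤ D :=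
    (le_add_of_nonneg_right (Nat.cast_nonneg _)).trans (hadd v hv)
  have hupy (v) (hv : v ∈ S) : (#{i | G.Adj v (y i)} : ℝ) ≤ D :=
    (le_add_of_nonneg_left (Nat.cast_nonneg _)).trans (hadd v hv)
  have hr : #(univ : Finset (Fin r)) < 2 ^ Fintype.card κ := by
    refine lt_of_le_of_lt ?_ hV
    obtain ⟨k⟩ := ‹Nonempty κ›
    have hlow (i) : δ ≤ degInto G (x i) S := ((h k).le_degInto (x i)).elim
      (·.trans (degInto_mono _ (subset_union_left.trans (hS k))))
      (·.trans (degInto_mono _ (subset_union_right.trans (hS k))))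
    have hcount := (mul_card_le_mul_card_neighbours (K := univ) (fun i _ ↦ hlow i) hupx).trans
      (mul_le_mul hDδ (Nat.cast_le.2 (card_le_univ _)) (Nat.cast_nonneg _) hδ.le)
    exact_mod_cast le_of_mul_le_mul_left hcount hδ
  obtain ⟨Q, hQ⟩ := exists_isLinkage (I := univ) h hdisj hγ hγ1 hδ hδΛ hD hR hl hlD
    hr (fun k v hv ↦ hupx v (hS k hv)) fun k v hv ↦ hupy v (hS k hv)
  obtain ⟨P, hpath, hlength, hinterior, hdisjoint⟩ :=
    (hQ.mono (biUnion_subset.2 fun k _ ↦ hS k)).exists_paths hx hy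
  exact ⟨P, hpath, fun i ↦ (Nat.cast_le.2 (hlength i)).trans hlog, hinterior, hdisjoint⟩

end Linkage

/-! ### Cuts in bipartite expanders -/

section Cut

variable {V : Type*} {G : SimpleGraph V} {A B X Y U W : Finset V} {β γ Λ μ τ : ℝ}

lemma sum_splitDeg_eq :
    ∑ x ∈ X, splitDeg G Y U x =
      ∑ x ∈ X with degInto G x (Y \ U) < degInto G x U, degInto G x (Y \ U) +
        ∑ x ∈ X with ¬ degInto G x (Y \ U) < degInto G x U, degInto G x U := by
  rw [← sum_filter_add_sum_filter_not X fun x ↦ degInto G x (Y \ U) < degInto G x U]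
  exact congr_arg₂ (· + ·) (sum_congr rfl fun x hx ↦ min_eq_right (mem_filter.1 hx).2.le)
    (sum_congr rfl fun x hx ↦ min_eq_left (not_lt.1 (mem_filter.1 hx).2))

lemma mul_card_le_sum_degInto_sdiff (hX : X ⊆ A) (hW : W ⊆ B) (hΛ : 0 ≤ Λ)
    (hlow : ∀ a ∈ A, 2 * μ ≤ degInto G a B) (hup : ∀ b ∈ B, degInto G b A ≤ Λ) (hμ : Λ * τ ≤ μ)
    (hWX : (#W : ℝ) ≤ τ * #X) :
    μ * #X ≤ ∑ a ∈ X, degInto G a (B \ W) := by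
  have htotal : 2 * μ * #X ≤ ∑ a ∈ X, degInto G a B := by
    simpa [mul_comm] using card_nsmul_le_sum X _ _ fun a ha ↦ hlow a (hX ha)
  have hremoved : ∑ a ∈ X, degInto G a W ≤ μ * #X := by
    calc ∑ a ∈ X, degInto G a W = ∑ b ∈ W, degInto G b X := sum_degInto_comm
      _ ≤ #W • Λ := sum_le_card_nsmul _ _ _ fun b hb ↦
          (degInto_mono b hX).trans (hup b (hW hb))
      _ = Λ * #W := by rw [nsmul_eq_mul, mul_comm]
      _ ≤ Λ * (τ * #X) := by gcongr
      _ = Λ * τ * #X := by ring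
      _ ≤ μ * #X := by gcongr
  simp only [degInto_sdiff _ hW, sum_sub_distrib]
  linarith

/-- Cut expansion is transferred to the other side: for a small set `U ⊆ A`, either few vertices of
`B` send most of their edges to one part of `(U, A \ U)`, and then the minimum degree provides many
split edges, or this majority assignment is itself a cut of `B` to which the hypothesis applies. -/
theorem le_sum_splitDeg_of_forall_min_le (hβ : 0 ≤ β) (hτ : 0 ≤ τ) (hΛ : 0 ≤ Λ)
    (hcut : ∀ W ⊆ B, β * min (#W : ℝ) #(B \ W) ≤ ∑ a ∈ A, splitDeg G B W a)
    (hlow : ∀ a ∈ A, 2 * μ ≤ degInto G a B) (hup : ∀ b ∈ B, degInto G b A ≤ Λ)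
    (hΛμ : Λ * τ ≤ μ) (hβμ : β * τ ≤ μ) (hU : U ⊆ A) (hUA : 2 * #U ≤ #A) :
    β * τ * #U ≤ ∑ b ∈ B, splitDeg G A U b := by
  set W := {b ∈ B | degInto G b (A \ U) < degInto G b U} with hW
  have hWB : W ⊆ B := filter_subset _ _
  have hsum : ∑ b ∈ B, splitDeg G A U b =
      ∑ a ∈ A \ U, degInto G a W + ∑ a ∈ U, degInto G a (B \ W) := by
    rw [sum_splitDeg_eq, ← hW, filter_not, ← hW, sum_degInto_comm, sum_degInto_comm (Y := U)]
  have hnonneg (X Y : Finset V) : 0 ≤ ∑ a ∈ X, degInto G a Y :=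
    sum_nonneg fun a _ ↦ degInto_nonneg a
  have hUle : (#U : ℝ) ≤ #(A \ U) := by
    rw [Nat.cast_le, card_sdiff_of_subset hU]
    omega
  have hμ : 0 ≤ μ := (mul_nonneg hΛ hτ).trans hΛμ
  have hfew {X W' : Finset V} (hX : X ⊆ A) (hW' : W' ⊆ B) (hUX : (#U : ℝ) ≤ #X)
      (hcard : (#W' : ℝ) ≤ τ * #U) : β * τ * #U ≤ ∑ a ∈ X, degInto G a (B \ W') :=
    calc β * τ * #U ≤ μ * #X := by gcongr
      _ ≤ _ := mul_card_le_sum_degInto_sdiff hX hW' hΛ hlow hup hΛμ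
        (hcard.trans (by gcongr))
  by_cases hsmall : (#W : ℝ) ≤ τ * #U
  · linarith [hfew hU hWB le_rfl hsmall, hnonneg (A \ U) W]
  by_cases hsmall' : (#(B \ W) : ℝ) ≤ τ * #U
  · have := hfew (sdiff_subset (t := U)) sdiff_subset hUle hsmall'
    rw [Finset.sdiff_sdiff_eq_self hWB] at this
    linarith [hnonneg U (B \ W)]
  calc β * τ * #U = β * (τ * #U) := mul_assoc _ _ _
    _ ≤ β * min (#W : ℝ) #(B \ W) := by
        gcongr
        exact le_min (not_le.1 hsmall).le (not_le.1 hsmall').le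
    _ ≤ ∑ a ∈ A, splitDeg G B W a := hcut W hWB
    _ ≤ ∑ b ∈ B, splitDeg G A U b := by
        rw [hsum, ← sum_sdiff hU]
        exact add_le_add (sum_le_sum fun a _ ↦ min_le_left _ _)
          (sum_le_sum fun a _ ↦ min_le_right _ _)

lemma _root_.IsBipartition.symm {A B : Set V} (h : IsBipartition G A B) : IsBipartition G B A :=
  ⟨h.1.symm, by rw [Set.union_comm]; exact h.2.1, fun u v huv ↦ (h.2.2 u v huv).symm⟩

lemma _root_.IsBipartition.degInto_inter (h : IsBipartition G (A : Set V) B) {a : V}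
    (ha : a ∈ A) (U : Finset V) : degInto G a (B ∩ U) = degInto G a U := by
  rw [degInto, degInto, Nat.cast_inj]
  congr 1
  ext v
  have hadj := h.2.2 a v
  have hdisj := disjoint_left.1 (disjoint_coe.1 h.1) ha
  simp only [mem_filter, mem_inter, mem_coe] at *
  tauto

end Cut

section Expander

variable {V : Type*} [Fintype V] {G : SimpleGraph V} {A B U W : Finset V} {β ε s : ℝ}

/-- Deleting all edges that leave `U` would destroy its external neighbourhood, so there are more
than `s * #U` of them. -/
theorem _root_.IsExpander.mul_card_le_sum_degInto_compl (h : IsExpander (Fintype.card V) G ε s)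
    (hε : 0 < ε) (hlog : 0 < Real.logb 2 (Fintype.card V)) (hU : U.Nonempty)
    (hUV : (#U : ℝ) ≤ 2 / 3 * Fintype.card V) :
    s * #U ≤ ∑ u ∈ U, degInto G u Uᶜ := by
  set P := {p ∈ U ×ˢ Uᶜ | G.Adj p.1 p.2}
  set F := P.image fun p ↦ s(p.1, p.2)
  have hFedge : (F : Set (Sym2 V)) ⊆ G.edgeSet := by
    intro e he
    obtain ⟨p, hp, rfl⟩ := mem_image.1 (mem_coe.1 he)
    exact (mem_filter.1 hp).2
  have hcard : (#P : ℝ) = ∑ u ∈ U, degInto G u Uᶜ := by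
    simp only [P, degInto, card_filter, sum_product, Nat.cast_sum]
  have hnbhd : extNbhd (G.deleteEdges (F : Set (Sym2 V))) (U : Set V) = ∅ := by
    refine Set.eq_empty_of_forall_notMem fun v ⟨hv, u, hu, huv⟩ ↦ ?_
    rw [SimpleGraph.deleteEdges_adj] at huv
    exact huv.2 (mem_coe.2 (mem_image.2 ⟨(u, v), mem_filter.2
      ⟨mem_product.2 ⟨hu, mem_compl.2 hv⟩, huv.1⟩, rfl⟩))
  by_contra! hfew
  have hexp := h (U : Set V) F hFedge (by rw [Set.ncard_coe_finset]; exact hU.card_pos)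
    (by rwa [Set.ncard_coe_finset]) (by
      rw [Set.ncard_coe_finset, Set.ncard_coe_finset]
      exact (Nat.cast_le.2 card_image_le).trans (hcard.trans_lt hfew).le)
  rw [hnbhd, Set.ncard_empty, Nat.cast_zero, Set.ncard_coe_finset] at hexp
  have : (0 : ℝ) < #U := Nat.cast_pos.2 hU.card_pos
  have : 0 < ε * #U / Real.logb 2 (Fintype.card V) ^ 2 := by positivity
  linarith

lemma _root_.IsBipartition.compl_eq (h : IsBipartition G (A : Set V) B) : Aᶜ = B := by
  have hunion : A ∪ B = univ := mod_cast h.2.1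
  exact (IsCompl.of_eq (disjoint_iff.1 (disjoint_coe.1 h.1)) hunion).compl_eq

lemma _root_.IsBipartition.sum_degInto_compl (h : IsBipartition G (A : Set V) B) (W : Finset V) :
    ∑ u ∈ W, degInto G u Wᶜ =
      ∑ a ∈ A ∩ W, degInto G a (B \ W) + ∑ a ∈ A \ W, degInto G a (B ∩ W) := by
  have hright : ∑ u ∈ W \ A, degInto G u Wᶜ = ∑ a ∈ A \ W, degInto G a (B ∩ W) := by
    rw [sum_degInto_comm (X := A \ W), inter_comm, ← h.compl_eq, ← sdiff_eq_inter_compl]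
    refine sum_congr rfl fun b hb ↦ ?_
    rw [← h.symm.degInto_inter (by simpa [← h.compl_eq] using (mem_sdiff.1 hb).2),
      sdiff_eq_inter_compl]
  have hleft : ∑ u ∈ A ∩ W, degInto G u Wᶜ = ∑ a ∈ A ∩ W, degInto G a (B \ W) :=
    sum_congr rfl fun a ha ↦ by
      rw [← h.degInto_inter (mem_inter.1 ha).1, sdiff_eq_inter_compl]
  rw [← hleft, ← hright, inter_comm, sum_inter_add_sum_sdiff]

/-- Move every vertex of `A` to the part of the cut `(W, B \ W)` containing most of its neighbours:
the number of edges of the resulting cut of the whole graph is the sum on the right. -/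
theorem _root_.IsBipartition.mul_min_card_le_sum_splitDeg (h : IsBipartition G (A : Set V) B)
    (hβ : 0 ≤ β)
    (hexp : ∀ U : Finset V, U.Nonempty → (#U : ℝ) ≤ 2 / 3 * Fintype.card V →
      β * #U ≤ ∑ u ∈ U, degInto G u Uᶜ) (hW : W ⊆ B) :
    β * min (#W : ℝ) #(B \ W) ≤ ∑ a ∈ A, splitDeg G B W a := by
  set P := {a ∈ A | degInto G a (B \ W) < degInto G a W} with hP
  set T := W ∪ P with hT
  have hdisj := disjoint_coe.1 h.1
  have hPA : P ⊆ A := filter_subset _ _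
  have hBP : Disjoint B P := hdisj.symm.mono_right hPA
  have hAT : A ∩ T = P := by grind [disjoint_left]
  have hBT : B ∩ T = W := by grind [disjoint_left]
  have hcut : ∑ u ∈ T, degInto G u Tᶜ = ∑ a ∈ A, splitDeg G B W a := by
    rw [h.sum_degInto_compl, sum_splitDeg_eq, filter_not, ← hP, ← sdiff_inter_self_left A, hAT,
      ← sdiff_inter_self_left B, hBT]
  have hcut' : ∑ u ∈ Tᶜ, degInto G u Tᶜᶜ = ∑ a ∈ A, splitDeg G B W a := by
    rw [compl_compl, ← hcut, sum_degInto_comm]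
  have hbound {U : Finset V} (hU : (#U : ℝ) ≤ 2 / 3 * Fintype.card V)
      (hUsum : ∑ u ∈ U, degInto G u Uᶜ = ∑ a ∈ A, splitDeg G B W a) :
      β * #U ≤ ∑ a ∈ A, splitDeg G B W a := by
    rcases U.eq_empty_or_nonempty with rfl | hne
    · simpa using sum_nonneg fun a (_ : a ∈ A) ↦ splitDeg_nonneg a
    · exact hUsum ▸ hexp U hne hU
  have hWT : (#W : ℝ) ≤ #T := Nat.cast_le.2 (card_le_card subset_union_left)
  have hWT' : (#(B \ W) : ℝ) ≤ #Tᶜ := Nat.cast_le.2 (card_le_card fun v hv ↦ by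
    rw [mem_compl, hT, mem_union, not_or]
    exact ⟨(mem_sdiff.1 hv).2, disjoint_left.1 hBP (mem_sdiff.1 hv).1⟩)
  have hcard : (#T : ℝ) + #Tᶜ = Fintype.card V := mod_cast card_add_card_compl T
  by_cases hle : (#T : ℝ) ≤ 2 / 3 * Fintype.card V
  · exact (mul_le_mul_of_nonneg_left ((min_le_left _ _).trans hWT) hβ).trans (hbound hle hcut)
  · refine (mul_le_mul_of_nonneg_left ((min_le_right _ _).trans hWT') hβ).trans (hbound ?_ hcut')
    linarith [(Fintype.card V).cast_nonneg (α := ℝ)]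

end Expander

/-! ### Regularizing the graph -/

section Regularize

variable {V : Type*} [Fintype V] {G : SimpleGraph V} {δ Δ θ L : ℝ}

lemma bernoulli_mem_stdSimplex {p : ℝ} (hp : p ∈ Set.Icc 0 1) :
    (fun b : Bool ↦ if b then p else 1 - p) ∈ stdSimplex ℝ Bool :=
  ⟨Bool.forall_bool.2 ⟨by simpa using hp.2, by simpa using hp.1⟩, by simp⟩

/-- The graph obtained from `G` by keeping the edges that are coloured `true`. -/
def keptSubgraph (G : SimpleGraph V) (ω : Sym2 V → Bool) : SimpleGraph V :=
  G.deleteEdges {e | ω e = false}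

lemma chernoff_keptSubgraph {w : Sym2 V → Bool → ℝ} (hw : ∀ e, w e ∈ stdSimplex ℝ Bool) (v : V)
    {φ : V → ℝ} (hφ : ∀ u, φ u ∈ Set.Icc 0 1) (hθ0 : 0 ≤ θ) (hθ1 : θ ≤ 1) {μ : ℝ}
    (hμ : ∑ u with G.Adj v u, w s(v, u) true * φ u = μ) :
    HoldsWithError w (2 * Real.exp (-(θ ^ 2 * μ / 4))) fun ω ↦
      |∑ u with (keptSubgraph G ω).Adj v u, φ u - μ| ≤ θ * μ := by
  have hinj : Function.Injective fun u : V ↦ s(v, u) := fun _ _ h ↦ Sym2.congr_right.1 h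
  have hmean : ∑ e ∈ ({u | G.Adj v u} : Finset V).image (s(v, ·)),
      (∑ k with k = true, w e k) * Function.extend (s(v, ·)) φ 0 e = μ := by
    rw [sum_image hinj.injOn, ← hμ]
    exact sum_congr rfl fun u _ ↦ by rw [hinj.extend_apply, filter_eq' univ true]; simp
  have hIcc (e : Sym2 V) : Function.extend (s(v, ·)) φ 0 e ∈ Set.Icc (0 : ℝ) 1 := by
    by_cases he : ∃ u, s(v, u) = e
    · obtain ⟨u, rfl⟩ := he
      exact (hinj.extend_apply φ 0 u).symm ▸ hφ u
    · simp [Function.extend_apply' _ _ _ he]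
  have hchernoff := chernoff_weighted hw _ (· = true) (fun e _ ↦ hIcc e)
    (lam := θ / 2) (a := θ * μ) (by linarith) (by linarith) hmean
  refine (hchernoff.mono hw fun ω hω ↦ ?_).mono_error (by ring_nf; rfl)
  rw [filter_image, sum_image hinj.injOn, filter_filter] at hω
  simpa [keptSubgraph, hinj.extend_apply] using hω

/-- Keep the edge `uv` with probability proportional to `1 / (deg u * deg v)`. -/
theorem exists_subgraph_sum_degree_near (hδ : 0 < δ) (hlow : ∀ v, δ ≤ degInto G v univ)
    (hup : ∀ v, degInto G v univ ≤ Δ) (hθ0 : 0 ≤ θ) (hθ1 : θ ≤ 1) (hL : 1 ≤ L)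
    (hV : (Fintype.card V : ℝ) ≤ Real.exp L) (hc : 8 * L * Δ ≤ θ ^ 2 * δ ^ 2) :
    ∃ H ≤ G, ∀ v, |∑ u with H.Adj v u, degInto G u univ - δ ^ 2| ≤ θ * δ ^ 2 := by
  rcases isEmpty_or_nonempty V with hempty | ⟨⟨v₀⟩⟩
  · exact ⟨G, le_rfl, fun v ↦ hempty.elim v⟩
  have hΔ : 0 < Δ := hδ.trans_le ((hlow v₀).trans (hup v₀))
  set g : V → ℝ := fun v ↦ degInto G v univ
  have hg (v) : 0 < g v := hδ.trans_le (hlow v)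
  set p : Sym2 V → ℝ := fun e ↦ δ ^ 2 / (e.map g).mul with hp
  have hpIcc (e) : p e ∈ Set.Icc 0 1 := by
    induction e with | _ u v
    simp only [hp, Sym2.map_mk, Sym2.mul_mk]
    refine ⟨div_nonneg (sq_nonneg δ) (mul_pos (hg u) (hg v)).le,
      div_le_one_of_le₀ ?_ (mul_pos (hg u) (hg v)).le⟩
    rw [sq]
    exact mul_le_mul (hlow u) (hlow v) hδ.le (hg u).le
  have hφ (u) : g u / Δ ∈ Set.Icc (0 : ℝ) 1 :=
    ⟨div_nonneg (hg u).le hΔ.le, div_le_one_of_le₀ (hup u) hΔ.le⟩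
  have hmean (v) : ∑ u with G.Adj v u, p s(v, u) * (g u / Δ) = δ ^ 2 / Δ := by
    have hterm (u) : p s(v, u) * (g u / Δ) = δ ^ 2 / (g v * Δ) := by
      have := (hg u).ne'
      simp only [hp, Sym2.map_mk, Sym2.mul_mk]
      field_simp
    have hgv := (hg v).ne'
    simp only [hterm, sum_const, nsmul_eq_mul]
    change g v * _ = _
    field_simp
  have hw (e) := bernoulli_mem_stdSimplex (hpIcc e)
  obtain ⟨ω, hω⟩ := (HoldsWithError.forall_mem hw univ fun v _ ↦
    chernoff_keptSubgraph hw v hφ hθ0 hθ1 (hmean v)).exists_colouring hw (by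
      have hexponent : 2 * L ≤ θ ^ 2 * (δ ^ 2 / Δ) / 4 := by
        rw [← mul_div_assoc, div_div, le_div_iff₀ (by positivity)]
        linarith
      calc #univ * (2 * Real.exp (-(θ ^ 2 * (δ ^ 2 / Δ) / 4)))
          ≤ Real.exp L * (2 * Real.exp (-(2 * L))) := by rw [card_univ]; gcongr
        _ = 2 * Real.exp (-L) := by rw [mul_left_comm, ← Real.exp_add]; ring_nf
        _ < 1 := by linarith [exp_neg_le hL])
  refine ⟨keptSubgraph G ω, SimpleGraph.deleteEdges_le _, fun v ↦ ?_⟩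
  have hv := mul_le_mul_of_nonneg_left (hω v (mem_univ v)) hΔ.le
  rw [← abs_of_pos hΔ, ← abs_mul, abs_of_pos hΔ, ← sum_div, mul_sub, mul_div_cancel₀ _ hΔ.ne',
    mul_div_cancel₀ _ hΔ.ne', mul_left_comm, mul_div_cancel₀ _ hΔ.ne'] at hv
  exact hv

end Regularize

/-! ### Colouring one side of the bipartition -/

section Colour

/-- The colours for one side of the bipartition: `none` discards a vertex, while `some (i, o)` makes
it available for the `i`-th connecting set, either in its layer `j` if `o = some j` or in a reserve
used to adjust the size of the set if `o = none`. -/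
abbrev Colour (ι κ : Type*) := Option (ι × Option κ)

variable {V ι κ : Type*} {G H : SimpleGraph V} {X F : Finset V} {ω : V → Colour ι κ}

/-- The vertices of `X` that belong to the layer `j` of the `i`-th connecting set. -/
noncomputable def layer (X : Finset V) (ω : V → Colour ι κ) (i : ι) (j : κ) : Finset V :=
  {x ∈ X | ω x = some (i, some j)}

/-- The colours of the vertices that must be placed in the `i`-th connecting set. -/
def IsCoreColour (i : ι) (c : Colour ι κ) : Prop := ∃ j, c = some (i, some j)

/-- The colours of the vertices that may be placed in the `i`-th connecting set. -/
def IsHullColour (i : ι) (c : Colour ι κ) : Prop := ∃ o, c = some (i, o)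

/-- The vertices of `X` that must be placed in the `i`-th connecting set. -/
noncomputable def core (X : Finset V) (ω : V → Colour ι κ) (i : ι) : Finset V :=
  {x ∈ X | IsCoreColour i (ω x)}

/-- The vertices of `X` that may be placed in the `i`-th connecting set. -/
noncomputable def hull (X : Finset V) (ω : V → Colour ι κ) (i : ι) : Finset V :=
  {x ∈ X | IsHullColour i (ω x)}

lemma layer_subset (i : ι) (j : κ) : layer X ω i j ⊆ X := filter_subset _ _

lemma hull_subset (i : ι) : hull X ω i ⊆ X := filter_subset _ _

lemma layer_subset_core (i : ι) (j : κ) : layer X ω i j ⊆ core X ω i :=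
  monotone_filter_right X fun _ _ h ↦ ⟨j, h⟩

lemma core_subset_hull (i : ι) : core X ω i ⊆ hull X ω i :=
  monotone_filter_right X fun _ _ ⟨j, h⟩ ↦ ⟨some j, h⟩

lemma disjoint_layer (i : ι) {j j' : κ} (h : j ≠ j') :
    Disjoint (layer X ω i j) (layer X ω i j') :=
  disjoint_filter.2 fun _ _ hj hj' ↦ h (by simpa using hj.symm.trans hj')

lemma disjoint_hull {i i' : ι} (h : i ≠ i') : Disjoint (hull X ω i) (hull X ω i') :=
  disjoint_filter.2 <| by
    rintro _ _ ⟨_, hi⟩ ⟨_, hi'⟩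
    exact h (by simpa using congr_arg (Option.map Prod.fst) (hi.symm.trans hi'))

variable [Fintype ι] [Fintype κ] {p : ι → ℝ} {ψ : V → ℝ} {θ : ℝ}

/-- The probability that the vertex `v` receives a given colour. Layers get slightly less and hulls
slightly more than the share `p i * ψ v`, which leaves room for the random fluctuations. -/
noncomputable def colourWeight (p : ι → ℝ) (ψ : V → ℝ) (θ : ℝ) (v : V) : Colour ι κ → ℝ
  | none => 1 - (1 + 2 * θ) * (∑ i, p i) * ψ v
  | some (i, none) => 3 * θ * p i * ψ v
  | some (i, some _) => (1 - θ) * p i / Fintype.card κ * ψ v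

lemma sum_colour (f : Colour ι κ → ℝ) :
    ∑ c, f c = f none + ∑ i, (f (some (i, none)) + ∑ j, f (some (i, some j))) := by
  simp only [Fintype.sum_option, Fintype.sum_prod_type]

lemma sum_colourWeight_layer (i : ι) (j : κ) (v : V) :
    ∑ c with c = some (i, some j), colourWeight p ψ θ v c =
      (1 - θ) * p i / Fintype.card κ * ψ v := by
  simp [filter_eq', colourWeight]

variable [Nonempty κ]

lemma sum_colourWeight_core (i : ι) (v : V) :
    ∑ c : Colour ι κ with IsCoreColour i c, colourWeight p ψ θ v c =
      (1 - θ) * p i * ψ v := by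
  have hκ : (Fintype.card κ : ℝ) ≠ 0 := Nat.cast_ne_zero.2 Fintype.card_ne_zero
  calc _ = Fintype.card κ * ((1 - θ) * p i / Fintype.card κ * ψ v) := by
        rw [sum_filter, sum_colour,
          sum_eq_single i (by simp +contextual [IsCoreColour, eq_comm]) (by simp)]
        simp [IsCoreColour, colourWeight]
    _ = _ := by field_simp

lemma sum_colourWeight_hull (i : ι) (v : V) :
    ∑ c : Colour ι κ with IsHullColour i c, colourWeight p ψ θ v c =
      (1 + 2 * θ) * p i * ψ v := by
  have hκ : (Fintype.card κ : ℝ) ≠ 0 := Nat.cast_ne_zero.2 Fintype.card_ne_zero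
  calc _ = 3 * θ * p i * ψ v + Fintype.card κ * ((1 - θ) * p i / Fintype.card κ * ψ v) := by
        rw [sum_filter, sum_colour,
          sum_eq_single i (by simp +contextual [IsHullColour, eq_comm]) (by simp)]
        simp [IsHullColour, colourWeight]
    _ = _ := by field_simp; ring

lemma colourWeight_mem_stdSimplex (hθ0 : 0 ≤ θ) (hθ1 : θ ≤ 1) (hp : ∀ i, 0 ≤ p i)
    {v : V} (hψ : 0 ≤ ψ v) (hsum : (1 + 2 * θ) * (∑ i, p i) * ψ v ≤ 1) :
    colourWeight (κ := κ) p ψ θ v ∈ stdSimplex ℝ (Colour ι κ) := by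
  have hκ : (Fintype.card κ : ℝ) ≠ 0 := Nat.cast_ne_zero.2 Fintype.card_ne_zero
  refine ⟨?_, ?_⟩
  · have := sub_nonneg.2 hθ1
    rintro (_ | ⟨i, _ | j⟩)
    · exact sub_nonneg.2 hsum
    all_goals
      have := hp i
      simp only [colourWeight]
      positivity
  · have hhull (i : ι) : 3 * θ * p i * ψ v +
        Fintype.card κ * ((1 - θ) * p i / Fintype.card κ * ψ v) = (1 + 2 * θ) * p i * ψ v := by
      field_simp
      ring
    simp only [sum_colour, colourWeight, sum_const, card_univ, nsmul_eq_mul, hhull, ← sum_mul,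
      ← mul_sum]
    ring

end Colour

section Typical

variable {V ι κ : Type*} {G H : SimpleGraph V} {X F : Finset V}
  {ψ : V → ℝ} {p : ι → ℝ} {θ μ Λ ν β N L a b ρ : ℝ}

lemma degInto_filter (u : V) (T : V → Prop) [DecidablePred T] :
    degInto G u {x ∈ X | T x} = #{x ∈ {x ∈ X | G.Adj u x} | T x} := by
  simp only [degInto, filter_comm]

variable [Fintype V]

lemma card_colourClass_mem_Icc {κ : Type*} [Fintype κ] {w : V → κ → ℝ}
    (hw : ∀ v, w v ∈ stdSimplex ℝ κ) (T : κ → Prop) [DecidablePred T]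
    (hT : ∀ v, ∑ k with T k, w v k = ρ * ψ v)
    (hρ : 0 ≤ ρ) (hF : ∑ v ∈ F, ψ v ∈ Set.Icc a b) (hθ0 : 0 ≤ θ) (hθ1 : θ ≤ 1)
    (hL : 16 * L ≤ θ ^ 2 * (ρ * a)) :
    HoldsWithError w (2 * Real.exp (-(4 * L))) fun ω ↦
      (#{x ∈ F | T (ω x)} : ℝ) ∈ Set.Icc ((1 - θ) * (ρ * a)) ((1 + θ) * (ρ * b)) := by
  have hmean : ∑ x ∈ F, ∑ k with T k, w x k = ρ * ∑ v ∈ F, ψ v := by simp only [hT, mul_sum]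
  have hlow : ρ * a ≤ ρ * ∑ v ∈ F, ψ v := by gcongr; exact hF.1
  have hup : ρ * ∑ v ∈ F, ψ v ≤ ρ * b := by gcongr; exact hF.2
  refine ((chernoff_card_relative hw F T hθ0 hθ1 hmean).mono hw fun ω hω ↦ ?_).mono_error ?_
  · rw [abs_le] at hω
    constructor
    · linarith [mul_le_mul_of_nonneg_left hlow (sub_nonneg.2 hθ1)]
    · linarith [mul_le_mul_of_nonneg_left hup (by linarith : 0 ≤ 1 + θ)]
  · gcongr
    linarith [mul_le_mul_of_nonneg_left hlow (sq_nonneg θ)]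

variable [Fintype κ]

/-- The random colouring `ω` of the side `X` behaves as expected with respect to the `i`-th
connecting set, which is to receive the proportion `p` of the `N` units of weight of `X`.
The neighbourhoods of vertices outside `X` have weight about `μ` in `H`, and between `μ` and `Λ` in
`G`; the last field says that cuts of `Y j` with many split edges towards `X` remain so towards the
layer `j`. -/
structure IsTypical (G H : SimpleGraph V) (X : Finset V) (θ μ Λ ν β N p : ℝ) (Y : κ → Finset V)
    (ω : V → Colour ι κ) (i : ι) : Prop where
  card_core_le : (#(core X ω i) : ℝ) ≤ p * N
  le_card_hull : p * N ≤ #(hull X ω i)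
  le_degInto_core : ∀ u ∉ X, (1 - θ) ^ 3 * (p * μ) ≤ degInto H u (core X ω i)
  degInto_hull_le : ∀ u ∉ X, degInto H u (hull X ω i) ≤ (1 + θ) ^ 2 * (1 + 2 * θ) * (p * μ)
  degInto_hull_le_two_mul : ∀ u ∉ X, degInto G u (hull X ω i) ≤ 2 * p * Λ
  le_degInto_layer : ∀ u ∉ X, ∀ j, p * μ / (4 * Fintype.card κ) ≤ degInto G u (layer X ω i j)
  degInto_layer_le : ∀ u ∉ X, ∀ j, degInto G u (layer X ω i j) ≤ 2 * p * Λ / Fintype.card κ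
  le_sum_splitDeg : ∀ j, ∀ U ⊆ Y j, β * #U ≤ ∑ x ∈ X, splitDeg G (Y j) U x →
    p * ν / (2 * Fintype.card κ) / 8 * (β * #U) ≤ ∑ x ∈ layer X ω i j, splitDeg G (Y j) U x

variable [Fintype ι] [Nonempty κ]

section Events

variable (hw : ∀ v, colourWeight p ψ θ v ∈ stdSimplex ℝ (Colour ι κ)) {i : ι} (hp : 0 ≤ p i)
  (hμ : 0 ≤ μ) (hθ0 : 0 ≤ θ) (hθ1 : θ ≤ 1 / 10)

section Concentration

variable (hL : 32 * L ≤ θ ^ 2 * (p i * μ))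
include hw hp hμ hθ0 hθ1 hL

lemma card_core_mem_Icc (ha : (1 - θ) * μ ≤ a) (hF : ∑ v ∈ F, ψ v ∈ Set.Icc a b) :
    HoldsWithError (colourWeight p ψ θ) (2 * Real.exp (-(4 * L))) fun ω : V → Colour ι κ ↦
      (#(core F ω i) : ℝ) ∈ Set.Icc ((1 - θ) * ((1 - θ) * p i * a))
        ((1 + θ) * ((1 - θ) * p i * b)) := by
  have hmean : p i * μ / 2 ≤ (1 - θ) * p i * a :=
    calc p i * μ / 2 = 1 / 2 * (p i * μ) := by ring
      _ ≤ (1 - θ) * (1 - θ) * (p i * μ) := by gcongr; nlinarith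
      _ = (1 - θ) * p i * ((1 - θ) * μ) := by ring
      _ ≤ (1 - θ) * p i * a := mul_le_mul_of_nonneg_left ha (mul_nonneg (by linarith) hp)
  refine card_colourClass_mem_Icc hw (IsCoreColour i) (sum_colourWeight_core i)
    (mul_nonneg (by linarith) hp) hF hθ0 (by linarith) ?_
  linarith [mul_le_mul_of_nonneg_left hmean (sq_nonneg θ)]

lemma card_hull_mem_Icc (ha : (1 - θ) * μ ≤ a) (hF : ∑ v ∈ F, ψ v ∈ Set.Icc a b) :
    HoldsWithError (colourWeight p ψ θ) (2 * Real.exp (-(4 * L))) fun ω : V → Colour ι κ ↦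
      (#(hull F ω i) : ℝ) ∈ Set.Icc ((1 - θ) * ((1 + 2 * θ) * p i * a))
        ((1 + θ) * ((1 + 2 * θ) * p i * b)) := by
  have hmean : p i * μ / 2 ≤ (1 + 2 * θ) * p i * a :=
    calc p i * μ / 2 = 1 / 2 * (p i * μ) := by ring
      _ ≤ (1 + 2 * θ) * (1 - θ) * (p i * μ) := by gcongr; nlinarith
      _ = (1 + 2 * θ) * p i * ((1 - θ) * μ) := by ring
      _ ≤ (1 + 2 * θ) * p i * a := by gcongr
  refine card_colourClass_mem_Icc hw (IsHullColour i) (sum_colourWeight_hull i) (by positivity)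
    hF hθ0 (by linarith) ?_
  linarith [mul_le_mul_of_nonneg_left hmean (sq_nonneg θ)]

lemma card_core_le_and_le_card_hull (hX : ∑ x ∈ X, ψ x = N) (hμN : μ ≤ N) :
    HoldsWithError (colourWeight p ψ θ) (4 * Real.exp (-(4 * L))) fun ω : V → Colour ι κ ↦
      (#(core X ω i) : ℝ) ≤ p i * N ∧ p i * N ≤ #(hull X ω i) := by
  have hθμ : (1 - θ) * μ ≤ N := by nlinarith
  have hpN : 0 ≤ p i * N := mul_nonneg hp (hμ.trans hμN)
  have hXN : ∑ x ∈ X, ψ x ∈ Set.Icc N N := by simp [hX]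
  refine (((card_core_mem_Icc hw hp hμ hθ0 hθ1 hL hθμ hXN).and hw
    (card_hull_mem_Icc hw hp hμ hθ0 hθ1 hL hθμ hXN)).mono hw ?_).mono_error (by linarith)
  rintro ω ⟨⟨-, hcore⟩, ⟨hhull, -⟩⟩
  constructor
  · calc _ ≤ _ := hcore
      _ = (1 - θ ^ 2) * (p i * N) := by ring
      _ ≤ p i * N := mul_le_of_le_one_left hpN (by linarith [sq_nonneg θ])
  · calc p i * N ≤ (1 - θ) * (1 + 2 * θ) * (p i * N) := le_mul_of_one_le_left hpN (by nlinarith)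
      _ = (1 - θ) * ((1 + 2 * θ) * p i * N) := by ring
      _ ≤ _ := hhull

lemma degInto_core_hull_bounds {u : V}
    (hH : ∑ v ∈ X with H.Adj u v, ψ v ∈ Set.Icc ((1 - θ) * μ) ((1 + θ) * μ))
    (hG : ∑ v ∈ X with G.Adj u v, ψ v ∈ Set.Icc μ Λ) :
    HoldsWithError (colourWeight p ψ θ) (6 * Real.exp (-(4 * L))) fun ω : V → Colour ι κ ↦
      (1 - θ) ^ 3 * (p i * μ) ≤ degInto H u (core X ω i) ∧
      degInto H u (hull X ω i) ≤ (1 + θ) ^ 2 * (1 + 2 * θ) * (p i * μ) ∧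
      degInto G u (hull X ω i) ≤ 2 * p i * Λ := by
  have hμΛ : μ ≤ Λ := hG.1.trans hG.2
  refine (((card_core_mem_Icc hw hp hμ hθ0 hθ1 hL le_rfl hH).and hw
    ((card_hull_mem_Icc hw hp hμ hθ0 hθ1 hL le_rfl hH).and hw
      (card_hull_mem_Icc hw hp hμ hθ0 hθ1 hL (by nlinarith) hG))).mono hw ?_).mono_error
      (by linarith)
  rintro ω ⟨⟨hcore, -⟩, ⟨-, hhull⟩, ⟨-, hhull'⟩⟩
  simp only [core, hull, degInto_filter] at *
  refine ⟨hcore.trans' (by ring_nf; rfl), hhull.trans (by ring_nf; rfl), hhull'.trans ?_⟩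
  calc (1 + θ) * ((1 + 2 * θ) * p i * Λ) = (1 + θ) * (1 + 2 * θ) * (p i * Λ) := by ring
    _ ≤ 2 * (p i * Λ) := by
      have := hμ.trans hμΛ
      gcongr
      nlinarith
    _ = 2 * p i * Λ := by ring

end Concentration

include hw hp hμ hθ0 hθ1 in
lemma degInto_layer_bounds {u : V} (hL : 128 * L * Fintype.card κ ≤ p i * μ)
    (hG : ∑ v ∈ X with G.Adj u v, ψ v ∈ Set.Icc μ Λ) (j : κ) :
    HoldsWithError (colourWeight p ψ θ) (2 * Real.exp (-(4 * L))) fun ω : V → Colour ι κ ↦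
      p i * μ / (4 * Fintype.card κ) ≤ degInto G u (layer X ω i j) ∧
      degInto G u (layer X ω i j) ≤ 2 * p i * Λ / Fintype.card κ := by
  have hκ : (0 : ℝ) < Fintype.card κ := Nat.cast_pos.2 Fintype.card_pos
  have hΛ : 0 ≤ Λ := hμ.trans (hG.1.trans hG.2)
  have hmean : p i * μ / (2 * Fintype.card κ) ≤ (1 - θ) * p i / Fintype.card κ * μ :=
    calc p i * μ / (2 * Fintype.card κ) = 1 / 2 * (p i * μ / Fintype.card κ) := by field_simp
      _ ≤ (1 - θ) * (p i * μ / Fintype.card κ) := by gcongr; linarith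
      _ = _ := by ring
  have hmean' : (1 - θ) * p i / Fintype.card κ * Λ ≤ p i * Λ / Fintype.card κ :=
    calc (1 - θ) * p i / Fintype.card κ * Λ = (1 - θ) * (p i * Λ / Fintype.card κ) := by ring
      _ ≤ 1 * (p i * Λ / Fintype.card κ) := by gcongr; linarith
      _ = _ := one_mul _
  refine (card_colourClass_mem_Icc hw (· = some (i, some j)) (fun v ↦ ?_)
    (ρ := (1 - θ) * p i / Fintype.card κ)
    (div_nonneg (mul_nonneg (by linarith) hp) hκ.le) hG (θ := 1 / 2) (L := L) (by norm_num)
    (by norm_num) ?_).mono hw ?_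
  · convert sum_colourWeight_layer i j v
  · have : 64 * L ≤ p i * μ / (2 * Fintype.card κ) := by rw [le_div_iff₀ (by positivity)]; linarith
    linarith
  · rintro ω ⟨hlow, hup⟩
    simp only [layer, degInto_filter]
    constructor
    · calc p i * μ / (4 * Fintype.card κ) = (1 - 1 / 2) * (p i * μ / (2 * Fintype.card κ)) := by
            ring
        _ ≤ (1 - 1 / 2) * ((1 - θ) * p i / Fintype.card κ * μ) := by gcongr
        _ ≤ _ := hlow
    · calc _ ≤ (1 + 1 / 2) * ((1 - θ) * p i / Fintype.card κ * Λ) := hup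
        _ ≤ (1 + 1 / 2) * (p i * Λ / Fintype.card κ) := by gcongr
        _ ≤ 2 * (p i * Λ / Fintype.card κ) := by gcongr; norm_num
        _ = _ := by ring

include hw hθ1 in
lemma splitDeg_sum_layer {j : κ} {Y : Finset V} {Δ : ℝ} (hpi : 0 < p i) (hν : 0 < ν)
    (hψ : ∀ x ∈ X, ν ≤ ψ x) (hβ : 0 < β) (hL : 1 ≤ L) (hV : (Fintype.card V : ℝ) ≤ Real.exp L)
    (hΔ : ∀ x ∈ X, degInto G x Y ≤ Δ) (hqβ : p i * ν / (2 * Fintype.card κ) * β ≤ Δ)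
    (hc : 10 ^ 10 * L ^ 4 * Δ ^ 2 ≤ (p i * ν / (2 * Fintype.card κ)) ^ 3 * β ^ 3) :
    HoldsWithError (colourWeight p ψ θ) (8 * Real.exp (-(4 * L))) fun ω : V → Colour ι κ ↦
      ∀ U ⊆ Y, β * #U ≤ ∑ x ∈ X, splitDeg G Y U x →
        p i * ν / (2 * Fintype.card κ) / 8 * (β * #U) ≤ ∑ x ∈ layer X ω i j, splitDeg G Y U x := by
  have : (0 : ℝ) < Fintype.card κ := Nat.cast_pos.2 Fintype.card_pos
  have hq (x : V) (hx : x ∈ X) :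
      p i * ν / (2 * Fintype.card κ) ≤ colourWeight p ψ θ x (some (i, some j)) :=
    calc p i * ν / (2 * Fintype.card κ) = 1 / 2 * (p i / Fintype.card κ * ν) := by field_simp
      _ ≤ (1 - θ) * (p i / Fintype.card κ * ψ x) := by
        gcongr
        · linarith
        · linarith
        · exact hψ x hx
      _ = (1 - θ) * p i / Fintype.card κ * ψ x := by ring
  convert splitDeg_sum_colourClass hw (by positivity) hβ hq hL hV hΔ hqβ hc
  ext
  simp only [layer, mem_filter]

end Events

variable {Y : ι → κ → Finset V} {Δ : ι → ℝ}

lemma exp_error_lt_one (hL : 10 ≤ L) (hV : (Fintype.card V : ℝ) ≤ Real.exp L)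
    (hι : (Fintype.card ι : ℝ) ≤ Real.exp L) (hκ : (Fintype.card κ : ℝ) ≤ Real.exp L) :
    Fintype.card ι * ((4 + Fintype.card V * (6 + Fintype.card κ * 2) + Fintype.card κ * 8) *
      Real.exp (-(4 * L))) < 1 := by
  have hE : 11 ≤ Real.exp L := by linarith [Real.add_one_le_exp L]
  have hexp : Real.exp (-(4 * L)) = (Real.exp L ^ 4)⁻¹ := by
    rw [Real.exp_neg, ← Real.exp_nat_mul, Nat.cast_ofNat]
  rw [hexp, ← mul_assoc, ← div_eq_mul_inv, div_lt_one (by positivity)]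
  calc _ ≤ Real.exp L * (4 + Real.exp L * (6 + Real.exp L * 2) + Real.exp L * 8) := by gcongr
    _ < Real.exp L ^ 4 := by nlinarith [mul_nonneg (sub_nonneg.2 hE) (sub_nonneg.2 hE)]

theorem exists_isTypical (hw : ∀ v, colourWeight p ψ θ v ∈ stdSimplex ℝ (Colour ι κ))
    (hp : ∀ i, 0 < p i) (hμ : 0 ≤ μ) (hθ0 : 0 ≤ θ) (hθ1 : θ ≤ 1 / 10)
    (hX : ∑ x ∈ X, ψ x = N) (hμN : μ ≤ N) (hν : 0 < ν) (hψ : ∀ x ∈ X, ν ≤ ψ x)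
    (hH : ∀ u ∉ X, ∑ v ∈ X with H.Adj u v, ψ v ∈ Set.Icc ((1 - θ) * μ) ((1 + θ) * μ))
    (hG : ∀ u ∉ X, ∑ v ∈ X with G.Adj u v, ψ v ∈ Set.Icc μ Λ)
    (hL : 10 ≤ L) (hV : (Fintype.card V : ℝ) ≤ Real.exp L)
    (hι : (Fintype.card ι : ℝ) ≤ Real.exp L) (hκ : (Fintype.card κ : ℝ) ≤ Real.exp L)
    (hLθ : ∀ i, 32 * L ≤ θ ^ 2 * (p i * μ)) (hLκ : ∀ i, 128 * L * Fintype.card κ ≤ p i * μ)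
    (hβ : 0 < β) (hΔ : ∀ i j, ∀ x ∈ X, degInto G x (Y i j) ≤ Δ i)
    (hqβ : ∀ i, p i * ν / (2 * Fintype.card κ) * β ≤ Δ i)
    (hc : ∀ i, 10 ^ 10 * L ^ 4 * Δ i ^ 2 ≤ (p i * ν / (2 * Fintype.card κ)) ^ 3 * β ^ 3) :
    ∃ ω : V → Colour ι κ, ∀ i, IsTypical G H X θ μ Λ ν β N (p i) (Y i) ω i := by
  have htypical (i : ι) (_ : i ∈ (univ : Finset ι)) := by
    have hcard := card_core_le_and_le_card_hull hw (hp i).le hμ hθ0 hθ1 (hLθ i) hX hμN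
    have hdeg (u : V) (hu : u ∈ Xᶜ) :=
      (degInto_core_hull_bounds hw (hp i).le hμ hθ0 hθ1 (hLθ i) (hH u (mem_compl.1 hu))
        (hG u (mem_compl.1 hu))).and hw (.forall_mem hw univ fun j _ ↦
          degInto_layer_bounds hw (hp i).le hμ hθ0 hθ1 (hLκ i) (hG u (mem_compl.1 hu)) j)
    have hsplit (j : κ) (_ : j ∈ univ) := splitDeg_sum_layer hw hθ1 (j := j) (hp i) hν
      hψ hβ (by linarith) hV (hΔ i j) (hqβ i) (hc i)
    exact (hcard.and hw (.and hw (.forall_mem hw Xᶜ hdeg) (.forall_mem hw univ hsplit)))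
  obtain ⟨ω, hω⟩ := (HoldsWithError.forall_mem hw univ htypical).exists_colouring hw (by
    refine lt_of_le_of_lt ?_ (exp_error_lt_one (ι := ι) (κ := κ) hL hV hι hκ)
    rw [card_univ, card_univ]
    have hXc : (#Xᶜ : ℝ) ≤ Fintype.card V := mod_cast card_le_univ _
    calc _ = Fintype.card ι * ((4 + #Xᶜ * (6 + Fintype.card κ * 2) + Fintype.card κ * 8) *
          Real.exp (-(4 * L))) := by ring
      _ ≤ _ := by gcongr)
  refine ⟨ω, fun i ↦ ?_⟩
  obtain ⟨⟨hcore, hhull⟩, hdeg, hsplit⟩ := hω i (mem_univ i)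
  exact {
    card_core_le := hcore
    le_card_hull := hhull
    le_degInto_core u hu := (hdeg u (mem_compl.2 hu)).1.1
    degInto_hull_le u hu := (hdeg u (mem_compl.2 hu)).1.2.1
    degInto_hull_le_two_mul u hu := (hdeg u (mem_compl.2 hu)).1.2.2
    le_degInto_layer u hu j := ((hdeg u (mem_compl.2 hu)).2 j (mem_univ j)).1
    degInto_layer_le u hu j := ((hdeg u (mem_compl.2 hu)).2 j (mem_univ j)).2
    le_sum_splitDeg j := hsplit j (mem_univ j) }

end Typical

/-! ### The parameters of the construction -/

/-- The relations between the parameters of the construction: `L` is the logarithm of the number of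
vertices, `d = y ^ 30` is the average degree, `p` is the density of a connecting set, and `M` is the
number of its layers. -/
structure IsScale (L y d p M : ℝ) : Prop where
  le_L : 10 ^ 50 ≤ L
  pow_le_y : L ^ 100 ≤ y
  d_eq : d = y ^ 30
  p_pos : 0 < p
  p_le_one : p ≤ 1
  one_le_p_mul : 1 ≤ p * y ^ 3
  one_le_M : 1 ≤ M
  M_le : M ≤ 2 * L

namespace IsScale

variable {L y d p M : ℝ} (h : IsScale L y d p M)
include h

lemma L_pos : 0 < L := h.le_L.trans_lt' (by positivity)

lemma one_le_L : 1 ≤ L := h.le_L.trans' (by norm_num)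

lemma M_pos : 0 < M := zero_lt_one.trans_le h.one_le_M

lemma const_mul_pow_le {k : ℕ} (hk : k ≤ 99) : 10 ^ 50 * L ^ k ≤ y :=
  calc 10 ^ 50 * L ^ k ≤ L * L ^ 99 := by
        have := h.L_pos
        gcongr
        · exact h.le_L
        · exact h.one_le_L
    _ = L ^ 100 := by ring
    _ ≤ y := h.pow_le_y

lemma one_le_y : 1 ≤ y := by linarith [h.const_mul_pow_le (k := 0) (by norm_num)]

lemma y_pos : 0 < y := zero_lt_one.trans_le h.one_le_y

lemma d_pos : 0 < d := h.d_eq ▸ pow_pos h.y_pos 30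

lemma pow_le_p_mul_d : y ^ 27 ≤ p * d := by
  have := h.y_pos
  calc y ^ 27 = 1 * y ^ 27 := (one_mul _).symm
    _ ≤ p * y ^ 3 * y ^ 27 := by gcongr; exact h.one_le_p_mul
    _ = p * d := by rw [h.d_eq]; ring

lemma const_mul_pow_le_p_mul_d {k : ℕ} (hk : k ≤ 99) : 10 ^ 50 * L ^ k ≤ p * d :=
  (h.const_mul_pow_le hk).trans ((le_self_pow₀ h.one_le_y (by norm_num)).trans h.pow_le_p_mul_d)

lemma regularize_condition : 8 * L * (18 * d) ≤ (1 / (100 * y ^ 10)) ^ 2 * (d / 18) ^ 2 := by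
  have := h.y_pos
  have hLy : 10 ^ 50 * L ≤ y ^ 10 := by
    simpa using (h.const_mul_pow_le (k := 1) (by norm_num)).trans
      (le_self_pow₀ h.one_le_y (by norm_num : 10 ≠ 0))
  calc 8 * L * (18 * d) ≤ y ^ 10 / (324 * 10 ^ 4) * d := by
        have := h.d_pos
        have := h.L_pos
        rw [← mul_assoc]
        gcongr
        linarith
    _ = _ := by rw [h.d_eq]; field_simp; norm_num

lemma core_condition : 32 * L ≤ (1 / (100 * y ^ 10)) ^ 2 * (p * (d / 162)) := by
  have := h.y_pos
  have hLy : 10 ^ 50 * L ≤ y ^ 7 := by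
    simpa using (h.const_mul_pow_le (k := 1) (by norm_num)).trans
      (le_self_pow₀ h.one_le_y (by norm_num : 7 ≠ 0))
  calc 32 * L ≤ y ^ 27 / (162 * 10 ^ 4 * y ^ 20) := by
        rw [le_div_iff₀ (by positivity)]
        nlinarith [mul_le_mul_of_nonneg_right hLy (pow_nonneg this.le 20),
          mul_nonneg h.L_pos.le (pow_nonneg this.le 20)]
    _ ≤ p * d / (162 * 10 ^ 4 * y ^ 20) := by gcongr; exact h.pow_le_p_mul_d
    _ = _ := by ring

lemma layer_condition : 128 * L * M ≤ p * (d / 162) := by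
  have := h.L_pos
  calc 128 * L * M ≤ 128 * L * (2 * L) := by gcongr; exact h.M_le
    _ ≤ 10 ^ 50 * L ^ 2 / 162 := by nlinarith
    _ ≤ p * d / 162 := by gcongr ?_ / 162; exact h.const_mul_pow_le_p_mul_d (by norm_num)
    _ = p * (d / 162) := by ring

lemma split_condition_left :
    10 ^ 10 * L ^ 4 * (18 * d) ^ 2 ≤ (p * (1 / 9) / (2 * M)) ^ 3 * (d / L ^ 2) ^ 3 := by
  have := h.L_pos
  have := h.M_pos
  have := h.p_pos
  have := h.d_pos
  have := h.y_pos
  have hLy : 10 ^ 50 * L ^ 13 ≤ y ^ 21 := (h.const_mul_pow_le (by norm_num)).trans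
      (le_self_pow₀ h.one_le_y (by norm_num : 21 ≠ 0))
  have hpd : 10 ^ 50 * L ^ 13 ≤ p ^ 3 * d :=
    calc 10 ^ 50 * L ^ 13 ≤ 1 ^ 3 * y ^ 21 := by linarith
      _ ≤ (p * y ^ 3) ^ 3 * y ^ 21 := by gcongr; exact h.one_le_p_mul
      _ = p ^ 3 * d := by rw [h.d_eq]; ring
  calc 10 ^ 10 * L ^ 4 * (18 * d) ^ 2
      ≤ 10 ^ 50 * L ^ 13 * d ^ 2 / (5832 * (2 * L) ^ 3 * L ^ 6) := by
        rw [le_div_iff₀ (by positivity)]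
        nlinarith [show 0 < L ^ 13 * d ^ 2 by positivity]
    _ ≤ p ^ 3 * d * d ^ 2 / (5832 * M ^ 3 * L ^ 6) := by gcongr; exact h.M_le
    _ = _ := by field_simp; ring

lemma split_condition_right :
    10 ^ 10 * L ^ 4 * (2 * p * (648 * d) / M) ^ 2 ≤
      (p * (1 / 9) / (2 * M)) ^ 3 * (d / (10 ^ 7 * L ^ 2)) ^ 3 := by
  have := h.L_pos
  have := h.M_pos
  have := h.p_pos
  have := h.d_pos
  calc 10 ^ 10 * L ^ 4 * (2 * p * (648 * d) / M) ^ 2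
      = (p * d) ^ 2 / M ^ 3 * (10 ^ 10 * 1296 ^ 2 * (L ^ 4 * M)) := by field_simp; ring
    _ ≤ (p * d) ^ 2 / M ^ 3 * (10 ^ 10 * 1296 ^ 2 * (L ^ 4 * (2 * L))) := by gcongr; exact h.M_le
    _ = (p * d) ^ 2 / M ^ 3 * (10 ^ 10 * 1296 ^ 2 * 2 * L ^ 11 / L ^ 6) := by field_simp
    _ ≤ (p * d) ^ 2 / M ^ 3 * (p * d / (5832 * 10 ^ 21) / L ^ 6) := by
      gcongr
      rw [le_div_iff₀ (by norm_num)]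
      refine le_trans ?_ (h.const_mul_pow_le_p_mul_d (k := 11) (by norm_num))
      rw [mul_right_comm]
      gcongr
      norm_num
    _ = _ := by ring

lemma connecting_le_layer : p ^ 9 * d / L ^ 76 ≤ p * (d / 162) / (4 * M) := by
  have := h.L_pos
  have := h.M_pos
  have := h.p_pos
  have := h.d_pos
  have hL : 1296 * L ≤ L ^ 76 :=
    calc 1296 * L ≤ L * L := by gcongr; linarith [h.le_L]
      _ = L ^ 2 := by ring
      _ ≤ L ^ 76 := pow_le_pow_right₀ h.one_le_L (by norm_num)
  calc p ^ 9 * d / L ^ 76 ≤ p * d / (1296 * L) := by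
        gcongr
        exact pow_le_of_le_one h.p_pos.le h.p_le_one (by norm_num)
    _ ≤ p * d / (648 * M) := by gcongr p * d / ?_; linarith [h.M_le]
    _ = _ := by field_simp; norm_num

lemma linkage_condition {l : ℝ} (hl : l ≤ L ^ 6) :
    80 * (2 * (l + 1)) * (2 * p * (648 * d) / M) * (p ^ 9 * d / L ^ 76) ≤
      1 / (10 ^ 13 * L ^ 2) * (p * (d / 162) / (4 * M)) ^ 2 := by
  have := h.L_pos
  have := h.M_pos
  have := h.p_pos
  have := h.d_pos
  have hL6 : 1 ≤ L ^ 6 := one_le_pow₀ h.one_le_L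
  have hL10 : 10 ^ 25 * L ^ 9 ≤ L ^ 76 :=
    calc 10 ^ 25 * L ^ 9 ≤ L * L ^ 9 := by gcongr; linarith [h.le_L]
      _ = L ^ 10 := by ring
      _ ≤ L ^ 76 := pow_le_pow_right₀ h.one_le_L (by norm_num)
  calc 80 * (2 * (l + 1)) * (2 * p * (648 * d) / M) * (p ^ 9 * d / L ^ 76)
      ≤ 80 * (2 * (2 * L ^ 6)) * (2 * p * (648 * d) / M) * (p * d / (10 ^ 25 * L ^ 9)) := by
        gcongr
        · linarith
        · exact pow_le_of_le_one h.p_pos.le h.p_le_one (by norm_num)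
    _ = 414720 * (p * d) ^ 2 / (10 ^ 25 * L ^ 3 * M) := by field_simp; norm_num
    _ ≤ (p * d) ^ 2 / (10 ^ 13 * 648 ^ 2 * L ^ 2 * M ^ 2) := by
      rw [div_le_div_iff₀ (by positivity) (by positivity)]
      nlinarith [mul_le_mul_of_nonneg_left h.M_le
        (show 0 ≤ L ^ 2 * M * (p * d) ^ 2 by positivity),
        show 0 < L ^ 3 * M * (p * d) ^ 2 by positivity]
    _ = _ := by field_simp; norm_num

lemma error_pos : 0 < 1 / (100 * y ^ 10) := by
  have := h.y_pos
  positivity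

lemma error_le : 1 / (100 * y ^ 10) ≤ 1 / 10 := by
  have : 1 ≤ y ^ 10 := one_le_pow₀ h.one_le_y
  gcongr
  linarith

lemma layer_share_left_le : p * (1 / 9) / (2 * M) * (d / L ^ 2) ≤ 18 * d := by
  have := h.p_pos
  have := h.d_pos
  calc p * (1 / 9) / (2 * M) * (d / L ^ 2) ≤ 1 * (1 / 9) / (2 * 1) * (d / 1 ^ 2) := by
        gcongr
        exacts [h.p_le_one, h.one_le_M, h.one_le_L]
    _ ≤ 18 * d := by linarith

lemma layer_share_right_le :
    p * (1 / 9) / (2 * M) * (d / (10 ^ 7 * L ^ 2)) ≤ 2 * p * (648 * d) / M := by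
  have := h.p_pos
  have := h.d_pos
  have := h.M_pos
  calc p * (1 / 9) / (2 * M) * (d / (10 ^ 7 * L ^ 2))
      ≤ p * (1 / 9) / (2 * M) * (d / (10 ^ 7 * 1 ^ 2)) := by gcongr; exact h.one_le_L
    _ = p * d / M * (1 / (18 * 10 ^ 7)) := by ring
    _ ≤ p * d / M * 1296 := by gcongr; norm_num
    _ = _ := by ring

lemma transfer_condition_left :
    2 * p * (648 * d) / M * (M / (46656 * p)) ≤ d / 36 := by
  have := h.p_pos
  have := h.M_pos
  refine le_of_eq ?_
  field_simp
  ring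

lemma transfer_eq :
    p * (1 / 9) / (2 * M) / 8 * (d / L ^ 2) * (M / (46656 * p)) = d / (6718464 * L ^ 2) := by
  have := h.p_pos
  have := h.M_pos
  field_simp
  ring

lemma transfer_condition_right :
    p * (1 / 9) / (2 * M) / 8 * (d / L ^ 2) * (M / (46656 * p)) ≤ d / 36 := by
  have := h.d_pos
  rw [h.transfer_eq]
  gcongr
  linarith [one_le_pow₀ h.one_le_L (n := 2)]

lemma le_transfer :
    d / (10 ^ 7 * L ^ 2) ≤ p * (1 / 9) / (2 * M) / 8 * (d / L ^ 2) * (M / (46656 * p)) := by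
  have := h.d_pos
  have := h.L_pos
  rw [h.transfer_eq]
  gcongr
  norm_num

lemma expansion_le :
    1 / (10 ^ 13 * L ^ 2) * (2 * p * (648 * d) / M) ≤
      p * (1 / 9) / (2 * M) / 8 * (d / (10 ^ 7 * L ^ 2)) := by
  have := h.p_pos
  have := h.d_pos
  have := h.M_pos
  have := h.L_pos
  calc 1 / (10 ^ 13 * L ^ 2) * (2 * p * (648 * d) / M)
      = p * d / (M * L ^ 2) * (1296 / 10 ^ 13) := by ring
    _ ≤ p * d / (M * L ^ 2) * (1 / (144 * 10 ^ 7)) :=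
      mul_le_mul_of_nonneg_left (by norm_num) (by positivity)
    _ = _ := by ring

lemma expansion_le_one : 1 / (10 ^ 13 * L ^ 2) ≤ 1 := by
  have := one_le_pow₀ h.one_le_L (n := 2)
  rw [div_le_one (by positivity)]
  linarith

lemma layer_le : p * (d / 162) / (4 * M) ≤ 2 * p * (648 * d) / M := by
  have := h.p_pos
  have := h.d_pos
  have := h.M_pos
  calc p * (d / 162) / (4 * M) = p * d / M * (1 / 648) := by ring
    _ ≤ p * d / M * 1296 := by gcongr; norm_num
    _ = _ := by ring

end IsScale

lemma lt_one_add_pow {x L : ℝ} {R : ℕ} (hx0 : 0 ≤ x) (hx1 : x ≤ 1) (hR : 2 * L < R * x) :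
    Real.exp L < (1 + x) ^ R := by
  have hlog : x / 2 ≤ Real.log (1 + x) :=
    calc x / 2 ≤ x / (1 + x) := by gcongr; linarith
      _ = 1 - (1 + x)⁻¹ := by field_simp; ring
      _ ≤ Real.log (1 + x) := Real.one_sub_inv_le_log_of_pos (by linarith)
  rw [← Real.lt_log_iff_exp_lt (by positivity), Real.log_pow]
  nlinarith [mul_le_mul_of_nonneg_left hlog R.cast_nonneg]

lemma exists_walk_length {L : ℝ} {M : ℕ} (hL : 10 ^ 50 ≤ L) (hM : (M : ℝ) ≤ 2 * L) :
    ∃ R l : ℕ, Real.exp L < (1 + 1 / (10 ^ 13 * L ^ 2) / 2) ^ R ∧ 4 + 4 * (R * (M + 1)) ≤ l ∧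
      (l : ℝ) ≤ L ^ 6 := by
  have hL0 : 0 < L := hL.trans_lt' (by positivity)
  set R := ⌊4 * 10 ^ 13 * L ^ 3⌋₊ + 1
  have hR : (R : ℝ) ≤ 10 ^ 14 * L ^ 3 := by
    have := Nat.floor_le (show 0 ≤ 4 * 10 ^ 13 * L ^ 3 by positivity)
    have : (1 : ℝ) ≤ L ^ 3 := one_le_pow₀ (by linarith)
    push_cast [R]
    linarith
  refine ⟨R, 4 + 4 * (R * (M + 1)), lt_one_add_pow (by positivity) ?_ ?_, le_rfl, ?_⟩
  · rw [div_div, div_le_one (by positivity)]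
    nlinarith
  · have : 4 * 10 ^ 13 * L ^ 3 < R := by simpa [R] using Nat.lt_floor_add_one (4 * 10 ^ 13 * L ^ 3)
    rw [div_div, mul_one_div, lt_div_iff₀ (by positivity)]
    linarith
  · push_cast
    calc (4 : ℝ) + 4 * (R * (M + 1)) ≤ 4 + 4 * (10 ^ 14 * L ^ 3 * (2 * L + 1)) := by gcongr
      _ ≤ 10 ^ 50 * L ^ 4 := by
        nlinarith [one_le_pow₀ (n := 4) (by linarith : 1 ≤ L),
          mul_le_mul_of_nonneg_left (by linarith : 1 ≤ L) (pow_pos hL0 3).le]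
      _ ≤ L * L ^ 4 := by gcongr
      _ = L ^ 5 := by ring
      _ ≤ L ^ 6 := pow_le_pow_right₀ (by linarith) (by norm_num)

/-! ### Assembling the connecting sets -/

section Assembly

variable {V ι κ : Type*} {G H : SimpleGraph V} {A B S X Z : Finset V} {L y d p β β' θ μ Λ ν N : ℝ}

lemma _root_.IsBipartition.mono (h : IsBipartition G (A : Set V) B) (hHG : H ≤ G) :
    IsBipartition H (A : Set V) B :=
  ⟨h.1, h.2.1, fun u v huv ↦ h.2.2 u v (hHG huv)⟩

lemma mul_min_card_le_sum_splitDeg_of_forall_le {c : ℝ}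
    (hcut : ∀ W ⊆ B, β * min (#W : ℝ) #(B \ W) ≤ ∑ a ∈ A, splitDeg G B W a)
    (hX : ∀ W ⊆ B, β * #W ≤ ∑ a ∈ A, splitDeg G B W a →
      c * (β * #W) ≤ ∑ x ∈ X, splitDeg G B W x) {W : Finset V} (hW : W ⊆ B) :
    c * β * min (#W : ℝ) #(B \ W) ≤ ∑ x ∈ X, splitDeg G B W x := by
  have hcompl (x : V) : splitDeg G B (B \ W) x = splitDeg G B W x := by
    rw [splitDeg, Finset.sdiff_sdiff_eq_self hW, min_comm, splitDeg]
  have hWcut := hcut W hW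
  rw [mul_assoc]
  rcases le_total (#W : ℝ) #(B \ W) with h | h
  · rw [min_eq_left h] at hWcut ⊢
    exact hX W hW hWcut
  · rw [min_eq_right h] at hWcut ⊢
    simpa only [hcompl] using hX (B \ W) sdiff_subset (by simpa only [hcompl] using hWcut)

lemma IsTypical.degInto_bounds [Fintype κ] {Y : κ → Finset V} {ω : V → Colour ι κ} {i : ι}
    (hT : IsTypical G H X θ μ Λ ν β N p Y ω i) (hG : IsBipartition G (Z : Set V) X) (hHG : H ≤ G)
    (hcore : core X ω i ⊆ S) (hhull : X ∩ S ⊆ hull X ω i) {u : V} (hu : u ∈ Z) :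
    degInto H u S ∈ Set.Icc ((1 - θ) ^ 3 * (p * μ)) ((1 + θ) ^ 2 * (1 + 2 * θ) * (p * μ)) ∧
      degInto G u S ≤ 2 * p * Λ := by
  have huX : u ∉ X := disjoint_left.1 (disjoint_coe.1 hG.1) hu
  refine ⟨⟨(hT.le_degInto_core u huX).trans (degInto_mono u hcore), ?_⟩, ?_⟩
  · rw [← (hG.mono hHG).degInto_inter hu]
    exact (degInto_mono u hhull).trans (hT.degInto_hull_le u huX)
  · rw [← hG.degInto_inter hu]
    exact (degInto_mono u hhull).trans (hT.degInto_hull_le_two_mul u huX)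

variable [Fintype V]

lemma _root_.IsBipartition.filter_adj (h : IsBipartition G (A : Set V) B) {u : V} (hu : u ∉ A) :
    ({v ∈ A | G.Adj u v} : Finset V) = ({v | G.Adj u v} : Finset V) := by
  ext v
  have := h.2.2 u v
  simp only [mem_filter, mem_univ, true_and, mem_coe] at *
  tauto

/-- The degree of `v`, normalised so that the two sides of a bipartite graph of average degree `d`
have as much weight as there are vertices. -/
noncomputable def degWeight (G : SimpleGraph V) (d : ℝ) (v : V) : ℝ := 2 * degInto G v univ / d

/-- `G` is a bipartite graph with parts `A` and `B` and average degree `d`, all of whose degrees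
are within a factor of 18 of `d`, and in which every set of at most two thirds of the vertices sends
`β` edges per vertex to its complement. -/
structure IsNearRegularExpander (G : SimpleGraph V) (A B : Finset V) (d β : ℝ) : Prop where
  isBipartition : IsBipartition G (A : Set V) B
  le_degInto : ∀ v, d / 18 ≤ degInto G v univ
  degInto_le : ∀ v, degInto G v univ ≤ 18 * d
  sum_degInto : ∑ v, degInto G v univ = Fintype.card V * d
  mul_card_le : ∀ U : Finset V, U.Nonempty → (#U : ℝ) ≤ 2 / 3 * Fintype.card V →
    β * #U ≤ ∑ u ∈ U, degInto G u Uᶜ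

namespace IsNearRegularExpander

lemma symm (h : IsNearRegularExpander G A B d β) : IsNearRegularExpander G B A d β :=
  { h with isBipartition := h.isBipartition.symm }

section Weights

variable (h : IsNearRegularExpander G A B d β) (hd : 0 < d)
include h hd

lemma degWeight_mem_Icc (v : V) : degWeight G d v ∈ Set.Icc (1 / 9) 36 := by
  have hlow := h.le_degInto v
  have hup := h.degInto_le v
  rw [degWeight, Set.mem_Icc, le_div_iff₀ hd, div_le_iff₀ hd]
  constructor <;> linarith

lemma sum_degWeight : ∑ a ∈ A, degWeight G d a = Fintype.card V := by
  have hbip := h.isBipartition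
  have hleft : ∑ a ∈ A, degInto G a univ = ∑ a ∈ A, degInto G a B :=
    sum_congr rfl fun a ha ↦ by rw [← hbip.degInto_inter ha, inter_univ]
  have hright : ∑ b ∈ B, degInto G b univ = ∑ b ∈ B, degInto G b A :=
    sum_congr rfl fun b hb ↦ by rw [← hbip.symm.degInto_inter hb, inter_univ]
  have hsides : ∑ a ∈ A, degInto G a univ = ∑ b ∈ B, degInto G b univ := by
    rw [hleft, hright, sum_degInto_comm]
  have hsum := h.sum_degInto
  rw [← sum_add_sum_compl A, hbip.compl_eq, ← hsides] at hsum
  simp only [degWeight]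
  rw [← sum_div, ← mul_sum, div_eq_iff hd.ne']
  linarith

lemma sum_degWeight_adj_mem_Icc {u : V} (hu : u ∉ A) :
    ∑ v ∈ A with G.Adj u v, degWeight G d v ∈ Set.Icc (d / 162) (648 * d) := by
  have hdeg : (#{v | G.Adj u v} : ℝ) = degInto G u univ := rfl
  have hlow := card_nsmul_le_sum {v | G.Adj u v} (degInto G · univ) _ fun v _ ↦ h.le_degInto v
  have hup := sum_le_card_nsmul {v | G.Adj u v} (degInto G · univ) _ fun v _ ↦ h.degInto_le v
  rw [nsmul_eq_mul, hdeg] at hlow hup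
  have hlow' := mul_le_mul_of_nonneg_right (h.le_degInto u) (show 0 ≤ d / 18 by positivity)
  have hup' := mul_le_mul_of_nonneg_right (h.degInto_le u) (show 0 ≤ 18 * d by positivity)
  rw [h.isBipartition.filter_adj hu]
  simp only [degWeight]
  rw [← sum_div, ← mul_sum, Set.mem_Icc, le_div_iff₀ hd, div_le_iff₀ hd]
  constructor <;> linarith

end Weights

lemma exists_subgraph_sum_degWeight_mem_Icc (h : IsNearRegularExpander G A B d β) {M : ℝ}
    (hs : IsScale L y d p M) (hV : (Fintype.card V : ℝ) ≤ Real.exp L) :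
    ∃ H ≤ G, ∀ u, ∑ v with H.Adj u v, degWeight G d v ∈
      Set.Icc ((1 - 1 / (100 * y ^ 10)) * (d / 162)) ((1 + 1 / (100 * y ^ 10)) * (d / 162)) := by
  have hd := hs.d_pos
  obtain ⟨H, hHG, hH⟩ := exists_subgraph_sum_degree_near (by positivity) h.le_degInto h.degInto_le
    hs.error_pos.le (hs.error_le.trans (by norm_num)) hs.one_le_L hV hs.regularize_condition
  refine ⟨H, hHG, fun u ↦ ?_⟩
  have hu := abs_le.1 (hH u)
  simp only [degWeight]
  rw [← sum_div, ← mul_sum, Set.mem_Icc, le_div_iff₀ hd, div_le_iff₀ hd]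
  constructor <;> linarith

section Typical

variable [Fintype ι] [Fintype κ] [Nonempty κ] {p : ι → ℝ} [Nonempty V] [Nonempty ι]
  (h : IsNearRegularExpander G A B d (d / L ^ 2)) (hHG : H ≤ G)
  (hH : ∀ u, ∑ v with H.Adj u v, degWeight G d v ∈
    Set.Icc ((1 - 1 / (100 * y ^ 10)) * (d / 162)) ((1 + 1 / (100 * y ^ 10)) * (d / 162)))
  (hs : ∀ i, IsScale L y d (p i) (Fintype.card κ)) (hp : L * ∑ i, p i ≤ 1)
  (hV : (Fintype.card V : ℝ) ≤ Real.exp L) (hι : (Fintype.card ι : ℝ) ≤ L)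
include h hHG hH hs hp hV hι

lemma exists_isTypical_left {Y : ι → κ → Finset V} {Δ : ι → ℝ} (hβ' : 0 < β')
    (hΔ : ∀ i j, ∀ a ∈ A, degInto G a (Y i j) ≤ Δ i)
    (hqβ : ∀ i, p i * (1 / 9) / (2 * Fintype.card κ) * β' ≤ Δ i)
    (hc : ∀ i, 10 ^ 10 * L ^ 4 * Δ i ^ 2 ≤
      (p i * (1 / 9) / (2 * Fintype.card κ)) ^ 3 * β' ^ 3) :
    ∃ ω : V → Colour ι κ, ∀ i, IsTypical G H A (1 / (100 * y ^ 10)) (d / 162) (648 * d) (1 / 9) β'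
      (Fintype.card V) (p i) (Y i) ω i := by
  obtain ⟨i₀⟩ := ‹Nonempty ι›
  obtain ⟨v₀⟩ := ‹Nonempty V›
  have hs₀ := hs i₀
  have hd := hs₀.d_pos
  have hL := hs₀.le_L
  have hL0 := hs₀.L_pos
  have hLexp : 2 * L ≤ Real.exp L := by
    have := Real.quadratic_le_exp_of_nonneg hL0.le
    nlinarith
  have hdV : d / 162 ≤ Fintype.card V := by
    have := (h.le_degInto v₀).trans (degInto_le_card v₀)
    rw [card_univ] at this
    linarith
  have hψ (v : V) := h.degWeight_mem_Icc hd v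
  refine exists_isTypical (fun v ↦ colourWeight_mem_stdSimplex hs₀.error_pos.le
    (hs₀.error_le.trans (by norm_num)) (fun i ↦ (hs i).p_pos.le)
    ((hψ v).1.trans' (by norm_num)) ?_) (fun i ↦ (hs i).p_pos) (by positivity)
    hs₀.error_pos.le hs₀.error_le (h.sum_degWeight hd) hdV (by norm_num) (fun v _ ↦ (hψ v).1)
    (fun u hu ↦ ?_) (fun u hu ↦ h.sum_degWeight_adj_mem_Icc hd hu) (by linarith) hV
    (by linarith) (hs₀.M_le.trans hLexp) (fun i ↦ (hs i).core_condition)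
    (fun i ↦ (hs i).layer_condition) hβ' hΔ hqβ hc
  · have hp0 : 0 ≤ ∑ i, p i := sum_nonneg fun i _ ↦ (hs i).p_pos.le
    calc (1 + 2 * (1 / (100 * y ^ 10))) * (∑ i, p i) * degWeight G d v
        ≤ 2 * (∑ i, p i) * 36 := by
          have := (hψ v).1
          gcongr
          · linarith [hs₀.error_le]
          · exact (hψ v).2
      _ ≤ L * ∑ i, p i := by nlinarith
      _ ≤ 1 := hp
  · rw [(h.isBipartition.mono hHG).filter_adj hu]
    exact hH u

theorem exists_isTypical_pair :
    ∃ ωA ωB : V → Colour ι κ, ∀ i,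
      IsTypical G H A (1 / (100 * y ^ 10)) (d / 162) (648 * d) (1 / 9) (d / L ^ 2)
        (Fintype.card V) (p i) (fun _ ↦ B) ωA i ∧
      IsTypical G H B (1 / (100 * y ^ 10)) (d / 162) (648 * d) (1 / 9) (d / (10 ^ 7 * L ^ 2))
        (Fintype.card V) (p i) (layer A ωA i) ωB i := by
  have hs₀ := hs (Classical.arbitrary ι)
  have hd := hs₀.d_pos
  have hL := hs₀.L_pos
  obtain ⟨ωA, hA⟩ := h.exists_isTypical_left hHG hH hs hp hV hι (Y := fun _ _ ↦ B)
    (Δ := fun _ ↦ 18 * d) (by positivity)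
    (fun _ _ a _ ↦ (degInto_mono a (subset_univ B)).trans (h.degInto_le a))
    (fun i ↦ (hs i).layer_share_left_le) (fun i ↦ (hs i).split_condition_left)
  have hdisj := disjoint_right.1 (disjoint_coe.1 h.isBipartition.1)
  obtain ⟨ωB, hB⟩ := h.symm.exists_isTypical_left hHG hH hs hp hV hι
    (Y := fun i j ↦ layer A ωA i j) (by positivity)
    (fun i j b hb ↦ (hA i).degInto_layer_le b (hdisj hb) j)
    (fun i ↦ (hs i).layer_share_right_le) (fun i ↦ (hs i).split_condition_right)
  exact ⟨ωA, ωB, fun i ↦ ⟨hA i, hB i⟩⟩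

end Typical

end IsNearRegularExpander

section Connector

variable [Fintype κ] {ωA ωB : V → Colour ι κ} {i : ι} {n : ℕ}
  (h : IsNearRegularExpander G A B d (d / L ^ 2)) (hs : IsScale L y d p (Fintype.card κ))
  (hA : IsTypical G H A θ (d / 162) (648 * d) (1 / 9) (d / L ^ 2) N p (fun _ ↦ B) ωA i)
  (hB : IsTypical G H B θ (d / 162) (648 * d) (1 / 9) (d / (10 ^ 7 * L ^ 2)) N p (layer A ωA i)
    ωB i)
include h hs hA hB

lemma IsNearRegularExpander.isConnector_layer (j : κ) :
    IsConnector G (layer A ωA i j) (layer B ωB i j) (2 * p * (648 * d) / Fintype.card κ)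
      (1 / (10 ^ 13 * L ^ 2)) (p * (d / 162) / (4 * Fintype.card κ)) := by
  have hd := hs.d_pos
  have hL := hs.L_pos
  have hp := hs.p_pos
  have hM := hs.M_pos
  have hdisj := disjoint_coe.1 h.isBipartition.1
  have hAB {b : V} (hb : b ∈ B) : b ∉ A := disjoint_right.1 hdisj hb
  have hBA {a : V} (ha : a ∈ layer A ωA i j) : a ∉ B := disjoint_left.1 hdisj (layer_subset i j ha)
  refine ⟨⟨fun a ha ↦ hB.degInto_layer_le a (hBA ha) j,
    fun b hb ↦ hA.degInto_layer_le b (hAB (layer_subset i j hb)) j, fun U hU hUA ↦ ?_⟩,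
    fun v ↦ ?_, fun b hb ↦ hA.le_degInto_layer b (hAB (layer_subset i j hb)) j⟩
  · have htransfer := le_sum_splitDeg_of_forall_min_le (τ := Fintype.card κ / (46656 * p))
      (μ := d / 36) (by positivity) (by positivity) (by positivity)
      (fun W hW ↦ mul_min_card_le_sum_splitDeg_of_forall_le
        (fun W hW ↦ h.isBipartition.mul_min_card_le_sum_splitDeg (by positivity) h.mul_card_le hW)
        (hA.le_sum_splitDeg j) hW)
      (fun a ha ↦ by
        rw [← inter_univ B, h.isBipartition.degInto_inter (layer_subset i j ha)]
        linarith [h.le_degInto a])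
      (fun b hb ↦ hA.degInto_layer_le b (hAB hb) j)
      hs.transfer_condition_left hs.transfer_condition_right hU hUA
    have hU' := hB.le_sum_splitDeg j U hU <| htransfer.trans' <|
      mul_le_mul_of_nonneg_right hs.le_transfer (Nat.cast_nonneg _)
    exact (mul_le_mul_of_nonneg_right hs.expansion_le (Nat.cast_nonneg _)).trans
      ((mul_assoc _ _ _).trans_le hU')
  · by_cases hv : v ∈ A
    · exact .inr (hB.le_degInto_layer v (disjoint_left.1 hdisj hv) j)
    · exact .inl (hA.le_degInto_layer v hv j)

lemma IsNearRegularExpander.isConnecting_of_core_subset [Nonempty κ] (hcoreA : core A ωA i ⊆ S)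
    (hcoreB : core B ωB i ⊆ S) (hV : (Fintype.card V : ℝ) ≤ Real.exp L)
    (hκ : Fintype.card V < 2 ^ Fintype.card κ) (hn : L = Real.logb 2 n) :
    IsConnecting n G (S : Set V) (p ^ 9 * d / L ^ 76) := by
  have := hs.d_pos
  have := hs.L_pos
  have := hs.p_pos
  have := hs.M_pos
  have hdisj := disjoint_coe.1 h.isBipartition.1
  obtain ⟨R, l, hR, hl, hlL⟩ := exists_walk_length hs.le_L hs.M_le
  refine isConnecting_of_isConnector (R := R) (l := l) (h.isConnector_layer hs hA hB)
    (fun j j' hj ↦ ?_) (fun j ↦ union_subset ((layer_subset_core i j).trans hcoreA)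
      ((layer_subset_core i j).trans hcoreB)) (by positivity) hs.expansion_le_one (by positivity)
    hs.layer_le (by positivity) hs.connecting_le_layer (hV.trans_lt hR) hl
    (hs.linkage_condition hlL) hκ (hn ▸ hlL)
  have hcross (k k' : κ) : Disjoint (layer A ωA i k) (layer B ωB i k') :=
    hdisj.mono (layer_subset i k) (layer_subset i k')
  simp only [disjoint_union_left, disjoint_union_right]
  exact ⟨⟨disjoint_layer i hj, (hcross j' j).symm⟩, hcross j j', disjoint_layer i hj⟩

end Connector

/-- `S` is a connecting set of `G` with `m` vertices in each of the parts `A` and `B`, such that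
every vertex has about `δ` neighbours in `S` in the subgraph `H` and at most `Δ` in `G`. -/
structure IsRegularConnectingSet (n : ℕ) (G H : SimpleGraph V) (A B S : Finset V) (m : ℕ)
    (D θ δ Δ : ℝ) : Prop where
  card_inter_left : #(A ∩ S) = m
  card_inter_right : #(B ∩ S) = m
  isConnecting : IsConnecting n G (S : Set V) D
  degInto_mem_Icc : ∀ v, degInto H v S ∈
    Set.Icc ((1 - θ) ^ 3 * δ) ((1 + θ) ^ 2 * (1 + 2 * θ) * δ)
  degInto_le : ∀ v, degInto G v S ≤ Δ

namespace IsNearRegularExpander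

variable [Fintype κ] [Nonempty κ] {n : ℕ}

lemma exists_isRegularConnectingSet {ωA ωB : V → Colour ι κ} {i : ι} {m : ℕ}
    (h : IsNearRegularExpander G A B d (d / L ^ 2)) (hHG : H ≤ G)
    (hs : IsScale L y d p (Fintype.card κ))
    (hA : IsTypical G H A θ (d / 162) (648 * d) (1 / 9) (d / L ^ 2) N p (fun _ ↦ B) ωA i)
    (hB : IsTypical G H B θ (d / 162) (648 * d) (1 / 9) (d / (10 ^ 7 * L ^ 2)) N p (layer A ωA i)
      ωB i)
    (hm : (m : ℝ) = p * N) (hV : (Fintype.card V : ℝ) ≤ Real.exp L)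
    (hκ : Fintype.card V < 2 ^ Fintype.card κ) (hn : L = Real.logb 2 n) :
    ∃ S ⊆ hull A ωA i ∪ hull B ωB i, IsRegularConnectingSet n G H A B S m (p ^ 9 * d / L ^ 76) θ
      (p * (d / 162)) (2 * p * (648 * d)) := by
  obtain ⟨SA, hcoreA, hhullA, hcardA⟩ := exists_subsuperset_card_eq (n := m) (core_subset_hull i)
    (by exact_mod_cast hA.card_core_le.trans_eq hm.symm)
    (by exact_mod_cast hm.trans_le hA.le_card_hull)
  obtain ⟨SB, hcoreB, hhullB, hcardB⟩ := exists_subsuperset_card_eq (n := m) (core_subset_hull i)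
    (by exact_mod_cast hB.card_core_le.trans_eq hm.symm)
    (by exact_mod_cast hm.trans_le hB.le_card_hull)
  have hbip := h.isBipartition
  have hdisj := disjoint_coe.1 hbip.1
  have hSA : SA ⊆ A := hhullA.trans (hull_subset i)
  have hSB : SB ⊆ B := hhullB.trans (hull_subset i)
  have hAS : A ∩ (SA ∪ SB) = SA := by grind [disjoint_left]
  have hBS : B ∩ (SA ∪ SB) = SB := by grind [disjoint_left]
  replace hcoreA := hcoreA.trans (subset_union_left (s₂ := SB))
  replace hcoreB := hcoreB.trans (subset_union_right (s₁ := SA))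
  have hdeg (v : V) :
      degInto H v (SA ∪ SB) ∈ Set.Icc ((1 - θ) ^ 3 * (p * (d / 162)))
        ((1 + θ) ^ 2 * (1 + 2 * θ) * (p * (d / 162))) ∧
      degInto G v (SA ∪ SB) ≤ 2 * p * (648 * d) := by
    by_cases hv : v ∈ A
    · exact hB.degInto_bounds hbip hHG hcoreB (hBS.trans_subset hhullB) hv
    · exact hA.degInto_bounds hbip.symm hHG hcoreA (hAS.trans_subset hhullA)
        (hbip.compl_eq ▸ mem_compl.2 hv)
  exact ⟨SA ∪ SB, union_subset_union hhullA hhullB, hAS.symm ▸ hcardA, hBS.symm ▸ hcardB,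
    h.isConnecting_of_core_subset hs hA hB hcoreA hcoreB hV hκ hn, fun v ↦ (hdeg v).1,
    fun v ↦ (hdeg v).2⟩

theorem exists_isRegularConnectingSet_family [Fintype ι] [Nonempty ι] [Nonempty V] {p : ι → ℝ}
    {m : ι → ℕ} (h : IsNearRegularExpander G A B d (d / L ^ 2))
    (hs : ∀ i, IsScale L y d (p i) (Fintype.card κ)) (hp : L * ∑ i, p i ≤ 1)
    (hm : ∀ i, (m i : ℝ) = p i * Fintype.card V) (hV : (Fintype.card V : ℝ) ≤ Real.exp L)
    (hι : (Fintype.card ι : ℝ) ≤ L) (hκ : Fintype.card V < 2 ^ Fintype.card κ)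
    (hn : L = Real.logb 2 n) :
    ∃ H ≤ G, ∃ S : ι → Finset V, (Pairwise fun i j ↦ Disjoint (S i) (S j)) ∧
      ∀ i, IsRegularConnectingSet n G H A B (S i) (m i) (p i ^ 9 * d / L ^ 76)
        (1 / (100 * y ^ 10)) (p i * (d / 162)) (2 * p i * (648 * d)) := by
  obtain ⟨H, hHG, hH⟩ :=
    h.exists_subgraph_sum_degWeight_mem_Icc (hs (Classical.arbitrary ι)) hV
  obtain ⟨ωA, ωB, hω⟩ := h.exists_isTypical_pair hHG hH hs hp hV hι
  choose S hSsub hS using fun i ↦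
    h.exists_isRegularConnectingSet hHG (hs i) (hω i).1 (hω i).2 (hm i) hV hκ hn
  refine ⟨H, hHG, S, fun i i' hi ↦ .mono (hSsub i) (hSsub i') ?_, hS⟩
  have hcross (k k' : ι) : Disjoint (hull A ωA k) (hull B ωB k') :=
    (disjoint_coe.1 h.isBipartition.1).mono (hull_subset k) (hull_subset k')
  simp only [disjoint_union_left, disjoint_union_right]
  exact ⟨⟨disjoint_hull hi, (hcross i' i).symm⟩, hcross i i', disjoint_hull hi⟩

end IsNearRegularExpander

end Assembly

/-! ### Subgraphs with connecting sets in expanders -/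

lemma pos_of_logb_pos {n : ℕ} (h : 0 < Real.logb 2 n) : 0 < n :=
  Nat.pos_of_ne_zero fun hn ↦ by simp [hn] at h

section Expander

variable {V : Type*} {G : SimpleGraph V} {A B S : Finset V} {ε s d β : ℝ}

lemma ncard_neighborSet_inter (G : SimpleGraph V) (v : V) (S : Finset V) :
    ((G.neighborSet v ∩ S).ncard : ℝ) = degInto G v S := by
  rw [degInto, ← Set.ncard_coe_finset, coe_filter]
  congr 2
  exact Set.inter_comm _ _

lemma IsRegularConnectingSet.ncard_eq {H : SimpleGraph V} {n m : ℕ} {D θ δ Δ : ℝ}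
    (hS : IsRegularConnectingSet n G H A B S m D θ δ Δ) (hG : IsBipartition G (A : Set V) B) :
    (S : Set V).ncard = 2 * m := by
  have hunion : (A ∩ S) ∪ (B ∩ S) = S := by
    rw [← union_inter_distrib_right, inter_eq_right, ← coe_subset, coe_union, hG.2.1]
    exact Set.subset_univ _
  have hdisj : Disjoint (A ∩ S) (B ∩ S) :=
    (disjoint_coe.1 hG.1).mono inter_subset_left inter_subset_left
  rw [Set.ncard_coe_finset, ← hunion, card_union_of_disjoint hdisj, hS.card_inter_left,
    hS.card_inter_right, two_mul]

variable [Fintype V]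

lemma ncard_neighborSet (G : SimpleGraph V) (v : V) :
    ((G.neighborSet v).ncard : ℝ) = degInto G v univ := by
  simpa only [coe_univ, Set.inter_univ] using ncard_neighborSet_inter G v univ

lemma sum_degInto_univ (G : SimpleGraph V) :
    ∑ v, degInto G v univ = 2 * (G.edgeSet.ncard : ℝ) := by
  have hdeg (v : V) : degInto G v univ = G.degree v := by
    rw [degInto, ← G.card_neighborFinset_eq_degree, G.neighborFinset_eq_filter]
  rw [← G.coe_edgeFinset, Set.ncard_coe_finset]
  simp only [hdeg]
  exact_mod_cast G.sum_degrees_eq_twice_card_edges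

theorem IsNearRegularExpander.of_isExpander (hbip : IsBipartition G (A : Set V) B)
    (hreg : ∀ v w, ((G.neighborSet v).ncard : ℝ) ≤ 18 * (G.neighborSet w).ncard)
    (hd : d = 2 * (G.edgeSet.ncard : ℝ) / Fintype.card V)
    (hG : IsExpander (Fintype.card V) G ε s) (hε : 0 < ε)
    (hlog : 0 < Real.logb 2 (Fintype.card V)) (hβ : β ≤ s) : IsNearRegularExpander G A B d β := by
  have hV : (0 : ℝ) < Fintype.card V := by exact_mod_cast pos_of_logb_pos hlog
  simp only [ncard_neighborSet] at hreg
  have hsum : ∑ v, degInto G v univ = Fintype.card V * d := by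
    rw [sum_degInto_univ, hd, mul_div_cancel₀ _ hV.ne']
  refine ⟨hbip, fun v ↦ ?_, fun v ↦ ?_, hsum, fun U hU hUV ↦ ?_⟩
  · have := sum_le_card_nsmul univ (degInto G · univ) _ fun w _ ↦ hreg w v
    rw [hsum, nsmul_eq_mul, card_univ] at this
    linarith [le_of_mul_le_mul_left this hV]
  · have := card_nsmul_le_sum univ (18 * degInto G · univ) _ fun w _ ↦ hreg v w
    rw [← mul_sum, hsum, nsmul_eq_mul, card_univ, mul_left_comm] at this
    exact le_of_mul_le_mul_left this hV
  · exact (mul_le_mul_of_nonneg_right hβ (Nat.cast_nonneg _)).trans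
      (hG.mul_card_le_sum_degInto_compl hε hlog hU hUV)

end Expander

lemma exists_forall_le_logb_two (K : ℝ) : ∃ N : ℕ, ∀ n ≥ N, K ≤ Real.logb 2 (n : ℕ) :=
  Filter.eventually_atTop.1 <|
    ((Real.tendsto_logb_atTop one_lt_two).comp tendsto_natCast_atTop_atTop).eventually_ge_atTop K

lemma le_exp_logb_two {x : ℝ} (hx : 1 ≤ x) : x ≤ Real.exp (Real.logb 2 x) := by
  rw [← Real.log_le_iff_le_exp (by positivity), Real.logb, le_div_iff₀ (Real.log_pos one_lt_two)]
  exact mul_le_of_le_one_right (Real.log_nonneg hx) (Real.log_two_lt_d9.le.trans (by norm_num))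

lemma le_pow_mul_rpow {x y : ℝ} (hx : 0 ≤ x) (hy : 0 ≤ y) (hxy : x ≤ y ^ 30) :
    x ≤ y ^ 10 * x ^ ((2 : ℝ) / 3) := by
  have hroot : x ^ ((1 : ℝ) / 3) ≤ y ^ 10 :=
    calc x ^ ((1 : ℝ) / 3) ≤ (y ^ 30) ^ ((1 : ℝ) / 3) := by gcongr
      _ = y ^ 10 := by
        rw [← Real.rpow_natCast, ← Real.rpow_natCast, ← Real.rpow_mul hy]
        norm_num
  calc x = x ^ ((1 : ℝ) / 3) * x ^ ((2 : ℝ) / 3) := by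
        rw [← Real.rpow_add_of_nonneg hx] <;> norm_num
    _ ≤ y ^ 10 * x ^ ((2 : ℝ) / 3) := by gcongr

lemma IsScale.Icc_subset_Icc_rpow {L y d p M x : ℝ} (h : IsScale L y d p M)
    (hx : x = p * (d / 162)) :
    Set.Icc ((1 - 1 / (100 * y ^ 10)) ^ 3 * x)
        ((1 + 1 / (100 * y ^ 10)) ^ 2 * (1 + 2 * (1 / (100 * y ^ 10))) * x) ⊆
      Set.Icc (x - x ^ ((2 : ℝ) / 3)) (x + x ^ ((2 : ℝ) / 3)) := by
  have := h.y_pos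
  have hd := h.d_pos
  have hp := h.p_pos
  have hx0 : 0 ≤ x := by rw [hx]; positivity
  have hxd : x ≤ y ^ 30 := by
    rw [hx, ← h.d_eq]
    nlinarith [mul_le_mul_of_nonneg_right h.p_le_one hd.le]
  have hθ0 := h.error_pos
  have hθ1 := h.error_le
  set θ := 1 / (100 * y ^ 10) with hθ
  have hθx : 100 * θ * x ≤ x ^ ((2 : ℝ) / 3) :=
    calc 100 * θ * x ≤ 100 * θ * (y ^ 10 * x ^ ((2 : ℝ) / 3)) := by
          gcongr
          exact le_pow_mul_rpow hx0 h.y_pos.le hxd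
      _ = x ^ ((2 : ℝ) / 3) := by rw [hθ]; field_simp
  have hlow : 1 - 100 * θ ≤ (1 - θ) ^ 3 := by nlinarith [pow_pos hθ0 2]
  have hup : (1 + θ) ^ 2 * (1 + 2 * θ) ≤ 1 + 100 * θ := by nlinarith [pow_pos hθ0 2]
  refine Set.Icc_subset_Icc ?_ ?_
  · linarith [mul_le_mul_of_nonneg_right hlow hx0]
  · linarith [mul_le_mul_of_nonneg_right hup hx0]

section Parameters

variable {n : ℕ} {d : ℝ}

lemma isScale_rpow {t m : ℕ} (ht : 0 < t) (hL : 10 ^ 50 ≤ Real.logb 2 n)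
    (hd : Real.logb 2 n ^ (3000 : ℝ) ≤ d) (hm : (n : ℝ) / d ^ ((1 : ℝ) / 10) < m)
    (hm' : (m : ℝ) < n / (t * Real.logb 2 n)) :
    IsScale (Real.logb 2 n) (d ^ ((1 : ℝ) / 30)) d (m / n)
      (Fintype.card (Fin (Nat.log 2 n + 1))) := by
  have hL0 : 0 < Real.logb 2 n := hL.trans_lt' (by positivity)
  have hd0 : 0 < d := hd.trans_lt' (Real.rpow_pos_of_pos hL0 _)
  have hm0 : 0 < (m : ℝ) := hm.trans_le' (by positivity)
  have hmn : (m : ℝ) ≤ n := hm'.le.trans <| div_le_self n.cast_nonneg <|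
    one_le_mul_of_one_le_of_one_le (by exact_mod_cast ht) (hL.trans' (by norm_num))
  have hn : 0 < (n : ℝ) := hm0.trans_le hmn
  have hpow (k : ℕ) : (d ^ ((1 : ℝ) / 30)) ^ k = d ^ ((k : ℝ) / 30) := by
    rw [← Real.rpow_natCast, ← Real.rpow_mul hd0.le, one_div_mul_eq_div]
  have hlog : (Nat.log 2 n : ℝ) ≤ Real.logb 2 n := by exact_mod_cast Real.natLog_le_logb n 2
  refine ⟨hL, ?_, ?_, div_pos hm0 hn, ?_, ?_, ?_, ?_⟩
  · calc Real.logb 2 n ^ 100 = (Real.logb 2 n ^ (3000 : ℝ)) ^ ((1 : ℝ) / 30) := by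
          rw [← Real.rpow_mul hL0.le, ← Real.rpow_natCast]
          norm_num
      _ ≤ d ^ ((1 : ℝ) / 30) := by gcongr
  · rw [hpow]
    norm_num
  · rwa [div_le_one hn]
  · rw [div_lt_iff₀ (by positivity)] at hm
    rw [hpow, div_mul_eq_mul_div, one_le_div hn]
    norm_num at hm ⊢
    exact hm.le
  · rw [Fintype.card_fin]
    push_cast
    linarith [(Nat.log 2 n).cast_nonneg (α := ℝ)]
  · rw [Fintype.card_fin]
    push_cast
    linarith

lemma logb_mul_sum_div_le_one {t : ℕ} {m : Fin t → ℕ} (ht : 0 < t) (hL : 0 < Real.logb 2 n)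
    (hm : ∀ i, (m i : ℝ) < n / (t * Real.logb 2 n)) :
    Real.logb 2 n * ∑ i, (m i / n : ℝ) ≤ 1 := by
  have : (0 : ℝ) < t := by exact_mod_cast ht
  have hterm (i : Fin t) : (m i / n : ℝ) ≤ 1 / (t * Real.logb 2 n) :=
    calc (m i / n : ℝ) ≤ n / (t * Real.logb 2 n) / n := by gcongr; exact (hm i).le
      _ = n / n / (t * Real.logb 2 n) := div_right_comm _ _ _
      _ ≤ 1 / (t * Real.logb 2 n) := by gcongr; exact div_self_le_one _
  calc Real.logb 2 n * ∑ i, (m i / n : ℝ)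
      ≤ Real.logb 2 n * (t * (1 / (t * Real.logb 2 n))) := by
        gcongr
        simpa using sum_le_card_nsmul univ _ _ fun i _ ↦ hterm i
    _ = 1 := by field_simp

end Parameters

lemma IsRegularConnectingSet.exists_degree_near {V : Type*} {G H : SimpleGraph V}
    {A B S : Finset V} {n m : ℕ} {L y d M D : ℝ} (h : IsScale L y d (m / n) M)
    (hS : IsRegularConnectingSet n G H A B S m D (1 / (100 * y ^ 10)) (m / n * (d / 162))
      (2 * (m / n) * (648 * d))) :
    (∃ δ : ℝ, d * m / (3000 * n) ≤ δ ∧ δ ≤ 3000 * d * m / n ∧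
      ∀ v, δ - δ ^ ((2 : ℝ) / 3) ≤ ((H.neighborSet v ∩ S).ncard : ℝ) ∧
        ((H.neighborSet v ∩ S).ncard : ℝ) ≤ δ + δ ^ ((2 : ℝ) / 3)) ∧
      ∀ v, ((G.neighborSet v ∩ S).ncard : ℝ) ≤ 3000 * d * m / n := by
  simp only [ncard_neighborSet_inter]
  have hmd : 0 < m / n * d := mul_pos h.p_pos h.d_pos
  have hlow : d * m / (3000 * n) = m / n * d / 3000 := by ring
  have hup : 3000 * d * m / n = 3000 * (m / n * d) := by ring
  rw [hlow, hup]
  exact ⟨⟨m / n * (d / 162), by linarith, by linarith,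
    fun v ↦ h.Icc_subset_Icc_rpow rfl (hS.degInto_mem_Icc v)⟩,
    fun v ↦ (hS.degInto_le v).trans (by linarith)⟩

theorem _root_.IsExpander.exists_isRegularConnectingSet_family {V : Type*} [Fintype V]
    {G : SimpleGraph V} {A B : Finset V} {ε s d : ℝ} {n t : ℕ} {m : Fin t → ℕ}
    (hG : IsExpander n G ε s) (hn : Fintype.card V = n) (hbip : IsBipartition G (A : Set V) B)
    (hreg : ∀ v w, ((G.neighborSet v).ncard : ℝ) ≤ 18 * (G.neighborSet w).ncard)
    (hd : d = 2 * (G.edgeSet.ncard : ℝ) / n) (hε : 0 < ε) (hs : d / Real.logb 2 n ^ 2 ≤ s)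
    (ht : 0 < t) (hL : 0 < Real.logb 2 n) (htL : t ≤ Real.logb 2 n)
    (hscale : ∀ i, IsScale (Real.logb 2 n) (d ^ ((1 : ℝ) / 30)) d (m i / n)
      (Fintype.card (Fin (Nat.log 2 n + 1))))
    (hm : ∀ i, (m i : ℝ) < n / (t * Real.logb 2 n)) :
    ∃ H ≤ G, ∃ S : Fin t → Finset V, (Pairwise fun i j ↦ Disjoint (S i) (S j)) ∧
      ∀ i, IsRegularConnectingSet n G H A B (S i) (m i) ((m i / n) ^ 9 * d / Real.logb 2 n ^ 76)
        (1 / (100 * (d ^ ((1 : ℝ) / 30)) ^ 10)) (m i / n * (d / 162))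
        (2 * (m i / n) * (648 * d)) := by
  subst hn
  have hV := pos_of_logb_pos hL
  have : Nonempty V := Fintype.card_pos_iff.1 hV
  have : Nonempty (Fin t) := ⟨0, ht⟩
  have hG' : IsNearRegularExpander G A B d _ := .of_isExpander hbip hreg hd hG hε hL hs
  exact hG'.exists_isRegularConnectingSet_family hscale (logb_mul_sum_div_le_one ht hL hm)
    (fun i ↦ by field_simp) (le_exp_logb_two (by exact_mod_cast hV)) (by simpa using htL)
    (by simpa using Nat.lt_pow_succ_log_self one_lt_two (Fintype.card V)) rfl

theorem _root_.statement10_general.{u} :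
    ∃ C : ℝ, 1 ≤ C ∧ ∀ t : ℕ, 0 < t → ∃ N : ℕ, ∀ n : ℕ, N ≤ n →
      ∀ (V : Type u) [Fintype V] (G : SimpleGraph V) (A B : Set V) (ε s d : ℝ) (m : Fin t → ℕ),
        Fintype.card V = n →
        IsBipartition G A B →
        (∀ v w : V, ((G.neighborSet v).ncard : ℝ) ≤ 18 * ((G.neighborSet w).ncard : ℝ)) →
        d = 2 * (G.edgeSet.ncard : ℝ) / n →
        IsExpander n G ε s →
        Real.logb 2 n ^ C ≤ d →
        d / Real.logb 2 n ^ (2 : ℕ) ≤ s →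
        0 < ε →
        (∀ i, (n : ℝ) / d ^ ((1 : ℝ) / 10) < m i ∧ (m i : ℝ) < n / (t * Real.logb 2 n)) →
        ∃ (G' : G.Subgraph) (S : Fin t → Set V),
          (∀ i, S i ⊆ G'.verts) ∧
          (∀ i j, i ≠ j → Disjoint (S i) (S j)) ∧
          ∀ i,
            (S i ∩ A).ncard = (S i ∩ B).ncard ∧
            (S i).ncard = 2 * m i ∧
            IsConnecting n G (S i)
              (((m i : ℝ) / n) ^ (9 : ℕ) * d / Real.logb 2 n ^ (76 : ℕ)) ∧
            (∃ dᵢ : ℝ, d * m i / (C * n) ≤ dᵢ ∧ dᵢ ≤ C * d * m i / n ∧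
              ∀ v ∈ G'.verts,
                dᵢ - dᵢ ^ ((2 : ℝ) / 3) ≤ ((G'.neighborSet v ∩ S i).ncard : ℝ) ∧
                ((G'.neighborSet v ∩ S i).ncard : ℝ) ≤ dᵢ + dᵢ ^ ((2 : ℝ) / 3)) ∧
            ∀ v : V, ((G.neighborSet v ∩ S i).ncard : ℝ) ≤ C * d * m i / n := by
  refine ⟨3000, by norm_num, fun t ht ↦ ?_⟩
  obtain ⟨N, hN⟩ := exists_forall_le_logb_two (max (10 ^ 50) t)
  refine ⟨N, fun n hn V _ G A B ε s d m hV hbip hreg hd hexp hLd hs hε hm ↦ ?_⟩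
  obtain ⟨hL, htL⟩ := max_le_iff.1 (hN n hn)
  have hscale (i : Fin t) := isScale_rpow ht hL hLd (hm i).1 (hm i).2
  lift A to Finset V using A.toFinite
  lift B to Finset V using B.toFinite
  obtain ⟨H, hHG, S, hdisj, hS⟩ := hexp.exists_isRegularConnectingSet_family hV hbip hreg hd hε hs
    ht (hL.trans_lt' (by positivity)) htL hscale fun i ↦ (hm i).2
  refine ⟨SimpleGraph.toSubgraph H hHG, fun i ↦ S i, fun _ _ _ ↦ trivial,
    fun i j hij ↦ disjoint_coe.2 (hdisj hij), fun i ↦ ?_⟩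
  obtain ⟨⟨δ, hδlow, hδup, hHδ⟩, hGδ⟩ := (hS i).exists_degree_near (hscale i)
  refine ⟨?_, (hS i).ncard_eq hbip, (hS i).isConnecting, ⟨δ, hδlow, hδup, fun v _ ↦ hHδ v⟩, hGδ⟩
  rw [← coe_inter, ← coe_inter, Set.ncard_coe_finset, Set.ncard_coe_finset, inter_comm,
    (hS i).card_inter_left, inter_comm, (hS i).card_inter_right]

end ConnectingSets

/-- Lemma finding a subgraph `G' ⊆ G` and disjoint balanced connecting sets
`S_1, …, S_t` with good degree control. -/
theorem statement10 :
    ∃ C : ℝ, 1 ≤ C ∧ ∀ t : ℕ, 0 < t → ∃ N : ℕ, ∀ n : ℕ, N ≤ n →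
      ∀ (G : SimpleGraph (Fin n)) (A B : Set (Fin n)) (ε s d : ℝ) (m : Fin t → ℕ),
        IsBipartition G A B →
        (∀ v w : Fin n,
          ((G.neighborSet v).ncard : ℝ) ≤ 18 * ((G.neighborSet w).ncard : ℝ)) →
        d = 2 * (G.edgeSet.ncard : ℝ) / n →
        IsExpander n G ε s →
        Real.logb 2 n ^ C ≤ d →
        d / Real.logb 2 n ^ (2 : ℕ) ≤ s →
        (2 : ℝ) ^ (-(90 : ℤ)) < ε → ε < 1 →
        (∀ i, (n : ℝ) / d ^ ((1 : ℝ) / 10) < m i ∧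
          (m i : ℝ) < n / (t * Real.logb 2 n)) →
        ∃ (G' : G.Subgraph) (S : Fin t → Set (Fin n)),
          (∀ i, S i ⊆ G'.verts) ∧
          (∀ i j, i ≠ j → Disjoint (S i) (S j)) ∧
          ∀ i,
            (S i ∩ A).ncard = (S i ∩ B).ncard ∧
            (S i).ncard = 2 * m i ∧
            IsConnecting n G (S i)
              (((m i : ℝ) / n) ^ (9 : ℕ) * d / Real.logb 2 n ^ (76 : ℕ)) ∧
            (∃ dᵢ : ℝ, d * m i / (C * n) ≤ dᵢ ∧ dᵢ ≤ C * d * m i / n ∧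
              ∀ v ∈ G'.verts,
                dᵢ - dᵢ ^ ((2 : ℝ) / 3) ≤ ((G'.neighborSet v ∩ S i).ncard : ℝ) ∧
                ((G'.neighborSet v ∩ S i).ncard : ℝ) ≤ dᵢ + dᵢ ^ ((2 : ℝ) / 3)) ∧
            ∀ v : Fin n, ((G.neighborSet v ∩ S i).ncard : ℝ) ≤ C * d * m i / n := by
  obtain ⟨C, hC, h⟩ := statement10_general
  refine ⟨C, hC, fun t ht ↦ (h t ht).imp fun N hN n hn G A B ε s d m hbip hreg hd hexp hL hs hε _ ↦
    hN n hn (Fin n) G A B ε s d m (Fintype.card_fin n) hbip hreg hd hexp hL hs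
      ((by positivity : (0 : ℝ) < 2 ^ (-(90 : ℤ))).trans hε)⟩
end

section
/- Let n and s be sufficiently large, let k be a positive integer and let 0 < ε < 1. Suppose that G is an n-vertex (ε,s)-expander and εs/k ≥ 10^5·(log n)^3. Then there are edge-disjoint graphs G_1,…,G_k, each with vertex set V(G), such that E(G) = E(G_1) ∪ ⋯ ∪ E(G_k) and, for each i ∈ [k], G_i is an (ε/4, εs/(10^4·k·(log n)^2))-expander. -/
/-!
Colour the edges independently and uniformly with `k` colours. If `W` is too small to be the
external neighbourhood of `U` in an `(ε, s)`-expander, then more than `s|U|` edges leave `U` and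
avoid `W`, and conversely this property characterises expansion, so each colour class only has to
retain `s|U| / (4k)` of these edges. By a Chernoff bound this fails with probability at most
`exp (-s|U| / (4k)) ≤ n ^ (-8|U|)`. Since an expander has `ε ≤ (log n)²`, only sets with
`|W| ≤ |U|` matter, so the failure probability is at most `n ^ (-2(2 + |U| + |W|))`; its sum over
all pairs `(U, W)` is `n ^ (-4) * (1 + n ^ (-2)) ^ (2n)`, and `k ≤ s < n²` colours do not bring it
up to `1`.
-/

open Finset
open Fintype (card)

section Counting

variable {α K : Type*} [Fintype α] [DecidableEq α] [Fintype K] [DecidableEq K]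

lemma sum_pow_card_filter_eq {R : Type*} [CommRing R] (x : R) (A : Finset α) (i : K) :
    ∑ c : α → K, x ^ #{e ∈ A | c e = i} = (card K - 1 + x) ^ #A * (card K : R) ^ #Aᶜ := by
  have sum_factor (e : α) :
      ∑ j : K, (if e ∈ A ∧ j = i then x else 1) = if e ∈ A then card K - 1 + x else card K := by
    by_cases he : e ∈ A
    · have split_one (j : K) : (if j = i then x else 1) = 1 + if j = i then x - 1 else 0 := by
        split_ifs <;> ring
      simp only [he, true_and, if_true, split_one, sum_add_distrib, sum_const, card_univ,
        nsmul_eq_mul, mul_one, sum_ite_eq', mem_univ]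
      ring
    · simp [he]
  calc ∑ c : α → K, x ^ #{e ∈ A | c e = i}
      = ∑ c : α → K, ∏ e, (if e ∈ A ∧ c e = i then x else 1) := by
        refine sum_congr rfl fun c _ => ?_
        rw [prod_ite, prod_const, prod_const_one, mul_one, filter_and, filter_mem_eq_inter,
          univ_inter, inter_filter, inter_univ]
    _ = ∏ e, ∑ j : K, (if e ∈ A ∧ j = i then x else 1) :=
        (Fintype.prod_sum fun e j => if e ∈ A ∧ j = i then x else 1).symm
    _ = (card K - 1 + x) ^ #A * (card K : R) ^ #Aᶜ := by
        simp only [sum_factor, prod_ite, prod_const, filter_mem_eq_inter, univ_inter,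
          filter_notMem_eq_sdiff, compl_eq_univ_sdiff]

lemma sub_one_add_exp_neg_one_le {k : ℝ} (hk : 0 < k) :
    k - 1 + Real.exp (-1) ≤ k * Real.exp (-(1 / (2 * k))) := by
  have hexp : Real.exp (-1) ≤ 1 / 2 := by linarith [Real.exp_neg_one_lt_d9]
  calc k - 1 + Real.exp (-1) ≤ k - 1 / 2 := by linarith
    _ = k * (-(1 / (2 * k)) + 1) := by field_simp; ring
    _ ≤ k * Real.exp (-(1 / (2 * k))) := by gcongr; exact Real.add_one_le_exp _

/- Markov's inequality for `exp (-X)`, where `X` counts the elements of `A` labelled `i`. -/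
lemma card_filter_card_filter_le [Nonempty K] (A : Finset α) (i : K) (t : ℝ) :
    (#{c : α → K | (#{e ∈ A | c e = i} : ℝ) ≤ t} : ℝ) ≤
      card (α → K) * Real.exp (t - #A / (2 * card K)) := by
  have hK : (0 : ℝ) < card K := mod_cast Fintype.card_pos
  have markov : (#{c : α → K | (#{e ∈ A | c e = i} : ℝ) ≤ t} : ℝ) * Real.exp (-t) ≤
      ∑ c : α → K, Real.exp (-1) ^ #{e ∈ A | c e = i} := by
    rw [← nsmul_eq_mul]
    refine (card_nsmul_le_sum _ _ _ fun c hc => ?_).trans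
      (sum_le_sum_of_subset_of_nonneg (subset_univ _) fun c _ _ => by positivity)
    rw [← Real.exp_nat_mul]
    gcongr
    linarith [(mem_filter.1 hc).2]
  have moment : ∑ c : α → K, Real.exp (-1) ^ #{e ∈ A | c e = i} ≤
      card (α → K) * Real.exp (-(#A / (2 * card K))) := by
    have base_nonneg : (0 : ℝ) ≤ card K - 1 + Real.exp (-1) := by
      have : (1 : ℝ) ≤ card K := mod_cast Fintype.card_pos
      linarith [Real.exp_pos (-1)]
    calc ∑ c : α → K, Real.exp (-1) ^ #{e ∈ A | c e = i}
        = (card K - 1 + Real.exp (-1)) ^ #A * (card K : ℝ) ^ #Aᶜ := sum_pow_card_filter_eq _ A i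
      _ ≤ (card K * Real.exp (-(1 / (2 * card K)))) ^ #A * (card K : ℝ) ^ #Aᶜ := by
          gcongr; exact sub_one_add_exp_neg_one_le hK
      _ = (card K : ℝ) ^ (#A + #Aᶜ) * Real.exp (-(1 / (2 * card K))) ^ #A := by ring
      _ = card (α → K) * Real.exp (-(#A / (2 * card K))) := by
          rw [card_add_card_compl, ← Real.exp_nat_mul, Fintype.card_fun, Nat.cast_pow]
          ring_nf
  calc (#{c : α → K | (#{e ∈ A | c e = i} : ℝ) ≤ t} : ℝ)
      = #{c : α → K | (#{e ∈ A | c e = i} : ℝ) ≤ t} * Real.exp (-t) * Real.exp t := by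
        rw [mul_assoc, ← Real.exp_add, neg_add_cancel, Real.exp_zero, mul_one]
    _ ≤ card (α → K) * Real.exp (-(#A / (2 * card K))) * Real.exp t :=
        mul_le_mul_of_nonneg_right (markov.trans moment) (Real.exp_nonneg t)
    _ = card (α → K) * Real.exp (t - #A / (2 * card K)) := by
        rw [mul_assoc, ← Real.exp_add, neg_add_eq_sub]

end Counting

lemma exists_forall_lt_card_filter {α K ι : Type*} [Finite α] [Fintype K] [DecidableEq K]
    [Nonempty K] (S : Finset ι) (A : ι → Finset α)
    (t : ι → ℝ) (h : card K * ∑ j ∈ S, Real.exp (t j - #(A j) / (2 * card K)) < 1) :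
    ∃ c : α → K, ∀ j ∈ S, ∀ i, t j < #{e ∈ A j | c e = i} := by
  classical
  cases nonempty_fintype α
  let bad (p : ι × K) : Finset (α → K) := {c | (#{e ∈ A p.1 | c e = p.2} : ℝ) ≤ t p.1}
  have total : (#((S ×ˢ univ).biUnion bad) : ℝ) < #(univ : Finset (α → K)) := by
    calc (#((S ×ˢ univ).biUnion bad) : ℝ) ≤ ∑ p ∈ S ×ˢ univ, (#(bad p) : ℝ) :=
          mod_cast card_biUnion_le
      _ ≤ ∑ p ∈ S ×ˢ (univ : Finset K),
            card (α → K) * Real.exp (t p.1 - #(A p.1) / (2 * card K)) :=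
          sum_le_sum fun p _ => card_filter_card_filter_le (A p.1) p.2 (t p.1)
      _ = card (α → K) * (card K * ∑ j ∈ S, Real.exp (t j - #(A j) / (2 * card K))) := by
          simp only [sum_product, sum_const, card_univ, nsmul_eq_mul, ← mul_sum]
      _ < card (α → K) * 1 := by
          gcongr
      _ = #(univ : Finset (α → K)) := by rw [mul_one, card_univ]
  obtain ⟨c, -, hc⟩ := exists_mem_notMem_of_card_lt_card (mod_cast total)
  refine ⟨c, fun j hj i => lt_of_not_ge fun hle => hc ?_⟩
  exact mem_biUnion.2 ⟨(j, i), by simpa using hj, by simpa [bad] using hle⟩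

section Expander

variable {V : Type*} {G : SimpleGraph V} {n : ℕ} {ε s : ℝ} {U W : Finset V}

open Classical in
/-- The edges of `G` with one endpoint in `S` and the other in `T`, as unordered pairs
(Mathlib's `SimpleGraph.interedges` consists of ordered pairs). -/
noncomputable def edgesBetween (G : SimpleGraph V) (S T : Finset V) : Finset (Sym2 V) :=
  (G.interedges S T).image fun p => s(p.1, p.2)

lemma mem_edgesBetween {S T : Finset V} {e : Sym2 V} :
    e ∈ edgesBetween G S T ↔ ∃ u ∈ S, ∃ v ∈ T, G.Adj u v ∧ s(u, v) = e := by
  simp [edgesBetween, SimpleGraph.mem_interedges_iff, and_assoc]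

lemma edgesBetween_subset_edgeSet (G : SimpleGraph V) (S T : Finset V) :
    (edgesBetween G S T : Set (Sym2 V)) ⊆ G.edgeSet := by
  intro e he
  obtain ⟨u, -, v, -, huv, rfl⟩ := mem_edgesBetween.1 he
  exact huv

lemma edgesBetween_labelGraph {K : Type*} [DecidableEq K] (c : Sym2 V → K) (i : K)
    (S T : Finset V) :
    edgesBetween (SimpleGraph.EdgeLabeling.labelGraph (G := G) (fun e => c e) i) S T =
      {e ∈ edgesBetween G S T | c e = i} := by
  ext e
  simp only [mem_edgesBetween, mem_filter]
  constructor
  · rintro ⟨u, hu, v, hv, hadj, rfl⟩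
    obtain ⟨huv, hc⟩ := (SimpleGraph.EdgeLabeling.labelGraph_adj u v).1 hadj
    exact ⟨⟨u, hu, v, hv, huv, rfl⟩, hc⟩
  · rintro ⟨⟨u, hu, v, hv, huv, rfl⟩, hc⟩
    exact ⟨u, hu, v, hv, (SimpleGraph.EdgeLabeling.labelGraph_adj u v).2 ⟨huv, hc⟩, rfl⟩

/-- A test for `(ε, s)`-expansion of an `n`-vertex graph: a set `U` to which the expansion condition
applies, and a set `W` too small to contain the external neighbourhood of `U`. -/
def IsExpansionTest (n : ℕ) (ε : ℝ) (U W : Finset V) : Prop :=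
  1 ≤ #U ∧ (#U : ℝ) ≤ 2 / 3 * n ∧ (#W : ℝ) < ε * #U / Real.logb 2 n ^ 2

lemma IsExpansionTest.card_le (h : IsExpansionTest n ε U W) (hε : ε ≤ Real.logb 2 n ^ 2) :
    #W ≤ #U := by
  have : (#W : ℝ) ≤ #U :=
    calc (#W : ℝ) ≤ ε / Real.logb 2 n ^ 2 * #U := by rw [div_mul_eq_mul_div]; exact h.2.2.le
      _ ≤ 1 * #U := by gcongr; exact div_le_one_of_le₀ hε (sq_nonneg _)
      _ = #U := one_mul _
  exact_mod_cast this

lemma IsExpander.mono {ε' s' : ℝ} (hG : IsExpander n G ε s) (hε : ε' ≤ ε) (hs : s' ≤ s) :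
    IsExpander n G ε' s' := by
  intro U F hF hU hUn hFs
  calc ε' * (U.ncard : ℝ) / Real.logb 2 n ^ 2 ≤ ε * U.ncard / (Real.logb 2 n ^ 2 : ℝ) := by gcongr
    _ ≤ (extNbhd (G.deleteEdges F) U).ncard := hG U F hF hU hUn (hFs.trans (by gcongr))

variable [Fintype V]

/- If the edges leaving `U` and avoiding `W` are few, they can serve as the deleted set `F`;
conversely a failing `F` contains all edges leaving `U` and avoiding `W = N_{G - F}(U)`. -/
open Classical in
lemma isExpander_iff_forall_lt_card_edgesBetween :
    IsExpander n G ε s ↔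
      ∀ U W : Finset V, IsExpansionTest n ε U W → s * #U < #(edgesBetween G U (U ∪ W)ᶜ) := by
  constructor
  · rintro hG U W ⟨hU, hUn, hW⟩
    by_contra! hfew
    have hexp := hG U (edgesBetween G U (U ∪ W)ᶜ) (edgesBetween_subset_edgeSet G _ _)
    simp only [Set.ncard_coe_finset] at hexp
    have nbhd_subset :
        extNbhd (G.deleteEdges (edgesBetween G U (U ∪ W)ᶜ : Set (Sym2 V))) U ⊆ W := by
      rintro v ⟨hvU, u, hu, huv⟩
      by_contra hvW
      rw [SimpleGraph.deleteEdges_adj] at huv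
      exact huv.2 (mem_edgesBetween.2 ⟨u, hu, v, by simp_all, huv.1, rfl⟩)
    have nbhd_card := Set.ncard_le_ncard nbhd_subset
    rw [Set.ncard_coe_finset] at nbhd_card
    exact absurd (hexp hU hUn hfew) (not_le.2 (hW.trans_le' (mod_cast nbhd_card)))
  · intro htest U F hF hU hUn hFs
    by_contra! hlt
    lift U to Finset V using U.toFinite
    lift F to Finset (Sym2 V) using F.toFinite
    obtain ⟨W, hW⟩ := (extNbhd (G.deleteEdges (F : Set (Sym2 V))) U).toFinite.exists_finset_coe
    rw [← hW] at hlt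
    simp only [Set.ncard_coe_finset] at hU hUn hFs hlt
    obtain ⟨e, he, heF⟩ := exists_mem_notMem_of_card_lt_card
      (Nat.cast_lt.1 (hFs.trans_lt (htest U W ⟨hU, hUn, hlt⟩)))
    obtain ⟨u, hu, v, hv, huv, rfl⟩ := mem_edgesBetween.1 he
    rw [mem_compl, notMem_union] at hv
    refine hv.2 (mem_coe.1 (hW ▸ ⟨hv.1, u, hu, ?_⟩))
    exact SimpleGraph.deleteEdges_adj.2 ⟨huv, heF⟩

namespace IsExpander

variable [Nontrivial V]

/- A set of about half of the vertices has at most as many external neighbours as elements. -/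
lemma le_logb_sq (hG : IsExpander (card V) G ε s) (hs : 0 ≤ s) :
    ε ≤ Real.logb 2 (card V) ^ 2 := by
  have hn : 2 ≤ card V := Fintype.one_lt_card
  obtain ⟨U, -, hU⟩ := exists_subset_card_eq (s := (univ : Finset V)) (n := (card V + 1) / 2)
    (by rw [card_univ]; omega)
  have U_pos : 0 < #U := by omega
  have U_le : (#U : ℝ) ≤ 2 / 3 * card V := by
    have : (3 * #U : ℝ) ≤ 2 * card V := by exact_mod_cast (by omega : 3 * #U ≤ 2 * card V)
    linarith
  have hexp := hG U ∅ (Set.empty_subset _) (by rwa [Set.ncard_coe_finset])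
    (by rwa [Set.ncard_coe_finset]) (by rw [Set.ncard_empty, Nat.cast_zero]; positivity)
  have nbhd_card : (extNbhd (G.deleteEdges ∅) (U : Set V)).ncard ≤ #U := by
    classical
    have : extNbhd (G.deleteEdges ∅) (U : Set V) ⊆ (Uᶜ : Finset V) := fun v hv => by
      simpa using hv.1
    have := Set.ncard_le_ncard this
    rw [Set.ncard_coe_finset, card_compl] at this
    omega
  have L_pos : 0 < Real.logb 2 (card V) :=
    Real.logb_pos one_lt_two (by exact_mod_cast Fintype.one_lt_card)
  rw [Set.ncard_coe_finset, div_le_iff₀ (by positivity)] at hexp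
  have hmul : ε * #U ≤ Real.logb 2 (card V) ^ 2 * #U := by
    rw [mul_comm (_ ^ 2)]
    refine hexp.trans ?_
    gcongr
  exact le_of_mul_le_mul_right hmul (by exact_mod_cast U_pos)

lemma lt_card_sq (hG : IsExpander (card V) G ε s) (hε : 0 < ε) : s < (card V : ℝ) ^ 2 := by
  classical
  have hn : (2 : ℝ) ≤ card V := by exact_mod_cast Fintype.one_lt_card (α := V)
  have L_pos : 0 < Real.logb 2 (card V) := Real.logb_pos one_lt_two (by linarith)
  obtain ⟨v⟩ : Nonempty V := inferInstance
  have test : IsExpansionTest (card V) ε {v} ∅ := by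
    refine ⟨by simp, ?_, ?_⟩
    · rw [card_singleton, Nat.cast_one]; linarith
    · rw [card_singleton, card_empty, Nat.cast_zero]; positivity
  have edges_le : #(edgesBetween G {v} ({v} ∪ ∅)ᶜ) ≤ card V ^ 2 :=
    calc #(edgesBetween G {v} ({v} ∪ ∅)ᶜ) ≤ #G.edgeFinset :=
          card_le_card fun e he => by simpa using edgesBetween_subset_edgeSet G _ _ he
      _ ≤ (card V).choose 2 := G.card_edgeFinset_le_card_choose_two
      _ ≤ card V ^ 2 := Nat.choose_le_pow _ _
  have lt_edges := isExpander_iff_forall_lt_card_edgesBetween.1 hG {v} ∅ test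
  rw [card_singleton, Nat.cast_one, mul_one] at lt_edges
  exact lt_edges.trans_le (by exact_mod_cast edges_le)

end IsExpander

end Expander

section UnionBound

lemma exp_neg_mul_le_inv_sq_pow {x r : ℝ} {u w : ℕ} (hx : 1 ≤ x) (hr : 32 * Real.log x ≤ r)
    (hu : 1 ≤ u) (hwu : w ≤ u) : Real.exp (-(r / 4 * u)) ≤ (x ^ 2)⁻¹ ^ (2 + (u + w)) := by
  have log_nonneg : 0 ≤ Real.log x := Real.log_nonneg hx
  have exponent_le : ((2 * (2 + (u + w)) : ℕ) : ℝ) ≤ 8 * u := by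
    exact_mod_cast (by omega : 2 * (2 + (u + w)) ≤ 8 * u)
  have key : ((2 * (2 + (u + w)) : ℕ) : ℝ) * Real.log x ≤ r / 4 * u :=
    calc ((2 * (2 + (u + w)) : ℕ) : ℝ) * Real.log x ≤ 8 * u * Real.log x := by gcongr
      _ = 32 * Real.log x / 4 * u := by ring
      _ ≤ r / 4 * u := by gcongr
  calc Real.exp (-(r / 4 * u)) ≤ Real.exp (-((2 * (2 + (u + w)) : ℕ) * Real.log x)) := by gcongr
    _ = (x ^ 2)⁻¹ ^ (2 + (u + w)) := by
        rw [Real.exp_neg, Real.exp_nat_mul, Real.exp_log (by linarith), pow_mul, inv_pow]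

lemma sum_prod_pow_card_add_card (V : Type*) [Fintype V] {R : Type*} [CommSemiring R] (y : R) :
    ∑ p : Finset V × Finset V, y ^ (#p.1 + #p.2) = (y + 1) ^ (2 * card V) := by
  have sum_pow_card : ∑ U : Finset V, y ^ #U = (y + 1) ^ card V := by
    simpa using Fintype.sum_pow_mul_eq_add_pow V y 1
  simp only [pow_add, Fintype.sum_prod_type, ← mul_sum, ← sum_mul, sum_pow_card]
  ring

lemma mul_inv_sq_pow_lt_one {n : ℕ} {k : ℝ} (hn : 2 ≤ n) (hk : k ≤ (n : ℝ) ^ 2) :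
    k * (((n : ℝ) ^ 2)⁻¹ ^ 2 * (((n : ℝ) ^ 2)⁻¹ + 1) ^ (2 * n)) < 1 := by
  have hn' : (2 : ℝ) ≤ n := by exact_mod_cast hn
  set y : ℝ := ((n : ℝ) ^ 2)⁻¹ with hy
  have y_pos : 0 < y := by positivity
  have ky_le : k * y ≤ 1 := by rwa [hy, ← div_eq_mul_inv, div_le_one (by positivity)]
  have y_le : y ≤ 1 / 4 := by
    rw [hy, ← one_div]
    gcongr
    nlinarith
  have power_le : (y + 1) ^ (2 * n) ≤ 3 :=
    calc (y + 1) ^ (2 * n) ≤ Real.exp y ^ (2 * n) := by gcongr; exact Real.add_one_le_exp y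
      _ = Real.exp (2 / n) := by
          rw [← Real.exp_nat_mul, hy]
          congr 1
          push_cast
          field_simp
      _ ≤ Real.exp 1 := by gcongr; exact div_le_one_of_le₀ hn' (by positivity)
      _ ≤ 3 := by linarith [Real.exp_one_lt_d9]
  calc k * (y ^ 2 * (y + 1) ^ (2 * n)) = k * y * (y * (y + 1) ^ (2 * n)) := by ring
    _ ≤ 1 * (1 / 4 * 3) := by gcongr
    _ < 1 := by norm_num

end UnionBound

section ConstantComparison

variable {x ε s k : ℝ}

lemma one_le_logb_two (hx : 2 ≤ x) : 1 ≤ Real.logb 2 x := by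
  rwa [Real.le_logb_iff_rpow_le one_lt_two (by linarith), Real.rpow_one]

lemma log_le_div_of_logb_pow_le_mul_div (hx : 2 ≤ x) (hε : ε ≤ 1) (hs : 0 ≤ s) (hk : 0 ≤ k)
    (h : 10 ^ 5 * Real.logb 2 x ^ 3 ≤ ε * s / k) : 32 * Real.log x ≤ s / k := by
  have log_le_logb : Real.log x ≤ Real.logb 2 x :=
    le_div_self (Real.log_nonneg (by linarith)) (Real.log_pos one_lt_two)
      (by linarith [Real.log_two_lt_d9])
  calc 32 * Real.log x ≤ 10 ^ 5 * Real.logb 2 x ^ 3 := by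
        gcongr
        · exact Real.log_nonneg (by linarith)
        · norm_num
        · exact log_le_logb.trans (le_self_pow₀ (one_le_logb_two hx) three_ne_zero)
    _ ≤ ε * s / k := h
    _ ≤ s / k := by gcongr; exact mul_le_of_le_one_left hs hε

lemma mul_div_logb_sq_le_div (hx : 2 ≤ x) (hε : ε ≤ 1) (hs : 0 ≤ s) (hk : 0 < k) :
    ε * s / (10 ^ 4 * k * Real.logb 2 x ^ 2) ≤ s / (4 * k) := by
  have denominator_le : 4 * k ≤ 10 ^ 4 * k * Real.logb 2 x ^ 2 :=
    calc 4 * k ≤ 10 ^ 4 * k * 1 := by linarith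
      _ ≤ 10 ^ 4 * k * Real.logb 2 x ^ 2 := by gcongr; exact one_le_pow₀ (one_le_logb_two hx)
  exact div_le_div₀ hs (mul_le_of_le_one_left hs hε) (by positivity) denominator_le

end ConstantComparison

section Decomposition

variable {V K : Type*} [Fintype V] [Nontrivial V] [Fintype K] [Nonempty K] {G : SimpleGraph V}
  {ε s : ℝ}

lemma le_of_mul_log_card_le_div (hs : 32 * Real.log (card V) ≤ s / card K) :
    (card K : ℝ) ≤ s := by
  have hK : (0 : ℝ) < card K := mod_cast Fintype.card_pos
  have log_le : Real.log 2 ≤ Real.log (card V) :=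
    Real.log_le_log two_pos (by exact_mod_cast Fintype.one_lt_card (α := V))
  have : 1 ≤ s / card K := by linarith [Real.log_two_gt_d9]
  rwa [one_le_div hK] at this

open Classical in
lemma IsExpander.exp_sub_card_edgesBetween_le (hG : IsExpander (card V) G ε s)
    (hs : 32 * Real.log (card V) ≤ s / card K) {U W : Finset V}
    (hUW : IsExpansionTest (card V) ε U W) :
    Real.exp (s / (4 * card K) * #U - #(edgesBetween G U (U ∪ W)ᶜ) / (2 * card K)) ≤
      ((card V : ℝ) ^ 2)⁻¹ ^ (2 + (#U + #W)) := by
  have hK : (0 : ℝ) < card K := mod_cast Fintype.card_pos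
  have s_nonneg : 0 ≤ s := hK.le.trans (le_of_mul_log_card_le_div hs)
  have many_edges := isExpander_iff_forall_lt_card_edgesBetween.1 hG U W hUW
  have one_le : (1 : ℝ) ≤ card V := by exact_mod_cast Fintype.card_pos (α := V)
  calc Real.exp (s / (4 * card K) * #U - #(edgesBetween G U (U ∪ W)ᶜ) / (2 * card K))
      ≤ Real.exp (s / (4 * card K) * #U - s * #U / (2 * card K)) := by gcongr
    _ = Real.exp (-(s / card K / 4 * #U)) := by congr 1; field_simp; ring
    _ ≤ ((card V : ℝ) ^ 2)⁻¹ ^ (2 + (#U + #W)) :=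
        exp_neg_mul_le_inv_sq_pow one_le hs hUW.1 (hUW.card_le (hG.le_logb_sq s_nonneg))

lemma IsExpander.exists_edgeLabeling (hG : IsExpander (card V) G ε s) (hε : 0 < ε)
    (hs : 32 * Real.log (card V) ≤ s / card K) :
    ∃ C : G.EdgeLabeling K, ∀ i, IsExpander (card V) (C.labelGraph i) ε (s / (4 * card K)) := by
  classical
  set y : ℝ := ((card V : ℝ) ^ 2)⁻¹
  let tests : Finset (Finset V × Finset V) := {p | IsExpansionTest (card V) ε p.1 p.2}
  let A (p : Finset V × Finset V) := edgesBetween G p.1 (p.1 ∪ p.2)ᶜ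
  have sum_le : ∑ p ∈ tests, Real.exp (s / (4 * card K) * #p.1 - #(A p) / (2 * card K)) ≤
      y ^ 2 * (y + 1) ^ (2 * card V) :=
    calc ∑ p ∈ tests, Real.exp (s / (4 * card K) * #p.1 - #(A p) / (2 * card K))
        ≤ ∑ p ∈ tests, y ^ (2 + (#p.1 + #p.2)) :=
          sum_le_sum fun p hp => hG.exp_sub_card_edgesBetween_le hs (mem_filter.1 hp).2
      _ ≤ ∑ p : Finset V × Finset V, y ^ (2 + (#p.1 + #p.2)) :=
          sum_le_sum_of_subset_of_nonneg (subset_univ _) fun p _ _ => by positivity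
      _ = y ^ 2 * (y + 1) ^ (2 * card V) := by
          simp only [pow_add y 2, ← mul_sum, sum_prod_pow_card_add_card]
  have K_le : (card K : ℝ) ≤ (card V : ℝ) ^ 2 :=
    (le_of_mul_log_card_le_div hs).trans (hG.lt_card_sq hε).le
  obtain ⟨c, hc⟩ := exists_forall_lt_card_filter (K := K) tests A
    (fun p => s / (4 * card K) * #p.1)
    ((mul_le_mul_of_nonneg_left sum_le (Nat.cast_nonneg _)).trans_lt
      (mul_inv_sq_pow_lt_one Fintype.one_lt_card K_le))
  refine ⟨fun e => c e, fun i => isExpander_iff_forall_lt_card_edgesBetween.2 fun U W hUW => ?_⟩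
  rw [edgesBetween_labelGraph]
  exact hc (U, W) (mem_filter.2 ⟨mem_univ _, hUW⟩) i

theorem statement16_general (hG : IsExpander (card V) G ε s) (hε : 0 < ε)
    (hs : 32 * Real.log (card V) ≤ s / card K) :
    ∃ Gs : K → SimpleGraph V,
      (∀ i j, i ≠ j → Disjoint (Gs i).edgeSet (Gs j).edgeSet) ∧
      (⋃ i, (Gs i).edgeSet) = G.edgeSet ∧
      ∀ i, IsExpander (card V) (Gs i) ε (s / (4 * card K)) := by
  obtain ⟨C, hC⟩ := hG.exists_edgeLabeling hε hs
  refine ⟨C.labelGraph, fun i j hij => ?_, ?_, hC⟩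
  · exact SimpleGraph.disjoint_edgeSet.2 (C.pairwise_disjoint_labelGraph hij)
  · rw [← SimpleGraph.edgeSet_iSup, C.iSup_labelGraph]

end Decomposition

/-- Any `(ε,s)`-expander edge-decomposes into `k` weaker expanders, provided
`εs/k ≥ 10⁵(log n)³` and `n`, `s` are sufficiently large. -/
theorem statement16 :
    ∃ N : ℕ, ∀ n : ℕ, N ≤ n → ∀ s : ℝ, (N : ℝ) ≤ s →
      ∀ k : ℕ, 0 < k → ∀ ε : ℝ, 0 < ε → ε < 1 →
        ∀ G : SimpleGraph (Fin n), IsExpander n G ε s →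
          10 ^ 5 * Real.logb 2 n ^ 3 ≤ ε * s / k →
          ∃ Gs : Fin k → SimpleGraph (Fin n),
            (∀ i j, i ≠ j → Disjoint (Gs i).edgeSet (Gs j).edgeSet) ∧
            (⋃ i, (Gs i).edgeSet) = G.edgeSet ∧
            ∀ i, IsExpander n (Gs i) (ε / 4)
              (ε * s / (10 ^ 4 * k * Real.logb 2 n ^ 2)) := by
  refine ⟨2, fun n hn s hs k hk ε hε hε1 G hG h => ?_⟩
  have : Nontrivial (Fin n) := Fin.nontrivial_iff_two_le.2 hn
  have : Nonempty (Fin k) := ⟨0, hk⟩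
  have hn' : (2 : ℝ) ≤ n := by exact_mod_cast hn
  have hk' : (0 : ℝ) < k := by exact_mod_cast hk
  have hs' : 0 ≤ s := (Nat.cast_nonneg 2).trans hs
  obtain ⟨Gs, hdisj, hunion, hexp⟩ := statement16_general (K := Fin k) (s := s)
    (by rwa [Fintype.card_fin]) hε
    (by simpa using log_le_div_of_logb_pow_le_mul_div hn' hε1.le hs' hk'.le h)
  simp only [Fintype.card_fin] at hexp
  exact ⟨Gs, hdisj, hunion, fun i =>
    (hexp i).mono (by linarith) (mul_div_logb_sq_le_div hn' hε1.le hs' hk')⟩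
end
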